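/- Let k be a field and α : G → Gal(L/k) a finite Galois embedding problem over k. Then there exists a field extension k₀ of k that is finitely generated over k and regular over k (i.e., k₀ is linearly disjoint from an algebraic closure of k over k) such that the induced embedding problem α_{k₀} has a geometric Galois solution: there exist an indeterminate T, a finite Galois extension E of k₀(T) with Lk₀(T) ⊆ E such that every element of E algebraic over k₀ lies in Lk₀, and an isomorphism β : Gal(E/k₀(T)) → G such that for every σ ∈ Gal(E/k₀(T)), σ maps L onto itself and σ|_L = α(β(σ)). -/

import Mathlib

set_option synthInstance.maxHeartbeats 1000000
set_option maxHeartbeats 1000000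

/-- `α_{F}` has a *geometric Galois solution*: there are an embedding `ι` of `L` into a
fixed algebraic closure of `F(T) = RatFunc F`, a finite Galois extension `E/F(T)` with
`L·F(T) ⊆ E` (i.e. `ι '' L ⊆ E`) such that every element of `E` algebraic over `F` lies
in the compositum `L·F` (i.e. `E ∩ F̄ = L·F`), and an isomorphism `β : Gal(E/F(T)) ≃ G`
such that every `σ ∈ Gal(E/F(T))` maps (the copy of) `L` onto itself and
`σ|_L = α (β σ)`. -/
def HasGeomGaloisSolution (k : Type) [Field k] (G : Type) [Group G]
    (L : Type) [Field L] [Algebra k L] (α : G →* (L ≃ₐ[k] L))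
    (F : Type) [Field F] [Algebra k F] : Prop :=
  letI : Algebra k (AlgebraicClosure (RatFunc F)) :=
    ((algebraMap (RatFunc F) (AlgebraicClosure (RatFunc F))).comp
      ((algebraMap F (RatFunc F)).comp (algebraMap k F))).toAlgebra
  ∃ (ι : L →ₐ[k] AlgebraicClosure (RatFunc F))
    (E : IntermediateField (RatFunc F) (AlgebraicClosure (RatFunc F)))
    (hE : ∀ x : L, ι x ∈ E),
    FiniteDimensional (RatFunc F) E ∧ IsGalois (RatFunc F) E ∧
    (∀ z : AlgebraicClosure (RatFunc F), z ∈ E → IsAlgebraic F z →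
      z ∈ IntermediateField.adjoin F (Set.range ι)) ∧
    ∃ β : (E ≃ₐ[RatFunc F] E) ≃* G,
      ∀ (σ : E ≃ₐ[RatFunc F] E) (x : L),
        ((σ ⟨ι x, hE x⟩ : E) : AlgebraicClosure (RatFunc F)) = ι (α (β σ) x)

/-!
Let `G` act on `L[X_h : h ∈ G]` through `α` on the coefficients and by translation of the variables.
On the fraction field `N` this action is faithful, so with `F := N^G` the embedding problem has the
solution `N / F`, and `F` is regular over `k`. This solution is constant, however, so it has to be
deformed into a geometric one. This is done over `F((t))`, by algebraic patching.

Generate `ker α` by elements `c i` of prime power order, and choose a finite separable extension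
`A / F` containing `N` and enough roots of unity, with generators `θ i` that are pairwise not
conjugate over `F`. Rational functions over `N` expand at `θ i` into series in `A((x))`. The
fraction field of `A[[x]][[t]]` has a cyclic extension inside `A((x))((t))` of a prime power degree
`n` with `c i ^ n = 1`, given by a Kummer equation `y ^ n = 1 + t / x` or by an Artin–Schreier–Witt
equation with leading term `t / x`. A discrete valuation that is trivial on `F((t))` and at which
`t / x` has a simple pole shows that it contains no new elements algebraic over `F((t))`. The series
in `t` over `N(x)` that lie in these extensions locally at all `θ i`, with compatible Galois
actions, form a field on which `G` acts with fixed field `F((t))(x)`. An element of it that is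
algebraic over `F((t))` is fixed by every `c i`, hence by `ker α`. Finally, `F((t))` is regular over
`k`, and the solution is defined over a finitely generated subfield of it.
-/

namespace Patching

open Polynomial
open scoped LaurentSeries PowerSeries RatFunc

/-! ### Laurent series -/

section LaurentSeries

variable {A B C F G : Type*} [CommRing A] [CommRing B] [CommRing C]

/-- The coefficientwise action of a ring homomorphism on Laurent series. -/
noncomputable def mapLaurent (φ : A →+* B) : A⸨X⸩ →+* B⸨X⸩ where
  toFun x := x.map φ
  map_one' := HahnSeries.map_one φ.toMonoidWithZeroHom
  map_zero' := HahnSeries.map_zero (φ : ZeroHom A B)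
  map_add' _ _ := HahnSeries.map_add (φ : A →+ B)
  map_mul' _ _ := HahnSeries.map_mul (φ : A →ₙ+* B)

@[simp]
theorem coeff_mapLaurent (φ : A →+* B) (x : A⸨X⸩) (n : ℤ) :
    (mapLaurent φ x).coeff n = φ (x.coeff n) :=
  rfl

theorem mapLaurent_mapLaurent (φ : A →+* B) (ψ : B →+* C) (x : A⸨X⸩) :
    mapLaurent ψ (mapLaurent φ x) = mapLaurent (ψ.comp φ) x :=
  rfl

theorem mapLaurent_injective {φ : A →+* B} (h : Function.Injective φ) :
    Function.Injective (mapLaurent φ) := fun x y hxy ↦ by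
  ext n
  exact h (congrArg (HahnSeries.coeff · n) hxy)

@[simp]
theorem mapLaurent_C (φ : A →+* B) (a : A) :
    mapLaurent φ (HahnSeries.C a) = HahnSeries.C (φ a) :=
  HahnSeries.map_C a φ

@[simp]
theorem mapLaurent_single (φ : A →+* B) (m : ℤ) (a : A) :
    mapLaurent φ (HahnSeries.single m a) = HahnSeries.single m (φ a) :=
  HahnSeries.map_single (φ : ZeroHom A B)

theorem mapLaurent_coe (φ : A →+* B) (x : A⟦X⟧) :
    mapLaurent φ (x : A⸨X⸩) = (PowerSeries.map φ x : B⟦X⟧) := by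
  ext n
  rw [coeff_mapLaurent, PowerSeries.coeff_coe, PowerSeries.coeff_coe]
  split_ifs <;> simp

theorem coe_injective : Function.Injective ((↑) : A⟦X⟧ → A⸨X⸩) :=
  HahnSeries.ofPowerSeries_injective

noncomputable scoped instance laurentAlgebra [CommRing F] [Algebra F A] : Algebra F⸨X⸩ A⸨X⸩ :=
  (mapLaurent (algebraMap F A)).toAlgebra

theorem algebraMap_laurent [CommRing F] [Algebra F A] (x : F⸨X⸩) :
    algebraMap F⸨X⸩ A⸨X⸩ x = mapLaurent (algebraMap F A) x :=
  rfl

/-- `mapLaurent` as a homomorphism of `F⸨X⸩`-algebras. -/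
noncomputable def mapLaurentAlgHom [CommRing F] [Algebra F A] [Algebra F B] (φ : A →ₐ[F] B) :
    A⸨X⸩ →ₐ[F⸨X⸩] B⸨X⸩ where
  __ := mapLaurent (φ : A →+* B)
  commutes' x := by
    ext n
    exact φ.commutes (x.coeff n)

scoped instance laurentMulSemiringAction [Monoid G] [MulSemiringAction G A] :
    MulSemiringAction G A⸨X⸩ where
  smul_one g := HahnSeries.map_one (MulSemiringAction.toRingHom G A g).toMonoidWithZeroHom
  smul_mul g _ _ := HahnSeries.map_mul (MulSemiringAction.toRingHom G A g : A →ₙ+* A)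

theorem smul_C [Monoid G] [MulSemiringAction G A] (g : G) (a : A) :
    g • (HahnSeries.C a : A⸨X⸩) = HahnSeries.C (g • a) :=
  mapLaurent_C (MulSemiringAction.toRingHom G A g) a

scoped instance [Monoid G] [CommRing F] [Algebra F A] [MulSemiringAction G A]
    [SMulCommClass G F A] :
    SMulCommClass G F⸨X⸩ A⸨X⸩ where
  smul_comm g x y := by
    rw [Algebra.smul_def, Algebra.smul_def, smul_mul']
    congr 1
    ext n
    exact smul_algebraMap g (x.coeff n)

theorem coeff_C_mul (a : A) (x : A⸨X⸩) (n : ℤ) :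
    (HahnSeries.C a * x).coeff n = a * x.coeff n := by
  rw [HahnSeries.C_mul_eq_smul, HahnSeries.coeff_smul, smul_eq_mul]

theorem coeff_mul_eq_zero {y z : A⸨X⸩} {a b n : ℤ} (hy : ∀ m < a, y.coeff m = 0)
    (hz : ∀ m < b, z.coeff m = 0) (hn : n < a + b) : (y * z).coeff n = 0 := by
  rw [HahnSeries.coeff_mul]
  refine Finset.sum_eq_zero fun ij h ↦ ?_
  have hij : ij.1 + ij.2 = n := (Finset.mem_antidiagonal.mp h).2.2
  rcases lt_or_ge ij.1 a with h₁ | h₁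
  · rw [hy _ h₁, zero_mul]
  · rw [hz ij.2 (by linarith), mul_zero]

/-- Laurent series with coefficients in a subring. -/
noncomputable def laurentSubring (R : Subring A) : Subring A⸨X⸩ :=
  (mapLaurent R.subtype).range

theorem mem_laurentSubring {R : Subring A} {x : A⸨X⸩} :
    x ∈ laurentSubring R ↔ ∀ n, x.coeff n ∈ R := by
  refine ⟨?_, fun h ↦ ⟨⟨fun n ↦ ⟨x.coeff n, h n⟩, ?_⟩, rfl⟩⟩
  · rintro ⟨y, rfl⟩ n
    exact (y.coeff n).2
  · convert x.isPWO_support using 2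
    ext n
    simp [Subtype.ext_iff]

theorem C_mem_laurentSubring {R : Subring A} {a : A} (ha : a ∈ R) :
    HahnSeries.C a ∈ laurentSubring R :=
  ⟨HahnSeries.C ⟨a, ha⟩, mapLaurent_C _ _⟩

end LaurentSeries

section Dedekind

variable {M D I : Type*} [Monoid M] [Field D] [Finite I]

theorem exists_sum_mul_eq_of_injective {φ : I → M →* D} (hφ : Function.Injective φ) (ε : I → D) :
    ∃ (s : Finset M) (y : M → D), ∀ i, ∑ b ∈ s, y b * φ i b = ε i := by
  have hspan : Submodule.span D (Set.range (flip fun i ↦ (φ i : M → D))) = ⊤ :=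
    span_flip_eq_top_iff_linearIndependent.mpr ((linearIndependent_monoidHom M D).comp φ hφ)
  obtain ⟨c, hc⟩ := Finsupp.mem_span_range_iff_exists_finsupp.mp
    (hspan ▸ Submodule.mem_top (x := ε))
  refine ⟨c.support, c, fun i ↦ ?_⟩
  simpa [Finsupp.sum, flip] using congrFun hc i

end Dedekind

theorem exists_seq_of_forall_exists {X : Type*} (R : (n : ℕ) → (Fin n → X) → X → Prop)
    (h : ∀ n s, ∃ x, R n s x) : ∃ f : ℕ → X, ∀ n, R n (fun m ↦ f m) (f n) := by
  choose F hF using h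
  let f : ℕ → X := fun n ↦ Nat.strongRec (fun n s ↦ F n fun m ↦ s m m.2) n
  have hf (n : ℕ) : f n = F n fun m ↦ f m := by
    simp only [f]
    rw [Nat.strongRec]
  exact ⟨f, fun n ↦ hf n ▸ hF n _⟩

theorem coeff_mul_eq_add_sum_fin {R : Type*} [CommRing R] (b y : R⟦X⟧) (n : ℕ) :
    PowerSeries.coeff n (b * y) = PowerSeries.constantCoeff b * PowerSeries.coeff n y +
      ∑ k : Fin n, PowerSeries.coeff (n - k) b * PowerSeries.coeff k y := by
  rw [mul_comm, PowerSeries.coeff_mul, Finset.Nat.sum_antidiagonal_eq_sum_range_succ_mk,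
    Finset.sum_range_succ, add_comm, ← Fin.sum_univ_eq_sum_range
      (fun k ↦ PowerSeries.coeff k y * PowerSeries.coeff (n - k) b)]
  simp [mul_comm]

section SeriesFractions

variable (O D : Type*) [CommRing O] [Field D] [Algebra O D]

/-- The field of fractions of `O⟦X⟧`, realised inside `D⸨X⸩`. -/
noncomputable def seriesFractions : Subfield D⸨X⸩ :=
  Subfield.closure (Set.range fun x : O⟦X⟧ ↦ (PowerSeries.map (algebraMap O D) x : D⸨X⸩))

-- Unification of the scalar actions on `D⸨X⸩` makes these instances slow to find.
noncomputable scoped instance (E : IntermediateField (seriesFractions O D) D⸨X⸩) :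
    Algebra (seriesFractions O D) E :=
  E.algebra'

noncomputable scoped instance (E : IntermediateField (seriesFractions O D) D⸨X⸩) :
    Module (seriesFractions O D) E :=
  E.module'

variable {O}

theorem coe_map_mem_seriesFractions (x : O⟦X⟧) :
    (PowerSeries.map (algebraMap O D) x : D⸨X⸩) ∈ seriesFractions O D :=
  Subfield.subset_closure ⟨x, rfl⟩

variable {D}

theorem exists_map_mul_eq_of_mem_seriesFractions {x : D⸨X⸩} (hx : x ∈ seriesFractions O D) :
    ∃ b r : O⟦X⟧, b ≠ 0 ∧
      (PowerSeries.map (algebraMap O D) b : D⸨X⸩) * x = PowerSeries.map (algebraMap O D) r := by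
  have := (algebraMap O D).domain_nontrivial
  have hrange : Set.range (fun x : O⟦X⟧ ↦ (PowerSeries.map (algebraMap O D) x : D⸨X⸩)) =
      ((HahnSeries.ofPowerSeries ℤ D).comp (PowerSeries.map (algebraMap O D))).range := rfl
  rw [seriesFractions, hrange, Subfield.mem_closure_iff, Subring.closure_eq] at hx
  obtain ⟨_, ⟨r, rfl⟩, _, ⟨b, rfl⟩, rfl⟩ := hx
  by_cases hb : (PowerSeries.map (algebraMap O D) b : D⸨X⸩) = 0
  · exact ⟨1, 0, one_ne_zero, by simp [hb]⟩
  · exact ⟨b, r, fun h ↦ hb (by simp [h]), mul_div_cancel₀ _ hb⟩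

theorem single_one_mem_seriesFractions (m : ℤ) :
    (HahnSeries.single m 1 : D⸨X⸩) ∈ seriesFractions O D := by
  have hX : (HahnSeries.single 1 1 : D⸨X⸩) ∈ seriesFractions O D := by
    simpa using coe_map_mem_seriesFractions D (PowerSeries.X : O⟦X⟧)
  rw [RatFunc.single_zpow]
  exact zpow_mem hX m

theorem mapLaurent_mem_seriesFractions (x : O⸨X⸩) :
    mapLaurent (algebraMap O D) x ∈ seriesFractions O D := by
  rw [← LaurentSeries.single_order_mul_powerSeriesPart x, map_mul, mapLaurent_single, map_one,
    mapLaurent_coe]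
  exact mul_mem (single_one_mem_seriesFractions _) (coe_map_mem_seriesFractions D _)

variable [IsFractionRing O D]

theorem C_mem_seriesFractions (d : D) : (HahnSeries.C d : D⸨X⸩) ∈ seriesFractions O D := by
  have hC (a : O) : (HahnSeries.C (algebraMap O D a) : D⸨X⸩) ∈ seriesFractions O D := by
    simpa using coe_map_mem_seriesFractions D (PowerSeries.C a)
  obtain ⟨r, b, -, rfl⟩ := IsFractionRing.div_surjective (A := O) d
  rw [map_div₀]
  exact div_mem (hC r) (hC b)

theorem exists_map_mul_eq_of_coe_mem_seriesFractions {w : D⟦X⟧}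
    (hw : (w : D⸨X⸩) ∈ seriesFractions O D) :
    ∃ b r : O⟦X⟧, PowerSeries.constantCoeff b ≠ 0 ∧
      PowerSeries.map (algebraMap O D) b * w = PowerSeries.map (algebraMap O D) r := by
  obtain ⟨b, r, hb, h⟩ := exists_map_mul_eq_of_mem_seriesFractions hw
  replace h : PowerSeries.map (algebraMap O D) b * w = PowerSeries.map (algebraMap O D) r :=
    coe_injective (by rw [PowerSeries.coe_mul, h])
  obtain ⟨b', hb'⟩ := PowerSeries.X_pow_order_dvd (φ := b)
  set k := b.order.toNat with hk
  obtain ⟨r', hr'⟩ : PowerSeries.X ^ k ∣ r := by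
    refine PowerSeries.X_pow_dvd_iff.mpr fun m hm ↦ IsFractionRing.injective O D ?_
    rw [← PowerSeries.coeff_map, ← h, hb', map_mul (PowerSeries.map _), map_pow,
      PowerSeries.map_X, mul_assoc, PowerSeries.coeff_X_pow_mul', if_neg (by lia), map_zero]
  refine ⟨b', r', ?_, mul_left_cancel₀ (pow_ne_zero k PowerSeries.X_ne_zero) ?_⟩
  · have := PowerSeries.coeff_order hb
    rwa [← hk, hb', PowerSeries.coeff_X_pow_mul', if_pos le_rfl, Nat.sub_self,
      PowerSeries.coeff_zero_eq_constantCoeff_apply] at this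
  · simpa [hb', hr', mul_assoc] using h

theorem exists_mem_seriesFractions_coeff_sub_eq_zero (O : Type*) [CommRing O] [Algebra O D]
    [IsFractionRing O D] (y : D⸨X⸩) (N : ℤ) :
    ∃ y' ∈ seriesFractions O D, ∀ n < N, (y - y').coeff n = 0 := by
  refine ⟨∑ m ∈ Finset.Ico y.order N, HahnSeries.single m (y.coeff m),
    sum_mem fun m _ ↦ ?_, fun n hn ↦ ?_⟩
  · simpa using mul_mem (C_mem_seriesFractions (O := O) (y.coeff m))
      (single_one_mem_seriesFractions m)
  · rw [HahnSeries.coeff_sub, HahnSeries.coeff_sum]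
    have hne (m : ℤ) (h : m ≠ n) : (HahnSeries.single m (y.coeff m)).coeff n = 0 :=
      HahnSeries.coeff_single_of_ne h.symm
    rcases lt_or_ge n y.order with h | h
    · rw [HahnSeries.coeff_eq_zero_of_lt_order h, zero_sub, neg_eq_zero]
      exact Finset.sum_eq_zero fun m hm ↦ hne m (by grind)
    · rw [Finset.sum_eq_single_of_mem n (by grind) fun m _ ↦ hne m, HahnSeries.coeff_single_same,
        sub_self]

end SeriesFractions

section NormalizedElement

variable {O D : Type*} [CommRing O] [Field D] [Algebra O D] [IsFractionRing O D]

open Classical in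
theorem exists_galois_conjugates_eq_one_or_zero
    (E : IntermediateField (seriesFractions O D) D⸨X⸩) [FiniteDimensional (seriesFractions O D) E] :
    ∃ b : E, ∀ τ : E ≃ₐ[seriesFractions O D] E, ∃ B : D⟦X⟧, (τ b : D⸨X⸩) = B ∧
      PowerSeries.constantCoeff B = if τ = 1 then 1 else 0 := by
  let φ (τ : E ≃ₐ[seriesFractions O D] E) : E →* D⸨X⸩ := E.val.toMonoidHom.comp τ
  have hφ : Function.Injective φ := fun τ τ' h ↦
    AlgEquiv.ext fun x ↦ Subtype.ext (DFunLike.congr_fun h x)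
  obtain ⟨s, y, hy⟩ := exists_sum_mul_eq_of_injective hφ fun τ ↦ if τ = 1 then 1 else 0
  obtain ⟨N, hN⟩ : ∃ N : ℤ, ∀ m ∈ s, ∀ τ, ∀ n < N, (φ τ m).coeff n = 0 := by
    obtain ⟨N, hN⟩ := (s ×ˢ Finset.univ).finite_toSet.image
      (fun q : E × (E ≃ₐ[seriesFractions O D] E) ↦ (φ q.2 q.1).order) |>.bddBelow
    refine ⟨N, fun m hm τ n hn ↦ HahnSeries.coeff_eq_zero_of_lt_order (hn.trans_le ?_)⟩
    exact hN ⟨(m, τ), by simp [hm], rfl⟩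
  choose y' hy' hyy' using fun m ↦ exists_mem_seriesFractions_coeff_sub_eq_zero O (y m) (1 - N)
  let b : E := ∑ m ∈ s, algebraMap (seriesFractions O D) E ⟨y' m, hy' m⟩ * m
  have hb (τ : E ≃ₐ[seriesFractions O D] E) : (τ b : D⸨X⸩) = ∑ m ∈ s, y' m * φ τ m := by
    change E.val (τ b) = _
    simp only [b, map_sum, map_mul, AlgEquiv.commutes]
    rfl
  have hcoeff (τ : E ≃ₐ[seriesFractions O D] E) (n : ℤ) (hn : n < 1) :
      (τ b : D⸨X⸩).coeff n = (if τ = 1 then 1 else 0 : D⸨X⸩).coeff n := by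
    rw [← hy τ, hb, ← sub_eq_zero, ← HahnSeries.coeff_sub, ← Finset.sum_sub_distrib,
      HahnSeries.coeff_sum]
    refine Finset.sum_eq_zero fun m hm ↦ ?_
    rw [← sub_mul, ← neg_sub, neg_mul, HahnSeries.coeff_neg, neg_eq_zero]
    exact coeff_mul_eq_zero (hyy' m) (hN m hm τ) (by linarith)
  refine ⟨b, fun τ ↦ ⟨PowerSeries.mk fun n ↦ (τ b : D⸨X⸩).coeff n, ?_, ?_⟩⟩
  · ext n
    rw [PowerSeries.coeff_coe]
    split_ifs with hn
    · rw [hcoeff τ n (by linarith)]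
      split_ifs <;> simp [hn.ne]
    · simp [abs_of_nonneg (not_lt.mp hn)]
  · rw [PowerSeries.constantCoeff_mk, Nat.cast_zero, hcoeff τ 0 one_pos]
    split_ifs <;> simp

end NormalizedElement

section Adjoin

theorem coe_mem_adjoin_of_forall_coeff_mem {F M : Type*} [Field F] [Field M] [Algebra F M]
    {V : Submodule F M} (hV : V.FG) {x : M⟦X⟧} (hx : ∀ n, PowerSeries.coeff n x ∈ V) :
    (x : M⸨X⸩) ∈ IntermediateField.adjoin F⸨X⸩ (HahnSeries.C '' (V : Set M)) := by
  obtain ⟨s, rfl⟩ := hV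
  choose c _ hc using fun n ↦ Submodule.mem_span_finset.mp (hx n)
  have hsum : (x : M⸨X⸩) = ∑ v ∈ s, HahnSeries.C v *
      algebraMap F⸨X⸩ M⸨X⸩ ((PowerSeries.mk fun n ↦ c n v : F⟦X⟧) : F⸨X⸩) := by
    ext n
    simp_rw [HahnSeries.coeff_sum, coeff_C_mul, algebraMap_laurent, coeff_mapLaurent,
      PowerSeries.coeff_coe]
    split_ifs
    · simp
    · simp [← hc, Algebra.smul_def, mul_comm]
  rw [hsum]
  exact sum_mem fun v hv ↦ mul_mem
    (IntermediateField.subset_adjoin _ _ ⟨v, Submodule.subset_span hv, rfl⟩)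
    (IntermediateField.algebraMap_mem _ _)

end Adjoin

/-! ### Algebraic patching -/

/-- The global data of a patching problem over a field `F`: a field `M` with an action of `G` by
`F`-automorphisms, places `ι i` of `M` with values in the fraction field `D` of `O`, and an
algebra `W` of functions whose only poles are at these places. The remaining fields are the
approximation and finiteness properties (of Riemann–Roch type) that patching relies on. -/
structure PatchingDatum (G F M O D I : Type*) [Group G] [Field F] [Field M] [Algebra F M]
    [MulSemiringAction G M] [CommRing O] [Field D] [Algebra O D] [Algebra F D] where
  W : Subalgebra F M
  smul_mem : ∀ (g : G) {w : M}, w ∈ W → g • w ∈ W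
  ι : I → M →ₐ[F] D
  exists_invariant_sub_mem (ε : I → D) :
    ∃ a ∈ W, (∀ g : G, g • a = a) ∧ ∀ i, ε i - ι i a ∈ (algebraMap O D).range
  exists_sub_mem (ε : G → I → D) :
    ∃ a ∈ W, ∀ g i, ε g i - ι i (g • a) ∈ (algebraMap O D).range
  exists_common_multiple (b : I → O) : (∀ i, b i ≠ 0) →
    ∃ q : M, q ≠ 0 ∧ (∀ i, ∃ x, algebraMap O D (b i * x) = ι i q) ∧
      ∃ V : Submodule F M, V.FG ∧ (∀ v ∈ V, v ∈ W ∧ ∀ g : G, g • v = v) ∧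
        ∀ a ∈ W, (∀ g : G, g • a = a) → (∀ i, ι i (q * a) ∈ (algebraMap O D).range) → a ∈ V
  exists_smul_ne (h : G) : h ≠ 1 →
    ∃ w ∈ W, h • w ≠ w ∧ ∀ (g : G) i, ι i (g • w) ∈ (algebraMap O D).range

namespace PatchingDatum

section BaseField

variable {G F M O D I : Type*} [Group G] [Field F] [Field M] [Algebra F M]
  [MulSemiringAction G M] [SMulCommClass G F M] [CommRing O] [Field D] [Algebra O D] [Algebra F D]
  (S : PatchingDatum G F M O D I)

/-- The `G`-invariant functions in `W`. -/
def invariants : Subalgebra F M :=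
  S.W ⊓ FixedPoints.subalgebra F M G

theorem mem_invariants {a : M} : a ∈ S.invariants ↔ a ∈ S.W ∧ ∀ g : G, g • a = a :=
  Iff.rfl

/-- The field generated over `F⸨X⸩` by the invariant functions: the function field over which
patching produces a Galois extension. -/
noncomputable def baseField : IntermediateField F⸨X⸩ M⸨X⸩ :=
  IntermediateField.adjoin F⸨X⸩ (HahnSeries.C '' (S.invariants : Set M))

theorem smul_eq_of_mem_baseField {x : M⸨X⸩} (hx : x ∈ S.baseField) (g : G) : g • x = x := by
  suffices S.baseField ≤ FixedPoints.intermediateField G from this hx g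
  refine IntermediateField.adjoin_le_iff.mpr ?_
  rintro _ ⟨a, ha, rfl⟩ g
  rw [smul_C, ha.2 g]

/-- Laurent series of invariant functions that are locally fractions of power series over `O`. -/
noncomputable def invariantSeries : Subring M⸨X⸩ :=
  laurentSubring S.invariants.toSubring ⊓
    ⨅ i, (seriesFractions O D).toSubring.comap (mapLaurent (S.ι i : M →+* D))

theorem mem_invariantSeries {x : M⸨X⸩} :
    x ∈ S.invariantSeries ↔ (∀ n, x.coeff n ∈ S.invariants) ∧
      ∀ i, mapLaurent (S.ι i : M →+* D) x ∈ seriesFractions O D := by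
  simp [invariantSeries, mem_laurentSubring, Subring.mem_iInf]

theorem exists_mul_mem_of_constantCoeff_eq {q : M} (hq : q ≠ 0) (c : I → O⟦X⟧)
    (hc : ∀ i, algebraMap O D (PowerSeries.constantCoeff (c i)) = S.ι i q) :
    ∃ p : M⟦X⟧, PowerSeries.constantCoeff p = 1 ∧
      (∀ n, PowerSeries.coeff n p ∈ S.invariants) ∧
      ∀ i, ∃ z : O⟦X⟧, PowerSeries.C (S.ι i q) * PowerSeries.map (S.ι i : M →+* D) p =
        PowerSeries.map (algebraMap O D) (c i * z) := by
  have hιq (i : I) : S.ι i q ≠ 0 := by rwa [Ne, map_eq_zero]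
  obtain ⟨f, hf⟩ := exists_seq_of_forall_exists (X := (I → O) × M) (fun n s y ↦
    y.2 ∈ S.invariants ∧ (n = 0 → y.2 = 1) ∧ ∀ i, S.ι i q * S.ι i y.2 = algebraMap O D
      (PowerSeries.constantCoeff (c i) * y.1 i +
        ∑ k : Fin n, PowerSeries.coeff (n - k) (c i) * (s k).1 i)) fun n s ↦ by
    rcases Nat.eq_zero_or_pos n with rfl | hn
    · exact ⟨(1, 1), one_mem _, fun _ ↦ rfl, fun i ↦ by simp [hc]⟩
    obtain ⟨a, haW, ha, hε⟩ := S.exists_invariant_sub_mem fun i ↦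
      (S.ι i q)⁻¹ * algebraMap O D (∑ k : Fin n, PowerSeries.coeff (n - k) (c i) * (s k).1 i)
    choose r hr using hε
    refine ⟨(fun i ↦ -r i, a), ⟨haW, ha⟩, fun h ↦ absurd h hn.ne', fun i ↦ ?_⟩
    have hri : S.ι i q * algebraMap O D (r i) = algebraMap O D
        (∑ k : Fin n, PowerSeries.coeff (n - k) (c i) * (s k).1 i) - S.ι i q * S.ι i a := by
      rw [hr, mul_sub, mul_inv_cancel_left₀ (hιq i)]
    rw [map_add, map_mul, hc, map_neg]
    linear_combination hri
  refine ⟨.mk fun n ↦ (f n).2, (hf 0).2.1 rfl, fun n ↦ by simpa using (hf n).1,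
    fun i ↦ ⟨.mk fun n ↦ (f n).1 i, ?_⟩⟩
  ext n
  rw [PowerSeries.coeff_C_mul, PowerSeries.coeff_map, PowerSeries.coeff_map,
    coeff_mul_eq_add_sum_fin]
  simpa using (hf n).2.2 i

variable [IsFractionRing O D]

theorem coe_mem_baseField {w : M⟦X⟧} (hw : (w : M⸨X⸩) ∈ S.invariantSeries) :
    (w : M⸨X⸩) ∈ S.baseField := by
  rw [mem_invariantSeries] at hw
  have hwA (n : ℕ) : PowerSeries.coeff n w ∈ S.invariants := by
    exact HahnSeries.ofPowerSeries_apply_coeff (Γ := ℤ) w n ▸ hw.1 n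
  choose b r hb hbr using fun i ↦ exists_map_mul_eq_of_coe_mem_seriesFractions
    (mapLaurent_coe (S.ι i : M →+* D) w ▸ hw.2 i)
  -- Multiplying by a suitable `p` bounds the poles of all coefficients of `p` and `p * w`, which
  -- then lie in a finite-dimensional space.
  obtain ⟨q, hq, hqx, V, hVfg, hVA, hV⟩ := S.exists_common_multiple _ hb
  choose x hx using hqx
  obtain ⟨p, hp1, hpA, hz⟩ := S.exists_mul_mem_of_constantCoeff_eq hq
    (fun i ↦ b i * PowerSeries.C (x i)) (by simpa using hx)
  choose z hz using hz
  have hadjoin {y : M⟦X⟧} (hyA : ∀ n, PowerSeries.coeff n y ∈ S.invariants)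
      (hy : ∀ i, ∃ u : O⟦X⟧, PowerSeries.C (S.ι i q) * PowerSeries.map (S.ι i : M →+* D) y =
        PowerSeries.map (algebraMap O D) u) : (y : M⸨X⸩) ∈ S.baseField := by
    refine IntermediateField.adjoin.mono _ _ _ (Set.image_mono fun v hv ↦ hVA v hv)
      (coe_mem_adjoin_of_forall_coeff_mem hVfg fun n ↦ hV _ (hyA n).1 (hyA n).2 fun i ↦ ?_)
    obtain ⟨u, hu⟩ := hy i
    refine ⟨PowerSeries.coeff n u, ?_⟩
    rw [← PowerSeries.coeff_map, ← hu, PowerSeries.coeff_C_mul, map_mul, PowerSeries.coeff_map]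
    rfl
  have hpw : ((p * w : M⟦X⟧) : M⸨X⸩) ∈ S.baseField := by
    refine hadjoin (fun n ↦ ?_) fun i ↦ ⟨r i * PowerSeries.C (x i) * z i, ?_⟩
    · rw [PowerSeries.coeff_mul]
      exact sum_mem fun k _ ↦ mul_mem (hpA _) (hwA _)
    · rw [map_mul, ← mul_assoc, hz, mul_assoc (r i), map_mul _ (r i), ← hbr]
      simp only [map_mul]
      ring
  have hp0 : (p : M⸨X⸩) ≠ 0 := fun h ↦ by
    rw [coe_injective (h.trans PowerSeries.coe_zero.symm), map_zero] at hp1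
    exact zero_ne_one hp1
  rw [PowerSeries.coe_mul] at hpw
  simpa [hp0] using div_mem hpw (hadjoin hpA fun i ↦ ⟨_, hz i⟩)

theorem invariantSeries_le_baseField : S.invariantSeries ≤ S.baseField.toSubring := fun w hw ↦ by
  rw [mem_invariantSeries] at hw
  have hw' : (w.powerSeriesPart : M⸨X⸩) ∈ S.invariantSeries := by
    rw [LaurentSeries.ofPowerSeries_powerSeriesPart, mem_invariantSeries]
    refine ⟨fun n ↦ ?_, fun i ↦ ?_⟩
    · rw [← sub_add_cancel n (-w.order), HahnSeries.coeff_single_mul_add, one_mul]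
      exact hw.1 _
    · rw [map_mul, mapLaurent_single, map_one]
      exact mul_mem (single_one_mem_seriesFractions _) (hw.2 i)
  have hX : algebraMap F⸨X⸩ M⸨X⸩ (HahnSeries.single w.order 1) = HahnSeries.single w.order 1 := by
    rw [algebraMap_laurent, mapLaurent_single, map_one]
  rw [← LaurentSeries.single_order_mul_powerSeriesPart w, ← hX]
  exact mul_mem (IntermediateField.algebraMap_mem _ _) (S.coe_mem_baseField hw')

end BaseField

variable {G F M O D I : Type*} [Group G] [Field F] [Field M] [Algebra F M]
  [MulSemiringAction G M] [CommRing O] [Field D] [Algebra O D] [Algebra F D]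
  (S : PatchingDatum G F M O D I)

theorem smul_mem_laurentSubring {a : M⸨X⸩} (ha : a ∈ laurentSubring S.W.toSubring) (g : G) :
    g • a ∈ laurentSubring S.W.toSubring :=
  mem_laurentSubring.mpr fun n ↦ S.smul_mem g (mem_laurentSubring.mp ha n)

section LocalSubring

variable (E : I → IntermediateField (seriesFractions O D) D⸨X⸩)
  (γ : (i : I) → Gal(E i/seriesFractions O D) →* G)

/-- The series all of whose `G`-conjugates lie in `E i` locally at `i`, in such a way that each
`τ ∈ Gal(E i)` acts as `γ i τ ∈ G`. -/
noncomputable def localSubring : Subring M⸨X⸩ :=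
  ⨅ (i) (τ : Gal(E i/seriesFractions O D)) (g : G),
    ((algebraMap (E i) D⸨X⸩).prod ((algebraMap (E i) D⸨X⸩).comp (τ : E i →+* E i))).range.comap
      (((mapLaurent (S.ι i : M →+* D)).comp (MulSemiringAction.toRingHom G M⸨X⸩ g)).prod
        ((mapLaurent (S.ι i : M →+* D)).comp (MulSemiringAction.toRingHom G M⸨X⸩ (γ i τ * g))))

variable {E γ}

theorem mem_localSubring {a : M⸨X⸩} :
    a ∈ S.localSubring E γ ↔ ∀ i τ (g : G), ∃ e : E i,
      (e : D⸨X⸩) = mapLaurent (S.ι i : M →+* D) (g • a) ∧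
      (τ e : D⸨X⸩) = mapLaurent (S.ι i : M →+* D) ((γ i τ * g) • a) := by
  simp only [localSubring, Subring.mem_iInf, Subring.mem_comap, RingHom.mem_range, Prod.ext_iff]
  rfl

theorem inv_mem_localSubring {a : M⸨X⸩} (ha : a ∈ S.localSubring E γ) :
    a⁻¹ ∈ S.localSubring E γ := by
  rw [mem_localSubring] at ha ⊢
  intro i τ g
  obtain ⟨e, he, hτe⟩ := ha i τ g
  exact ⟨e⁻¹, by simp [he], by simp [hτe]⟩

theorem smul_mem_localSubring {a : M⸨X⸩} (ha : a ∈ S.localSubring E γ) (g : G) :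
    g • a ∈ S.localSubring E γ := by
  rw [mem_localSubring] at ha ⊢
  simpa only [smul_smul, mul_assoc] using fun i τ h ↦ ha i τ (h * g)

theorem mem_localSubring_of_forall_mem_seriesFractions {a : M⸨X⸩}
    (hfix : ∀ i τ (g : G), (γ i τ * g) • a = g • a)
    (hloc : ∀ i (g : G), mapLaurent (S.ι i : M →+* D) (g • a) ∈ seriesFractions O D) :
    a ∈ S.localSubring E γ :=
  S.mem_localSubring.mpr fun i τ g ↦
    ⟨algebraMap (seriesFractions O D) (E i) ⟨_, hloc i g⟩, rfl, by
      rw [AlgEquiv.commutes, hfix]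
      rfl⟩

theorem mapLaurent_mem_seriesFractions_of_forall_smul_eq [∀ i, IsGalois (seriesFractions O D) (E i)]
    [∀ i, FiniteDimensional (seriesFractions O D) (E i)] {a : M⸨X⸩} (ha : a ∈ S.localSubring E γ)
    (hfix : ∀ g : G, g • a = a) (i : I) :
    mapLaurent (S.ι i : M →+* D) a ∈ seriesFractions O D := by
  rw [mem_localSubring] at ha
  simp only [hfix] at ha
  obtain ⟨e, he, -⟩ := ha i 1 1
  obtain ⟨x, rfl⟩ : e ∈ (⊥ : IntermediateField (seriesFractions O D) (E i)) := by
    rw [IsGalois.mem_bot_iff_fixed]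
    intro τ
    obtain ⟨e', he', hτe'⟩ := ha i τ 1
    rw [← Subtype.ext (he'.trans he.symm)]
    exact Subtype.ext (hτe'.trans he'.symm)
  exact he ▸ x.2

theorem smul_eq_of_isAlgebraic (hE : ∀ i, ∀ x ∈ E i, IsAlgebraic F⸨X⸩ x → x ∈ seriesFractions O D)
    {a : M⸨X⸩} (ha : a ∈ S.localSubring E γ) (halg : IsAlgebraic F⸨X⸩ a) (i : I)
    (τ : Gal(E i/seriesFractions O D)) : γ i τ • a = a := by
  obtain ⟨e, he, hτe⟩ := S.mem_localSubring.mp ha i τ 1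
  rw [one_smul] at he
  rw [mul_one] at hτe
  have hmem : (e : D⸨X⸩) ∈ seriesFractions O D :=
    hE i e e.2 (he ▸ halg.algHom (mapLaurentAlgHom (S.ι i)))
  have hτ : τ e = e := τ.commutes ⟨e, hmem⟩
  rw [hτ, he] at hτe
  exact mapLaurent_injective (S.ι i).injective hτe.symm

end LocalSubring

section BoundedSeries

variable [SMulCommClass G F M]

theorem smul_eq_of_mem_invariantSeries {p : M⸨X⸩} (hp : p ∈ S.invariantSeries) (g : G) :
    g • p = p := by
  ext n
  exact ((S.mem_invariantSeries.mp hp).1 n).2 g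

theorem invariantSeries_le_laurentSubring : S.invariantSeries ≤ laurentSubring S.W.toSubring :=
  fun _ hp ↦ mem_laurentSubring.mpr fun n ↦ ((S.mem_invariantSeries.mp hp).1 n).1

/-- The series with a denominator in `invariantSeries` and numerator with coefficients in `W`. -/
noncomputable def boundedSeries : Subring M⸨X⸩ where
  carrier := {a | ∃ p ∈ S.invariantSeries, p ≠ 0 ∧ p * a ∈ laurentSubring S.W.toSubring}
  mul_mem' := by
    rintro a b ⟨p, hp, hp0, hpa⟩ ⟨q, hq, hq0, hqb⟩
    exact ⟨p * q, mul_mem hp hq, mul_ne_zero hp0 hq0, mul_mul_mul_comm p q a b ▸ mul_mem hpa hqb⟩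
  add_mem' := by
    rintro a b ⟨p, hp, hp0, hpa⟩ ⟨q, hq, hq0, hqb⟩
    refine ⟨p * q, mul_mem hp hq, mul_ne_zero hp0 hq0, ?_⟩
    rw [show p * q * (a + b) = q * (p * a) + p * (q * b) by ring]
    exact add_mem (mul_mem (S.invariantSeries_le_laurentSubring hq) hpa)
      (mul_mem (S.invariantSeries_le_laurentSubring hp) hqb)
  one_mem' := ⟨1, one_mem _, one_ne_zero, by simp [one_mem]⟩
  zero_mem' := ⟨1, one_mem _, one_ne_zero, by simp [zero_mem]⟩
  neg_mem' := by
    rintro a ⟨p, hp, hp0, hpa⟩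
    exact ⟨p, hp, hp0, mul_neg p a ▸ neg_mem hpa⟩

variable {S}

theorem laurentSubring_le_boundedSeries : laurentSubring S.W.toSubring ≤ S.boundedSeries :=
  fun a ha ↦ ⟨1, one_mem _, one_ne_zero, (one_mul a).symm ▸ ha⟩

theorem smul_mem_boundedSeries {a : M⸨X⸩} (ha : a ∈ S.boundedSeries) (g : G) :
    g • a ∈ S.boundedSeries := by
  obtain ⟨p, hp, hp0, hpa⟩ := ha
  refine ⟨p, hp, hp0, ?_⟩
  rw [← S.smul_eq_of_mem_invariantSeries hp g, ← smul_mul']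
  exact S.smul_mem_laurentSubring hpa g

variable {E : I → IntermediateField (seriesFractions O D) D⸨X⸩}
  {γ : (i : I) → Gal(E i/seriesFractions O D) →* G}
  [∀ i, IsGalois (seriesFractions O D) (E i)] [∀ i, FiniteDimensional (seriesFractions O D) (E i)]

theorem exists_mul_mem_invariantSeries {a : M⸨X⸩} (ha : a ∈ S.localSubring E γ)
    (ha' : a ∈ S.boundedSeries) (hfix : ∀ g : G, g • a = a) :
    ∃ p ∈ S.invariantSeries, p ≠ 0 ∧ p * a ∈ S.invariantSeries := by
  obtain ⟨p, hp, hp0, hpa⟩ := ha'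
  refine ⟨p, hp, hp0, S.mem_invariantSeries.mpr ⟨fun n ↦ ⟨mem_laurentSubring.mp hpa n, fun g ↦ ?_⟩,
    fun i ↦ ?_⟩⟩
  · have h : g • (p * a) = p * a := by rw [smul_mul', S.smul_eq_of_mem_invariantSeries hp, hfix]
    exact congrArg (HahnSeries.coeff · n) h
  · rw [map_mul]
    exact mul_mem ((S.mem_invariantSeries.mp hp).2 i)
      (S.mapLaurent_mem_seriesFractions_of_forall_smul_eq ha hfix i)

theorem inv_mem_boundedSeries [Finite G] {a : M⸨X⸩} (ha : a ∈ S.localSubring E γ)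
    (ha' : a ∈ S.boundedSeries) : a⁻¹ ∈ S.boundedSeries := by
  classical
  have := Fintype.ofFinite G
  rcases eq_or_ne a 0 with rfl | ha0
  · simp [zero_mem]
  have hN : ∀ h : G, h • ∏ g : G, g • a = ∏ g : G, g • a := fun h ↦ by
    rw [Finset.smul_prod']
    exact Fintype.prod_equiv (Equiv.mulLeft h) _ _ fun g ↦ smul_smul h g a
  have hN0 : ∏ g : G, g • a ≠ 0 :=
    Finset.prod_ne_zero_iff.mpr fun g _ ↦ (smul_ne_zero_iff_ne g).mpr ha0
  obtain ⟨p, hp, hp0, hpN⟩ := exists_mul_mem_invariantSeries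
    (prod_mem fun g (_ : g ∈ Finset.univ) ↦ S.smul_mem_localSubring ha g)
    (prod_mem fun g (_ : g ∈ Finset.univ) ↦ smul_mem_boundedSeries ha' g) hN
  -- `a⁻¹` is the product of the nontrivial conjugates of `a` divided by the norm of `a`.
  have hinv : (p * ∏ g : G, g • a) * a⁻¹ = p * ∏ g ∈ Finset.univ.erase (1 : G), g • a := by
    rw [← Finset.mul_prod_erase _ _ (Finset.mem_univ (1 : G)), one_smul]
    field_simp
  obtain ⟨q, hq, hq0, hqa⟩ : p * ∏ g ∈ Finset.univ.erase (1 : G), g • a ∈ S.boundedSeries :=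
    mul_mem (laurentSubring_le_boundedSeries (S.invariantSeries_le_laurentSubring hp))
      (prod_mem fun g _ ↦ smul_mem_boundedSeries ha' g)
  exact ⟨q * (p * ∏ g : G, g • a), mul_mem hq hpN, mul_ne_zero hq0 (mul_ne_zero hp0 hN0), by
    rwa [mul_assoc, hinv]⟩

end BoundedSeries

open Classical in
theorem exists_coeff_mem_and_map_eq_sum {H : I → Type*} [∀ i, Group (H i)] [∀ i, Fintype (H i)]
    (γ : (i : I) → H i →* G) {B : (i : I) → H i → D⟦X⟧}
    (hB : ∀ i τ, PowerSeries.constantCoeff (B i τ) = if τ = 1 then 1 else 0) {w : M}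
    (hw : w ∈ S.W) (hwO : ∀ (g : G) i, S.ι i (g • w) ∈ (algebraMap O D).range) :
    ∃ a : M⟦X⟧, PowerSeries.constantCoeff a = w ∧ (∀ n, PowerSeries.coeff n a ∈ S.W) ∧
      ∃ r : G → I → O⟦X⟧, ∀ g i,
        PowerSeries.map (S.ι i : M →+* D)
            (PowerSeries.map (MulSemiringAction.toRingHom G M g) a) =
          ∑ τ, B i τ * PowerSeries.map (algebraMap O D) (r ((γ i τ)⁻¹ * g) i) := by
  choose o ho using hwO
  obtain ⟨f, hf⟩ := exists_seq_of_forall_exists (X := (G → I → O) × M) (fun n s y ↦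
    y.2 ∈ S.W ∧ (n = 0 → y.2 = w) ∧ ∀ g i, S.ι i (g • y.2) = algebraMap O D (y.1 g i) +
      ∑ τ, ∑ k : Fin n, PowerSeries.coeff (n - k) (B i τ) *
        algebraMap O D ((s k).1 ((γ i τ)⁻¹ * g) i)) fun n s ↦ by
    rcases Nat.eq_zero_or_pos n with rfl | hn
    · exact ⟨(o, w), hw, fun _ ↦ rfl, by simp [ho]⟩
    obtain ⟨a, haW, ha⟩ := S.exists_sub_mem fun g i ↦
      ∑ τ, ∑ k : Fin n, PowerSeries.coeff (n - k) (B i τ) *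
        algebraMap O D ((s k).1 ((γ i τ)⁻¹ * g) i)
    choose r hr using ha
    exact ⟨(fun g i ↦ -r g i, a), haW, fun h ↦ absurd h hn.ne', fun g i ↦ by
      rw [map_neg, hr]
      ring⟩
  refine ⟨.mk fun n ↦ (f n).2, (hf 0).2.1 rfl, fun n ↦ by simpa using (hf n).1,
    fun g i ↦ .mk fun n ↦ (f n).1 g i, fun g i ↦ ?_⟩
  ext n
  simp_rw [map_sum, coeff_mul_eq_add_sum_fin, Finset.sum_add_distrib, hB]
  simpa using (hf n).2.2 g i

variable {E : I → IntermediateField (seriesFractions O D) D⸨X⸩}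
  {γ : (i : I) → Gal(E i/seriesFractions O D) →* G}

theorem sum_mem_localSubring [∀ i, FiniteDimensional (seriesFractions O D) (E i)]
    {b : (i : I) → E i} {a : M⸨X⸩} {r : G → I → O⟦X⟧}
    (ha : ∀ (g : G) i, mapLaurent (S.ι i : M →+* D) (g • a) =
      ∑ τ : Gal(E i/seriesFractions O D), τ (b i) *
        (PowerSeries.map (algebraMap O D) (r ((γ i τ)⁻¹ * g) i) : D⸨X⸩)) :
    a ∈ S.localSubring E γ := by
  refine S.mem_localSubring.mpr fun i τ g ↦ ?_
  let R (g : G) : E i := algebraMap (seriesFractions O D) (E i)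
    ⟨_, coe_map_mem_seriesFractions D (r g i)⟩
  have hR (g : G) : (PowerSeries.map (algebraMap O D) (r g i) : D⸨X⸩) = (E i).val (R g) := rfl
  simp_rw [ha, hR]
  refine ⟨∑ τ : Gal(E i/seriesFractions O D), τ (b i) * R ((γ i τ)⁻¹ * g), by simp, ?_⟩
  change (E i).val _ = _
  simp only [map_sum, map_mul, R, AlgEquiv.commutes]
  refine Fintype.sum_equiv (Equiv.mulLeft τ) _ _ fun ρ ↦ ?_
  simp [mul_assoc]

section InvariantSeries

variable [SMulCommClass G F M]

theorem algebraMap_mem_invariantSeries [Algebra F O] [IsScalarTower F O D] (x : F⸨X⸩) :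
    algebraMap F⸨X⸩ M⸨X⸩ x ∈ S.invariantSeries := by
  refine S.mem_invariantSeries.mpr ⟨fun n ↦ Subalgebra.algebraMap_mem _ _, fun i ↦ ?_⟩
  have h : mapLaurent (S.ι i : M →+* D) (algebraMap F⸨X⸩ M⸨X⸩ x) =
      mapLaurent (algebraMap O D) (mapLaurent (algebraMap F O) x) := by
    ext n
    simp [algebraMap_laurent, ← IsScalarTower.algebraMap_apply]
  exact h ▸ mapLaurent_mem_seriesFractions _

theorem C_mem_invariantSeries [IsFractionRing O D] {a : M} (ha : a ∈ S.invariants) :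
    HahnSeries.C a ∈ S.invariantSeries :=
  S.mem_invariantSeries.mpr ⟨mem_laurentSubring.mp
    (C_mem_laurentSubring (R := S.invariants.toSubring) ha),
    fun i ↦ by simpa using C_mem_seriesFractions _⟩

theorem mem_localSubring_of_mem_invariantSeries {a : M⸨X⸩} (ha : a ∈ S.invariantSeries) :
    a ∈ S.localSubring E γ := by
  have hfix := S.smul_eq_of_mem_invariantSeries ha
  refine S.mem_localSubring_of_forall_mem_seriesFractions (fun _ _ _ ↦ by rw [hfix, hfix])
    fun i g ↦ ?_
  rw [hfix]
  exact (S.mem_invariantSeries.mp ha).2 i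

end InvariantSeries

section PatchedField

variable [Finite G] [SMulCommClass G F M] [Algebra F O] [IsScalarTower F O D]
  [∀ i, FiniteDimensional (seriesFractions O D) (E i)]
  [∀ i, IsGalois (seriesFractions O D) (E i)]

variable (E γ) in
/-- The field obtained by patching the local extensions `E i`, with local Galois groups mapped
to `G` by `γ i`. -/
noncomputable def patchedField : IntermediateField F⸨X⸩ M⸨X⸩ where
  __ := S.localSubring E γ ⊓ S.boundedSeries
  algebraMap_mem' x :=
    have hx := S.algebraMap_mem_invariantSeries x
    ⟨S.mem_localSubring_of_mem_invariantSeries hx, laurentSubring_le_boundedSeries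
      (S.invariantSeries_le_laurentSubring hx)⟩
  inv_mem' _ ha := ⟨S.inv_mem_localSubring ha.1, inv_mem_boundedSeries ha.1 ha.2⟩

theorem smul_mem_patchedField {a : M⸨X⸩} (ha : a ∈ S.patchedField E γ) (g : G) :
    g • a ∈ S.patchedField E γ :=
  ⟨S.smul_mem_localSubring ha.1 g, smul_mem_boundedSeries ha.2 g⟩

variable [IsFractionRing O D]

theorem baseField_le_patchedField : S.baseField ≤ S.patchedField E γ :=
  IntermediateField.adjoin_le_iff.mpr <| by
    rintro _ ⟨a, ha, rfl⟩
    have hx := S.C_mem_invariantSeries ha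
    exact ⟨S.mem_localSubring_of_mem_invariantSeries hx,
      laurentSubring_le_boundedSeries (S.invariantSeries_le_laurentSubring hx)⟩

theorem C_mem_patchedField {w : M} (hw : w ∈ S.W)
    (hfix : ∀ i τ (g : G), (γ i τ * g) • w = g • w) : HahnSeries.C w ∈ S.patchedField E γ := by
  refine ⟨S.mem_localSubring_of_forall_mem_seriesFractions (fun i τ g ↦ ?_) fun i g ↦ ?_,
    laurentSubring_le_boundedSeries (C_mem_laurentSubring hw)⟩
  · rw [smul_C, smul_C, hfix]
  · rw [smul_C, mapLaurent_C]
    exact C_mem_seriesFractions _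

theorem mem_baseField_of_forall_smul_eq {a : M⸨X⸩} (ha : a ∈ S.patchedField E γ)
    (hfix : ∀ g : G, g • a = a) : a ∈ S.baseField := by
  obtain ⟨p, hp, hp0, hpa⟩ := exists_mul_mem_invariantSeries ha.1 ha.2 hfix
  have hp' : p ∈ S.baseField := S.invariantSeries_le_baseField hp
  have hpa' : p * a ∈ S.baseField := S.invariantSeries_le_baseField hpa
  simpa [hp0] using div_mem hpa' hp'

theorem exists_mem_patchedField_smul_ne {h : G} (hh : h ≠ 1) :
    ∃ a ∈ S.patchedField E γ, h • a ≠ a := by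
  obtain ⟨w, hw, hwh, hwO⟩ := S.exists_smul_ne h hh
  choose b hb using fun i ↦ exists_galois_conjugates_eq_one_or_zero (E i)
  choose B hbB hB using hb
  obtain ⟨a, rfl, haW, r, hr⟩ := S.exists_coeff_mem_and_map_eq_sum γ hB hw hwO
  refine ⟨a, ⟨S.sum_mem_localSubring (b := b) (r := r) fun g i ↦ ?_,
    laurentSubring_le_boundedSeries (mem_laurentSubring.mpr fun n ↦ ?_)⟩, fun ha ↦ hwh ?_⟩
  · change mapLaurent (S.ι i : M →+* D) (mapLaurent (MulSemiringAction.toRingHom G M g) a) = _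
    rw [mapLaurent_coe, mapLaurent_coe, hr, map_sum]
    simp only [map_mul, hbB]
  · rw [PowerSeries.coeff_coe]
    split_ifs
    exacts [zero_mem _, haW _]
  · have h0 := congrArg (HahnSeries.coeff · 0) ha
    change MulSemiringAction.toRingHom G M h ((a : M⸨X⸩).coeff 0) = (a : M⸨X⸩).coeff 0 at h0
    have hcoeff : (a : M⸨X⸩).coeff 0 = PowerSeries.constantCoeff a := by
      simp [PowerSeries.coeff_coe]
    rwa [hcoeff] at h0

end PatchedField

end PatchingDatum

/-! ### Patching over a rational function field -/

section Expansion

variable {F N A : Type*} [Field F] [Field N] [Field A] [Algebra N A]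

-- Preferred to `HahnSeries.powerSeriesAlgebra`, whose scalar multiplication is not the
-- coefficientwise one up to reducible unfolding.
noncomputable scoped instance : Algebra N A⸨X⸩ := HahnSeries.instAlgebra

scoped instance : IsScalarTower N A⟦X⟧ A⸨X⸩ :=
  .of_algebraMap_eq fun x ↦ by
    rw [PowerSeries.algebraMap_apply, LaurentSeries.coe_algebraMap]
    exact (HahnSeries.ofPowerSeries_C _).symm

variable (N) in
/-- The expansion of polynomials over `N` as power series in the local parameter `X - a` at a
point `a` of an extension field. -/
noncomputable def expansion (a : A) : N[X] →ₐ[N] A⟦X⟧ :=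
  aeval (PowerSeries.C a + PowerSeries.X)

theorem expansion_eq_taylor (a : A) (p : N[X]) :
    expansion N a p = (taylor a (p.map (algebraMap N A)) : A⟦X⟧) := by
  induction p using Polynomial.induction_on' with
  | add p q hp hq => simp only [map_add, Polynomial.map_add, hp, hq, coe_add]
  | monomial n c => simp [expansion, ← C_mul_X_pow_eq_monomial, add_comm,
      PowerSeries.algebraMap_apply]

@[simp]
theorem constantCoeff_expansion (a : A) (p : N[X]) :
    PowerSeries.constantCoeff (expansion N a p) = aeval a p := by
  rw [expansion_eq_taylor, ← PowerSeries.coeff_zero_eq_constantCoeff_apply, coeff_coe,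
    taylor_coeff_zero, eval_map_algebraMap]

theorem coeff_one_expansion (a : A) (p : N[X]) :
    PowerSeries.coeff 1 (expansion N a p) = aeval a (derivative p) := by
  rw [expansion_eq_taylor, coeff_coe, taylor_coeff_one, derivative_map, eval_map_algebraMap]

theorem expansion_injective (a : A) : Function.Injective (expansion N a) := fun p q h ↦ by
  simp_rw [expansion_eq_taylor, coe_inj] at h
  exact map_injective _ (algebraMap N A).injective (taylor_injective _ h)

variable [Algebra F N] [Algebra F A] [IsScalarTower F N A]

theorem expansion_map (a : A) (p : F[X]) :
    expansion N a (p.map (algebraMap F N)) = expansion F a p :=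
  aeval_map_algebraMap _ _ _

theorem irreducible_expansion {p : F[X]} (hp : p.Separable) {a : A} (ha : aeval a p = 0) :
    Irreducible (expansion F a p) := by
  obtain ⟨u, hu⟩ : PowerSeries.X ∣ expansion F a p := by
    rw [PowerSeries.X_dvd_iff, constantCoeff_expansion, ha]
  have h1 := coeff_one_expansion a p
  rw [hu, ← zero_add 1, PowerSeries.coeff_succ_X_mul,
    PowerSeries.coeff_zero_eq_constantCoeff_apply] at h1
  have hunit : IsUnit u := PowerSeries.isUnit_iff_constantCoeff.mpr
    (isUnit_iff_ne_zero.mpr (h1 ▸ hp.aeval_derivative_ne_zero ha))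
  rw [hu, irreducible_mul_isUnit hunit]
  exact PowerSeries.X_irreducible

theorem expansion_dvd_iff {p : F[X]} (hp : p.Separable) {a : A} (ha : aeval a p = 0) {x : A⟦X⟧} :
    expansion F a p ∣ x ↔ PowerSeries.constantCoeff x = 0 := by
  rw [← PowerSeries.X_dvd_iff]
  exact (IsDiscreteValuationRing.associated_of_irreducible _ (irreducible_expansion hp ha)
    PowerSeries.X_irreducible).dvd_iff_dvd_left

theorem toAlgHom_comp_expansion_injective (a : A) :
    Function.Injective ((IsScalarTower.toAlgHom N A⟦X⟧ A⸨X⸩).comp (expansion N a)) :=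
  (IsFractionRing.injective A⟦X⟧ A⸨X⸩).comp (expansion_injective a)

variable (N) in
/-- The Laurent expansion of rational functions over `N` at a point of an extension field. -/
noncomputable def laurentExpansion (a : A) : N⟮X⟯ →ₐ[N] A⸨X⸩ :=
  IsFractionRing.liftAlgHom (toAlgHom_comp_expansion_injective a)

theorem laurentExpansion_algebraMap (a : A) (p : N[X]) :
    laurentExpansion N a (algebraMap N[X] N⟮X⟯ p) = algebraMap A⟦X⟧ A⸨X⸩ (expansion N a p) :=
  IsFractionRing.lift_algebraMap (toAlgHom_comp_expansion_injective a) p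

attribute [local instance] Polynomial.algebra in
theorem laurentExpansion_algebraMap' (a : A) (p : F[X]) :
    laurentExpansion N a (algebraMap F[X] N⟮X⟯ p) = algebraMap A⟦X⟧ A⸨X⸩ (expansion F a p) := by
  rw [IsScalarTower.algebraMap_apply F[X] N[X], laurentExpansion_algebraMap,
    ← expansion_map (F := F) (N := N)]
  rfl

end Expansion

section Action

variable {G F N : Type*} [Group G] [Field F] [Field N] [Algebra F N] [MulSemiringAction G N]

noncomputable scoped instance ratFuncMulSemiringAction : MulSemiringAction G N⟮X⟯ :=
  IsFractionRing.mulSemiringAction G N[X] N⟮X⟯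

theorem smul_algebraMap_ratFunc (g : G) (p : N[X]) :
    g • algebraMap N[X] N⟮X⟯ p = algebraMap N[X] N⟮X⟯ (g • p) :=
  IsFractionRing.ringEquivOfRingEquiv_algebraMap (MulSemiringAction.toRingEquiv G N[X] g) p

attribute [local instance] Polynomial.algebra in
theorem smul_algebraMap_ratFunc' [SMulCommClass G F N] (g : G) (p : F[X]) :
    g • algebraMap F[X] N⟮X⟯ p = algebraMap F[X] N⟮X⟯ p := by
  rw [IsScalarTower.algebraMap_apply F[X] N[X], smul_algebraMap_ratFunc]
  congr 1
  ext n
  simp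

scoped instance [SMulCommClass G F N] : SMulCommClass G F N⟮X⟯ where
  smul_comm g c x := by
    rw [Algebra.smul_def, Algebra.smul_def, smul_mul',
      IsScalarTower.algebraMap_apply F N[X] N⟮X⟯, smul_algebraMap_ratFunc,
      IsScalarTower.algebraMap_apply F N N[X], algebraMap_eq, Polynomial.smul_C, smul_algebraMap]

end Action

section PolePolynomial

variable {F A I : Type*} [Field F] [Field A] [Algebra F A] [Fintype I]

/-- The polynomial over `F` whose roots are the conjugates of the points `θ i`; its roots are the
places at which the elements of the patched field may ramify. -/
noncomputable def polePolynomial (F : Type*) {A I : Type*} [Field F] [Field A] [Algebra F A]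
    [Fintype I] (θ : I → A) : F[X] :=
  ∏ i, minpoly F (θ i)

variable {θ : I → A}

theorem aeval_polePolynomial (i : I) : aeval (θ i) (polePolynomial F θ) = 0 := by
  rw [polePolynomial, map_prod]
  exact Finset.prod_eq_zero (Finset.mem_univ i) (minpoly.aeval F (θ i))

theorem polePolynomial_dvd (hθ : Pairwise (Function.onFun IsCoprime fun i ↦ minpoly F (θ i)))
    {c : F[X]} (hc : ∀ i, aeval (θ i) c = 0) : polePolynomial F θ ∣ c :=
  Finset.prod_dvd_of_coprime (hθ.set_pairwise _) fun i _ ↦ minpoly.dvd F (θ i) (hc i)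

section Integral

variable [Algebra.IsIntegral F A]

theorem polePolynomial_monic : (polePolynomial F θ).Monic :=
  monic_prod_of_monic _ _ fun i _ ↦ minpoly.monic (Algebra.IsIntegral.isIntegral (θ i))

theorem natDegree_polePolynomial_pos [Nonempty I] : 0 < (polePolynomial F θ).natDegree := by
  obtain ⟨i⟩ := ‹Nonempty I›
  exact (minpoly.natDegree_pos (Algebra.IsIntegral.isIntegral (θ i))).trans_le <|
    natDegree_le_of_dvd (Finset.dvd_prod_of_mem _ (Finset.mem_univ i)) polePolynomial_monic.ne_zero

theorem exists_forall_aeval_eq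
    (hθ : Pairwise (Function.onFun IsCoprime fun i ↦ minpoly F (θ i)))
    (hgen : ∀ i, IntermediateField.adjoin F {θ i} = ⊤) (v : I → A) :
    ∃ c : F[X], c.natDegree ≤ (polePolynomial F θ).natDegree ∧ ∀ i, aeval (θ i) c = v i := by
  have hv i : ∃ q : F[X], aeval (θ i) q = v i := by
    rw [← AlgHom.mem_range, ← Algebra.adjoin_singleton_eq_range_aeval,
      ← IntermediateField.adjoin_simple_toSubalgebra_of_isAlgebraic
        (Algebra.IsAlgebraic.isAlgebraic _), hgen]
    trivial
  choose q hq using hv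
  obtain ⟨c, hc⟩ := Ideal.exists_forall_sub_mem_ideal
    (fun i j hij ↦ (Ideal.isCoprime_span_singleton_iff _ _).mpr (hθ hij)) q
  refine ⟨c %ₘ polePolynomial F θ, natDegree_modByMonic_le _ polePolynomial_monic, fun i ↦ ?_⟩
  obtain ⟨r, hr⟩ := Ideal.mem_span_singleton.mp (hc i)
  rw [aeval_modByMonic_eq_self_of_root (aeval_polePolynomial i), ← hq, ← sub_eq_zero, ← map_sub,
    hr, map_mul, minpoly.aeval, zero_mul]

end Integral

section Separable

variable [Algebra.IsSeparable F A]
  (hθ : Pairwise (Function.onFun IsCoprime fun i ↦ minpoly F (θ i)))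
include hθ

theorem polePolynomial_separable : (polePolynomial F θ).Separable :=
  separable_prod hθ fun i ↦ Algebra.IsSeparable.isSeparable F (θ i)

theorem polePolynomial_pow_dvd {e : ℕ} {c : F[X]}
    (hc : ∀ i, expansion F (θ i) (polePolynomial F θ) ^ e ∣ expansion F (θ i) c) :
    polePolynomial F θ ^ e ∣ c := by
  have hirr i := irreducible_expansion (polePolynomial_separable hθ) (aeval_polePolynomial i)
  induction e generalizing c with
  | zero => simp
  | succ e ih =>
    obtain ⟨c', rfl⟩ : polePolynomial F θ ∣ c := polePolynomial_dvd hθ fun i ↦ by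
      rw [← constantCoeff_expansion,
        ← expansion_dvd_iff (polePolynomial_separable hθ) (aeval_polePolynomial i)]
      exact (dvd_pow_self _ e.succ_ne_zero).trans (hc i)
    rw [pow_succ']
    refine mul_dvd_mul_left _ (ih fun i ↦ ?_)
    have := hc i
    rwa [map_mul, pow_succ', mul_dvd_mul_iff_left (hirr i).ne_zero] at this

theorem exists_forall_dvd_expansion_pow {b : I → A⟦X⟧} (hb : ∀ i, b i ≠ 0) :
    ∃ m, ∀ i, b i ∣ expansion F (θ i) (polePolynomial F θ) ^ m := by
  choose m hm using fun i ↦ IsDiscreteValuationRing.associated_pow_irreducible (hb i)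
    (irreducible_expansion (polePolynomial_separable hθ) (aeval_polePolynomial i))
  exact ⟨Finset.univ.sup m, fun i ↦ (hm i).dvd.trans
    (pow_dvd_pow _ (Finset.le_sup (Finset.mem_univ i)))⟩

end Separable

end PolePolynomial

section PoleSubalgebra

attribute [local instance] Polynomial.algebra

variable {F N : Type*} [Field F] [Field N] [Algebra F N]

variable (N) in
theorem algebraMap_X_ratFunc : algebraMap F[X] N⟮X⟯ X = RatFunc.X := by
  rw [IsScalarTower.algebraMap_apply F[X] N[X], algebraMap_def, coe_mapRingHom, map_X,
    RatFunc.algebraMap_X]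

variable (N) in
theorem C_algebraMap_mem_adjoin_C_X (c : F[X]) :
    HahnSeries.C (algebraMap F[X] N⟮X⟯ c) ∈
      IntermediateField.adjoin F⸨X⸩ {(HahnSeries.C RatFunc.X : N⟮X⟯⸨X⸩)} := by
  induction c using Polynomial.induction_on' with
  | add p q hp hq =>
    rw [map_add, map_add]
    exact add_mem hp hq
  | monomial n r =>
    have hr : HahnSeries.C (algebraMap F N⟮X⟯ r) =
        algebraMap F⸨X⸩ N⟮X⟯⸨X⸩ (HahnSeries.C r) := by
      rw [algebraMap_laurent, mapLaurent_C]
    rw [← C_mul_X_pow_eq_monomial, map_mul, map_pow, algebraMap_X_ratFunc N, ← algebraMap_eq,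
      ← IsScalarTower.algebraMap_apply, map_mul, map_pow, hr]
    exact mul_mem (IntermediateField.algebraMap_mem _ _)
      (pow_mem (IntermediateField.mem_adjoin_simple_self _ _) n)

variable (N) in
/-- The rational functions over `N` that are regular outside the zeros of `π`, including at
infinity. -/
def poleSubalgebra (π : F[X]) : Subalgebra F N⟮X⟯ where
  carrier := {x | ∃ (e : ℕ) (c : N[X]), c.natDegree ≤ e * π.natDegree ∧
    x * algebraMap F[X] N⟮X⟯ π ^ e = algebraMap N[X] N⟮X⟯ c}
  mul_mem' := by
    rintro x y ⟨e, c, hc, h⟩ ⟨e', c', hc', h'⟩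
    refine ⟨e + e', c * c', natDegree_mul_le.trans (by lia), ?_⟩
    rw [map_mul, ← h, ← h']
    ring
  add_mem' := by
    rintro x y ⟨e, c, hc, h⟩ ⟨e', c', hc', h'⟩
    have hπ (n : ℕ) : (algebraMap F[X] N[X] π ^ n).natDegree = n * π.natDegree := by
      rw [natDegree_pow, algebraMap_def, coe_mapRingHom, natDegree_map]
    refine ⟨e + e', c * algebraMap F[X] N[X] π ^ e' + c' * algebraMap F[X] N[X] π ^ e,
      natDegree_add_le_of_degree_le (natDegree_mul_le.trans ?_) (natDegree_mul_le.trans ?_), ?_⟩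
    · rw [hπ]
      lia
    · rw [hπ]
      lia
    · simp only [map_add, map_mul, map_pow, ← h, ← h', ← IsScalarTower.algebraMap_apply]
      ring
  algebraMap_mem' c := ⟨0, C (algebraMap F N c), by simp, by
    rw [pow_zero, mul_one, IsScalarTower.algebraMap_apply F N[X]]
    rfl⟩

variable {π : F[X]}

theorem algebraMap_C_mem_poleSubalgebra (a : N) :
    algebraMap N[X] N⟮X⟯ (C a) ∈ poleSubalgebra N π :=
  ⟨0, C a, by simp, by simp⟩

theorem algebraMap_ne_zero_of_monic (hπ : π.Monic) : algebraMap F[X] N⟮X⟯ π ≠ 0 := by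
  rw [Ne, FaithfulSMul.algebraMap_eq_zero_iff]
  exact hπ.ne_zero

theorem div_pow_mem_poleSubalgebra (hπ : π.Monic) {e : ℕ} {c : F[X]}
    (hc : c.natDegree ≤ e * π.natDegree) :
    algebraMap F[X] N⟮X⟯ c / algebraMap F[X] N⟮X⟯ π ^ e ∈ poleSubalgebra N π := by
  refine ⟨e, algebraMap F[X] N[X] c, ?_, ?_⟩
  · rwa [algebraMap_def, coe_mapRingHom, natDegree_map]
  · rw [div_mul_cancel₀ _ (pow_ne_zero _ (algebraMap_ne_zero_of_monic hπ)),
      ← IsScalarTower.algebraMap_apply]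

section Action

variable {G : Type*} [Group G] [MulSemiringAction G N] [SMulCommClass G F N]

theorem smul_algebraMap_div_pow (g : G) (c : F[X]) (e : ℕ) :
    g • (algebraMap F[X] N⟮X⟯ c / algebraMap F[X] N⟮X⟯ π ^ e) =
      algebraMap F[X] N⟮X⟯ c / algebraMap F[X] N⟮X⟯ π ^ e := by
  rw [smul_div₀', smul_pow', smul_algebraMap_ratFunc', smul_algebraMap_ratFunc']

theorem smul_mem_poleSubalgebra (g : G) {x : N⟮X⟯} (hx : x ∈ poleSubalgebra N π) :
    g • x ∈ poleSubalgebra N π := by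
  obtain ⟨e, c, hc, h⟩ := hx
  refine ⟨e, g • c, ?_, ?_⟩
  · rw [Polynomial.smul_eq_map N g]
    exact natDegree_map_le.trans hc
  · rw [← smul_algebraMap_ratFunc, ← h, smul_mul', smul_pow', smul_algebraMap_ratFunc']

theorem exists_mul_pow_eq_algebraMap_of_forall_smul_eq [Algebra.IsInvariant F N G] {x : N⟮X⟯}
    (hx : x ∈ poleSubalgebra N π) (hG : ∀ g : G, g • x = x) :
    ∃ (e : ℕ) (c : F[X]), c.natDegree ≤ e * π.natDegree ∧
      x * algebraMap F[X] N⟮X⟯ π ^ e = algebraMap F[X] N⟮X⟯ c := by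
  obtain ⟨e, c, hc, h⟩ := hx
  have hcG (g : G) : g • c = c := by
    apply IsFractionRing.injective N[X] N⟮X⟯
    rw [← smul_algebraMap_ratFunc, ← h, smul_mul', smul_pow', smul_algebraMap_ratFunc', hG]
  obtain ⟨c', rfl⟩ : ∃ c', map (algebraMap F N) c' = c :=
    (mem_lifts c).mp <| (lifts_iff_coeff_lifts c).mpr fun n ↦
      Algebra.IsInvariant.isInvariant (G := G) (c.coeff n) fun g ↦ by rw [← coeff_smul, hcG]
  refine ⟨e, c', by rwa [natDegree_map] at hc, ?_⟩
  rw [h, IsScalarTower.algebraMap_apply F[X] N[X] N⟮X⟯]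
  rfl

end Action

end PoleSubalgebra

section Datum

attribute [local instance] Polynomial.algebra

variable {G F N A I : Type*} [Group G] [Field F] [Field N] [Field A] [Algebra F N] [Algebra F A]
  [Algebra N A] [MulSemiringAction G N] [Fintype I] {θ : I → A}

variable (N) in
theorem exists_smul_ne_of_ne_one [FaithfulSMul G N] (h : G) (hh : h ≠ 1) :
    ∃ w ∈ poleSubalgebra N (polePolynomial F θ), h • w ≠ w ∧ ∀ (g : G) i,
      laurentExpansion N (θ i) (g • w) ∈ (algebraMap A⟦X⟧ A⸨X⸩).range := by
  obtain ⟨x, hx⟩ : ∃ x : N, h • x ≠ x := by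
    contrapose! hh
    exact FaithfulSMul.eq_of_smul_eq_smul fun x ↦ by rw [hh, one_smul]
  refine ⟨algebraMap N[X] N⟮X⟯ (C x), algebraMap_C_mem_poleSubalgebra x, ?_, fun g i ↦ ?_⟩
  · rw [smul_algebraMap_ratFunc, Polynomial.smul_C]
    exact fun h ↦ hx (C_injective (IsFractionRing.injective N[X] N⟮X⟯ h))
  · rw [smul_algebraMap_ratFunc, laurentExpansion_algebraMap]
    exact ⟨_, rfl⟩

variable [IsScalarTower F N A]

theorem laurentExpansion_div_pow_polePolynomial (i : I) (e : ℕ) (c : F[X]) :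
    laurentExpansion N (θ i) (algebraMap F[X] N⟮X⟯ c /
        algebraMap F[X] N⟮X⟯ (polePolynomial F θ) ^ e) =
      algebraMap A⟦X⟧ A⸨X⸩ (expansion F (θ i) c) /
        algebraMap A⟦X⟧ A⸨X⸩ (expansion F (θ i) (polePolynomial F θ)) ^ e := by
  rw [map_div₀, map_pow, laurentExpansion_algebraMap', laurentExpansion_algebraMap']

variable [SMulCommClass G F N] [Algebra.IsSeparable F A]
  (hθ : Pairwise (Function.onFun IsCoprime fun i ↦ minpoly F (θ i)))
include hθ

theorem algebraMap_expansion_polePolynomial_ne_zero (i : I) :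
    algebraMap A⟦X⟧ A⸨X⸩ (expansion F (θ i) (polePolynomial F θ)) ≠ 0 :=
  (map_ne_zero_iff _ (IsFractionRing.injective _ _)).mpr
    (irreducible_expansion (polePolynomial_separable hθ) (aeval_polePolynomial i)).ne_zero

variable (N) in
theorem exists_forall_sub_laurentExpansion_mem_of_pow_mul_mem
    (hgen : ∀ i, IntermediateField.adjoin F {θ i} = ⊤) {m : ℕ} {ε : I → A⸨X⸩}
    (hε : ∀ i, algebraMap A⟦X⟧ A⸨X⸩ (expansion F (θ i) (polePolynomial F θ)) ^ m * ε i ∈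
      (algebraMap A⟦X⟧ A⸨X⸩).range) :
    ∃ a ∈ poleSubalgebra N (polePolynomial F θ), (∀ g : G, g • a = a) ∧
      ∀ i, ε i - laurentExpansion N (θ i) a ∈ (algebraMap A⟦X⟧ A⸨X⸩).range := by
  induction m generalizing ε with
  | zero => exact ⟨0, zero_mem _, fun g ↦ smul_zero g, by simpa using hε⟩
  | succ m ih =>
    choose o ho using hε
    obtain ⟨c, hc, hco⟩ := exists_forall_aeval_eq hθ hgen fun i ↦ PowerSeries.constantCoeff (o i)
    have hdvd i : expansion F (θ i) (polePolynomial F θ) ∣ o i - expansion F (θ i) c :=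
      (expansion_dvd_iff (polePolynomial_separable hθ) (aeval_polePolynomial i)).mpr <| by
        rw [map_sub, constantCoeff_expansion, hco, sub_self]
    choose r hr using hdvd
    set b := algebraMap F[X] N⟮X⟯ c / algebraMap F[X] N⟮X⟯ (polePolynomial F θ) ^ (m + 1)
      with hb
    obtain ⟨a, ha, hGa, haε⟩ := ih (ε := fun i ↦ ε i - laurentExpansion N (θ i) b) fun i ↦ by
      refine ⟨r i, ?_⟩
      have hπ := algebraMap_expansion_polePolynomial_ne_zero hθ i
      rw [hb, laurentExpansion_div_pow_polePolynomial]
      have hr' := congrArg (algebraMap A⟦X⟧ A⸨X⸩) (hr i)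
      rw [map_sub, map_mul, ho] at hr'
      refine mul_left_cancel₀ hπ (hr'.symm.trans ?_)
      field_simp
      ring
    refine ⟨a + b, add_mem ha (div_pow_mem_poleSubalgebra polePolynomial_monic ?_),
      fun g ↦ ?_, fun i ↦ ?_⟩
    · exact hc.trans (Nat.le_mul_of_pos_left _ m.succ_pos)
    · rw [smul_add, hGa, hb, smul_algebraMap_div_pow]
    · rw [map_add, add_comm, ← sub_sub]
      exact haε i

variable (N) in
theorem exists_forall_sub_laurentExpansion_mem
    (hgen : ∀ i, IntermediateField.adjoin F {θ i} = ⊤) (ε : I → A⸨X⸩) :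
    ∃ a ∈ poleSubalgebra N (polePolynomial F θ), (∀ g : G, g • a = a) ∧
      ∀ i, ε i - laurentExpansion N (θ i) a ∈ (algebraMap A⟦X⟧ A⸨X⸩).range := by
  choose x y hy hxy using fun i ↦ IsFractionRing.div_surjective (A := A⟦X⟧) (ε i)
  obtain ⟨m, hm⟩ := exists_forall_dvd_expansion_pow hθ fun i ↦ nonZeroDivisors.ne_zero (hy i)
  refine exists_forall_sub_laurentExpansion_mem_of_pow_mul_mem N hθ hgen (m := m) fun i ↦ ?_
  obtain ⟨z, hz⟩ := hm i
  refine ⟨z * x i, ?_⟩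
  have hy' : algebraMap A⟦X⟧ A⸨X⸩ (y i) ≠ 0 :=
    IsFractionRing.to_map_ne_zero_of_mem_nonZeroDivisors (hy i)
  rw [← hxy, ← map_pow, hz, map_mul, map_mul]
  field_simp

theorem exists_forall_sub_laurentExpansion_smul_mem [Finite G] [FaithfulSMul G N]
    (hgen : ∀ i, IntermediateField.adjoin F {θ i} = ⊤) (ε : G → I → A⸨X⸩) :
    ∃ a ∈ poleSubalgebra N (polePolynomial F θ), ∀ (g : G) i,
      ε g i - laurentExpansion N (θ i) (g • a) ∈ (algebraMap A⟦X⟧ A⸨X⸩).range := by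
  have := Fintype.ofFinite G
  classical
  have hinj : Function.Injective fun g : G ↦ MulDistribMulAction.toMonoidHom N g :=
    fun g h hgh ↦ FaithfulSMul.eq_of_smul_eq_smul fun x ↦ DFunLike.congr_fun hgh x
  obtain ⟨s, y, hy⟩ := exists_sum_mul_eq_of_injective hinj (Pi.single 1 1)
  have hyg (g h : G) : ∑ b ∈ s, h • y b * g • b = if h = g then 1 else 0 := by
    have := congrArg (h • ·) (hy (h⁻¹ * g))
    simpa [Finset.smul_sum, smul_mul', mul_smul, Pi.single_apply, inv_mul_eq_one,
      apply_ite (h • ·)] using this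
  choose a ha hGa haε using fun b ↦ exists_forall_sub_laurentExpansion_mem N (G := G) hθ hgen
    fun i ↦ ∑ h, ε h i * algebraMap N A⸨X⸩ (h • y b)
  refine ⟨∑ b ∈ s, a b * algebraMap N[X] N⟮X⟯ (C b),
    sum_mem fun b _ ↦ mul_mem (ha b) (algebraMap_C_mem_poleSubalgebra b), fun g i ↦ ?_⟩
  have hC (b : N) : laurentExpansion N (θ i) (g • algebraMap N[X] N⟮X⟯ (C b)) =
      algebraMap N A⸨X⸩ (g • b) := by
    rw [smul_algebraMap_ratFunc, Polynomial.smul_C]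
    exact (laurentExpansion N (θ i)).commutes _
  have hε : ε g i = ∑ b ∈ s, (∑ h, ε h i * algebraMap N A⸨X⸩ (h • y b)) *
      algebraMap N A⸨X⸩ (g • b) := by
    simp_rw [Finset.sum_mul]
    rw [Finset.sum_comm]
    simp_rw [mul_assoc, ← map_mul, ← Finset.mul_sum, ← map_sum, hyg]
    simp
  simp only [hε, Finset.smul_sum, smul_mul', hGa, map_sum, map_mul, hC, ← Finset.sum_sub_distrib,
    ← sub_mul]
  refine sum_mem fun b _ ↦ mul_mem (haε b i) ⟨algebraMap N A⟦X⟧ (g • b), ?_⟩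
  rw [← IsScalarTower.algebraMap_apply]

variable (N) in
theorem exists_eq_div_pow_of_forall_pow_mul_mem [Algebra.IsInvariant F N G] {m : ℕ} {a : N⟮X⟯}
    (ha : a ∈ poleSubalgebra N (polePolynomial F θ)) (hG : ∀ g : G, g • a = a)
    (hO : ∀ i, laurentExpansion N (θ i) (algebraMap F[X] N⟮X⟯ (polePolynomial F θ) ^ m * a) ∈
      (algebraMap A⟦X⟧ A⸨X⸩).range) :
    ∃ p : F[X], p.natDegree ≤ m * (polePolynomial F θ).natDegree ∧
      a = algebraMap F[X] N⟮X⟯ p / algebraMap F[X] N⟮X⟯ (polePolynomial F θ) ^ m := by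
  have hmonic : (polePolynomial F θ).Monic := polePolynomial_monic
  obtain ⟨e, c, hc, hac⟩ := exists_mul_pow_eq_algebraMap_of_forall_smul_eq ha hG
  obtain ⟨p, hp⟩ : polePolynomial F θ ^ e ∣ polePolynomial F θ ^ m * c :=
    polePolynomial_pow_dvd hθ fun i ↦ by
      obtain ⟨o, ho⟩ := hO i
      refine ⟨o, IsFractionRing.injective A⟦X⟧ A⸨X⸩ ?_⟩
      rw [RingHom.map_mul, ho, ← map_pow, ← laurentExpansion_algebraMap' (N := N),
        ← laurentExpansion_algebraMap' (N := N), ← map_mul, map_mul, map_pow, map_pow, ← hac]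
      ring_nf
  have hπ := algebraMap_ne_zero_of_monic (N := N) hmonic
  refine ⟨p, ?_, ?_⟩
  · obtain rfl | hp0 := eq_or_ne p 0
    · simp
    have hc0 : c ≠ 0 := by
      rintro rfl
      simp [(hmonic.pow e).ne_zero, hp0] at hp
    have hdeg := congrArg natDegree hp
    rw [natDegree_mul (hmonic.pow _).ne_zero hc0, natDegree_mul (hmonic.pow _).ne_zero hp0,
      natDegree_pow, natDegree_pow] at hdeg
    lia
  · have hp' := congrArg (algebraMap F[X] N⟮X⟯) hp
    rw [map_mul, map_mul, ← hac, map_pow, map_pow] at hp'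
    rw [eq_div_iff (pow_ne_zero _ hπ)]
    refine mul_left_cancel₀ (pow_ne_zero e hπ) (.trans ?_ hp')
    ring

variable (N) in
theorem exists_common_multiple_polePolynomial [Algebra.IsInvariant F N G] {b : I → A⟦X⟧}
    (hb : ∀ i, b i ≠ 0) :
    ∃ q : N⟮X⟯, q ≠ 0 ∧
      (∀ i, ∃ x, algebraMap A⟦X⟧ A⸨X⸩ (b i * x) = laurentExpansion N (θ i) q) ∧
      ∃ V : Submodule F N⟮X⟯, V.FG ∧
        (∀ v ∈ V, v ∈ poleSubalgebra N (polePolynomial F θ) ∧ ∀ g : G, g • v = v) ∧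
        ∀ a ∈ poleSubalgebra N (polePolynomial F θ), (∀ g : G, g • a = a) →
          (∀ i, laurentExpansion N (θ i) (q * a) ∈ (algebraMap A⟦X⟧ A⸨X⸩).range) → a ∈ V := by
  obtain ⟨m, hm⟩ := exists_forall_dvd_expansion_pow hθ hb
  have hmonic : (polePolynomial F θ).Monic := polePolynomial_monic
  let d := m * (polePolynomial F θ).natDegree + 1
  have hd {p : F[X]} : p ∈ degreeLT F d ↔ p.natDegree ≤ m * (polePolynomial F θ).natDegree := by
    rw [degreeLT_succ_eq_degreeLE, mem_degreeLE, ← natDegree_le_iff_degree_le]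
  let f : F[X] →ₗ[F] N⟮X⟯ :=
    LinearMap.mulRight F (algebraMap F[X] N⟮X⟯ (polePolynomial F θ) ^ m)⁻¹ ∘ₗ
      (IsScalarTower.toAlgHom F F[X] N⟮X⟯).toLinearMap
  have hf p : f p = algebraMap F[X] N⟮X⟯ p / algebraMap F[X] N⟮X⟯ (polePolynomial F θ) ^ m :=
    (div_eq_mul_inv _ _).symm
  refine ⟨algebraMap F[X] N⟮X⟯ (polePolynomial F θ) ^ m,
    pow_ne_zero m (algebraMap_ne_zero_of_monic hmonic), fun i ↦ ?_, (degreeLT F d).map f,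
    Submodule.FG.map f ?_, ?_, fun a ha hGa hO ↦ ?_⟩
  · obtain ⟨x, hx⟩ := hm i
    exact ⟨x, by rw [← hx, map_pow, map_pow, laurentExpansion_algebraMap']⟩
  · exact Module.Finite.iff_fg.mp (Module.Finite.equiv (degreeLTEquiv F d).symm)
  · rintro _ ⟨p, hp, rfl⟩
    rw [hf]
    exact ⟨div_pow_mem_poleSubalgebra hmonic (hd.mp hp), fun g ↦ smul_algebraMap_div_pow g p m⟩
  · obtain ⟨p, hp, rfl⟩ := exists_eq_div_pow_of_forall_pow_mul_mem N hθ ha hGa hO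
    exact ⟨p, hd.mpr hp, hf p⟩

variable [Finite G] [FaithfulSMul G N] [Algebra.IsInvariant F N G]

variable (G N) in
/-- The patching datum on the rational function field `N⟮X⟯` given by its Laurent expansions at the
points `X = θ i` of `A`, which lie over distinct places of `F⟮X⟯` with residue field `A`. -/
noncomputable def ratFuncPatchingDatum (hgen : ∀ i, IntermediateField.adjoin F {θ i} = ⊤) :
    PatchingDatum G F N⟮X⟯ A⟦X⟧ A⸨X⸩ I where
  W := poleSubalgebra N (polePolynomial F θ)
  smul_mem g _ hw := smul_mem_poleSubalgebra g hw
  ι i := (laurentExpansion N (θ i)).restrictScalars F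
  exists_invariant_sub_mem := exists_forall_sub_laurentExpansion_mem N hθ hgen
  exists_sub_mem := exists_forall_sub_laurentExpansion_smul_mem hθ hgen
  exists_common_multiple _ := exists_common_multiple_polePolynomial N hθ
  exists_smul_ne := exists_smul_ne_of_ne_one N

theorem baseField_ratFuncPatchingDatum [Nonempty I]
    {hgen : ∀ i, IntermediateField.adjoin F {θ i} = ⊤} :
    (ratFuncPatchingDatum G N hθ hgen).baseField =
      IntermediateField.adjoin F⸨X⸩ {HahnSeries.C RatFunc.X} := by
  refine le_antisymm (IntermediateField.adjoin_le_iff.mpr ?_)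
    (IntermediateField.adjoin_simple_le_iff.mpr ?_)
  · rintro _ ⟨a, ha, rfl⟩
    rw [SetLike.mem_coe, PatchingDatum.mem_invariants] at ha
    obtain ⟨e, c, -, hc⟩ := exists_mul_pow_eq_algebraMap_of_forall_smul_eq ha.1 ha.2
    rw [eq_div_of_mul_eq (pow_ne_zero e (algebraMap_ne_zero_of_monic polePolynomial_monic)) hc,
      map_div₀, map_pow]
    exact div_mem (C_algebraMap_mem_adjoin_C_X N c) (pow_mem (C_algebraMap_mem_adjoin_C_X N _) e)
  · have hmem {c : F[X]} (hc : c.natDegree ≤ 1) :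
        HahnSeries.C (algebraMap F[X] N⟮X⟯ c / algebraMap F[X] N⟮X⟯ (polePolynomial F θ) ^ 1) ∈
          (ratFuncPatchingDatum G N hθ hgen).baseField :=
      IntermediateField.subset_adjoin _ _ ⟨_, (ratFuncPatchingDatum G N hθ hgen).mem_invariants.mpr
        ⟨div_pow_mem_poleSubalgebra polePolynomial_monic (by
          have := natDegree_polePolynomial_pos (F := F) (θ := θ)
          lia), fun g ↦ smul_algebraMap_div_pow g c 1⟩, rfl⟩
    have h := div_mem (hmem natDegree_X_le) (hmem (natDegree_one.trans_le zero_le_one))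
    rwa [← map_div₀, div_div_div_cancel_right₀ (pow_ne_zero _ (algebraMap_ne_zero_of_monic
      polePolynomial_monic)), map_one, div_one, algebraMap_X_ratFunc] at h

end Datum

/-! ### Cyclic extensions without new constants -/

section Valuation

variable {E Γ₀ : Type*} [Field E] [LinearOrderedCommGroupWithZero Γ₀] (V : Valuation E Γ₀)

theorem valuation_coeff_basis_le_one {ι : Type*} [DecidableEq ι] {s : Finset ι} {v : ι → E}
    (hv : ∀ i, V (v i) ≤ 1) (hsub : Pairwise fun i j ↦ V (v i - v j) = 1) (i : ι) (n : ℕ) :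
    V ((Lagrange.basis s v i).coeff n) ≤ 1 := by
  have hmem (x : E) (hx : V x ≤ 1) : C x ∈ lifts V.integer.subtype :=
    C'_mem_lifts ⟨⟨x, hx⟩, rfl⟩
  have hlift : Lagrange.basis s v i ∈ lifts V.integer.subtype := by
    refine prod_mem fun j hj ↦ mul_mem (hmem _ ?_) ?_
    · rw [map_inv₀, hsub (Finset.ne_of_mem_erase hj).symm, inv_one]
    · rw [sub_eq_add_neg, ← C_neg]
      exact add_mem (X_mem_lifts _) (hmem _ (by rw [Valuation.map_neg]; exact hv j))
  obtain ⟨a, ha⟩ := (lifts_iff_coeff_lifts _).mp hlift n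
  exact ha ▸ a.2

theorem valuation_coeff_interpolate_le {ι : Type*} [DecidableEq ι] {s : Finset ι} {v r : ι → E}
    (hv : ∀ i, V (v i) ≤ 1) (hsub : Pairwise fun i j ↦ V (v i - v j) = 1) {c : Γ₀}
    (hr : ∀ i, V (r i) ≤ c) (n : ℕ) : V ((Lagrange.interpolate s v r).coeff n) ≤ c := by
  rw [Lagrange.interpolate_apply, finsetSum_coeff]
  refine V.map_sum_le fun i _ ↦ ?_
  rw [Polynomial.coeff_C_mul, map_mul]
  exact mul_le_of_le_of_le_one (hr i) (valuation_coeff_basis_le_one V hv hsub i n)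

variable {Φ : Type*} [Field Φ] [Algebra Φ E] {q : ℕ} {y : E} {a u : Φ}

theorem valuation_pow_eq_of_pow_sub_mul_eq (hq : 1 < q) (ha : V (algebraMap Φ E a) ≤ 1)
    (hu : 1 < V (algebraMap Φ E u)) (h : y ^ q - algebraMap Φ E a * y = algebraMap Φ E u) :
    V y ^ q = V (algebraMap Φ E u) := by
  have hy : 1 < V y := by
    contrapose! hu
    rw [← h]
    refine (V.map_sub _ _).trans (max_le ?_ ?_)
    · rw [map_pow]
      exact pow_le_one' hu q
    · rw [map_mul]
      exact mul_le_one' ha hu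
  rw [← h, sub_eq_add_neg, V.map_add_eq_of_lt_left, map_pow]
  rw [Valuation.map_neg, map_mul, map_pow]
  exact (mul_le_of_le_one_left' ha).trans_lt (lt_self_pow₀ hy hq)

variable {k : Type*} [Field k] [Algebra k E]

theorem valuation_le_one_of_isAlgebraic (hk : ∀ c, V (algebraMap k E c) ≤ 1) {z : E}
    (hz : IsAlgebraic k z) : V z ≤ 1 := by
  obtain ⟨p, hp, hpz⟩ := hz.isIntegral
  let φ : k →+* V.integer := (algebraMap k E).codRestrict V.integer hk
  refine (Valuation.integer.integers V).mem_of_integral ⟨p.map φ, hp.map φ, ?_⟩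
  rw [eval₂_map]
  exact hpz

theorem valuation_eq_one_of_isAlgebraic (hk : ∀ c, V (algebraMap k E c) ≤ 1) {z : E}
    (hz : IsAlgebraic k z) (hz0 : z ≠ 0) : V z = 1 := by
  refine (valuation_le_one_of_isAlgebraic V hk hz).antisymm ?_
  have hinv := valuation_le_one_of_isAlgebraic V hk hz.inv
  rwa [map_inv₀, inv_le_one₀ (zero_lt_iff.mpr (V.ne_zero_iff.mpr hz0))] at hinv

variable [Algebra k Φ] [IsScalarTower k Φ E]

-- Write `y` as a polynomial in `z`, interpolating the conjugates of `y` at those of `z`. These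
-- nodes are distinct modulo the maximal ideal, so `V y` is the largest value of a coefficient.
theorem exists_valuation_eq_of_mem_adjoin_isAlgebraic [FiniteDimensional Φ E] [IsGalois Φ E]
    (hk : ∀ c, V (algebraMap k E c) ≤ 1) {y z : E} (hz : IsAlgebraic k z)
    (hy : ∀ σ : Gal(E/Φ), V (σ y) = V y) (hyz : y ∈ IntermediateField.adjoin Φ {z}) :
    ∃ f : Φ, V (algebraMap Φ E f) = V y := by
  classical
  have hzint : IsIntegral Φ z := Algebra.IsIntegral.isIntegral z
  obtain ⟨p, hdeg, rfl⟩ : ∃ p : Φ[X], p.degree < (minpoly Φ z).degree ∧ aeval z p = y := by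
    rw [← IntermediateField.mem_toSubalgebra,
      IntermediateField.adjoin_simple_toSubalgebra_of_isAlgebraic hzint.isAlgebraic,
      Algebra.adjoin_singleton_eq_range_aeval] at hyz
    obtain ⟨p, rfl⟩ := hyz
    exact ⟨p %ₘ minpoly Φ z, degree_modByMonic_lt p (minpoly.monic hzint),
      aeval_modByMonic_eq_self_of_root (minpoly.aeval Φ z)⟩
  have hconj (w : (minpoly Φ z).rootSet E) : ∃ σ : Gal(E/Φ), σ z = w :=
    minpoly.exists_algEquiv_of_root' (Algebra.IsAlgebraic.isAlgebraic z)
      (aeval_eq_zero_of_mem_rootSet w.2)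
  have halg (w : (minpoly Φ z).rootSet E) : IsAlgebraic k (w : E) := by
    obtain ⟨σ, hσ⟩ := hconj w
    exact hσ ▸ hz.algHom (σ.toAlgHom.restrictScalars k)
  have hinterp : p.map (algebraMap Φ E) = Lagrange.interpolate Finset.univ
      ((↑) : (minpoly Φ z).rootSet E → E) fun w ↦ aeval (w : E) p := by
    refine Lagrange.eq_interpolate_of_eval_eq _ Subtype.val_injective.injOn ?_
      fun w _ ↦ eval_map_algebraMap p _
    rwa [degree_map, Finset.card_univ,
      card_rootSet_eq_natDegree (Algebra.IsSeparable.isSeparable Φ z) (IsGalois.splits Φ z),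
      ← degree_eq_natDegree (minpoly.ne_zero hzint)]
  have hcoeff (n : ℕ) : V (algebraMap Φ E (p.coeff n)) ≤ V (aeval z p) := by
    rw [← coeff_map, hinterp]
    refine valuation_coeff_interpolate_le V
      (fun w ↦ valuation_le_one_of_isAlgebraic V hk (halg w)) (fun w w' hww' ↦
        valuation_eq_one_of_isAlgebraic V hk ((halg w).sub (halg w'))
          (sub_ne_zero.mpr (Subtype.coe_ne_coe.mpr hww'))) (fun w ↦ ?_) n
    obtain ⟨σ, hσ⟩ := hconj w
    rw [← hσ, aeval_algHom_apply, hy]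
  by_contra! hne
  have hy0 : V (aeval z p) ≠ 0 := fun h ↦ hne 0 (by rw [map_zero, map_zero, h])
  refine (V.map_sum_lt hy0 fun n _ ↦ ?_).ne (congrArg V (aeval_eq_sum_range z).symm)
  rw [Algebra.smul_def, map_mul, map_pow]
  have hzn : V z ^ n ≤ 1 := pow_le_one' (valuation_le_one_of_isAlgebraic V hk hz) n
  exact (mul_le_of_le_one_right' hzn).trans_lt ((hcoeff n).lt_of_ne (hne _))

theorem exists_valuation_pow_eq_of_mem_adjoin_isAlgebraic [FiniteDimensional Φ E] [IsGalois Φ E]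
    (hk : ∀ c, V (algebraMap k E c) ≤ 1) (hq : 1 < q) (ha : V (algebraMap Φ E a) ≤ 1)
    (hu : 1 < V (algebraMap Φ E u)) (h : y ^ q - algebraMap Φ E a * y = algebraMap Φ E u) {z : E}
    (hz : IsAlgebraic k z) (hyz : y ∈ IntermediateField.adjoin Φ {z}) :
    ∃ f : Φ, V (algebraMap Φ E f) ^ q = V (algebraMap Φ E u) := by
  have hpow := valuation_pow_eq_of_pow_sub_mul_eq V hq ha hu h
  have hconj (σ : Gal(E/Φ)) : V (σ y) = V y := by
    refine (pow_left_inj₀ zero_le zero_le (zero_lt_one.trans hq).ne').mp (hpow ▸ ?_)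
    refine valuation_pow_eq_of_pow_sub_mul_eq V hq ha hu ?_
    rw [← σ.commutes u, ← h, map_sub, map_pow, map_mul, σ.commutes]
  obtain ⟨f, hf⟩ := exists_valuation_eq_of_mem_adjoin_isAlgebraic V hk hz hconj hyz
  exact ⟨f, hf ▸ hpow⟩

end Valuation

/-- The shape shared by Kummer and Artin–Schreier–Witt extensions of degree `q ^ (e + 1)`: a finite
Galois extension whose degree is at most `q ^ (e + 1)` and whose exponent divides `q ^ (e + 1)`,
with a root of `Y ^ q - a * Y - u` that is fixed by the elements of order dividing `q ^ e`. The
root is what makes the extension cyclic and regular, through the valuation of `u`. -/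
structure IsKummerLike {Φ : Type*} (E : Type*) [Field Φ] [Field E] [Algebra Φ E] (q e : ℕ)
    (a u : Φ) : Prop where
  finiteDimensional : FiniteDimensional Φ E
  isGalois : IsGalois Φ E
  finrank_le : Module.finrank Φ E ≤ q ^ (e + 1)
  pow_eq_one (σ : Gal(E/Φ)) : σ ^ q ^ (e + 1) = 1
  exists_root : ∃ y : E, y ^ q - algebraMap Φ E a * y = algebraMap Φ E u ∧
    ∀ σ : Gal(E/Φ), σ ^ q ^ e = 1 → σ y = y

namespace IsKummerLike

variable {k Φ E Γ₀ : Type*} [Field k] [Field Φ] [Field E] [Algebra Φ E]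
  [LinearOrderedCommGroupWithZero Γ₀] (V : Valuation E Γ₀) {q e : ℕ} [Fact q.Prime] {a u : Φ}

theorem orderOf_eq_and_zpowers_eq_top (h : IsKummerLike E q e a u) {y : E}
    (hy : ∀ σ : Gal(E/Φ), σ ^ q ^ e = 1 → σ y = y) {σ : Gal(E/Φ)} (hσ : σ y ≠ y) :
    orderOf σ = q ^ (e + 1) ∧ Subgroup.zpowers σ = ⊤ := by
  have := h.finiteDimensional
  have horder : orderOf σ = q ^ (e + 1) :=
    orderOf_eq_prime_pow (fun hpow ↦ hσ (hy σ hpow)) (h.pow_eq_one σ)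
  refine ⟨horder, Subgroup.eq_top_of_le_card _ ?_⟩
  rw [Nat.card_zpowers, horder, Nat.card_eq_fintype_card]
  exact AlgEquiv.card_le.trans h.finrank_le

theorem mem_bot_of_notMem_adjoin_simple (h : IsKummerLike E q e a u) {y z : E}
    (hy : ∀ σ : Gal(E/Φ), σ ^ q ^ e = 1 → σ y = y)
    (hyz : y ∉ IntermediateField.adjoin Φ {z}) : z ∈ (⊥ : IntermediateField Φ E) := by
  have := h.finiteDimensional
  have := h.isGalois
  rw [← IsGalois.fixedField_fixingSubgroup (IntermediateField.adjoin Φ {z}),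
    IntermediateField.mem_fixedField_iff] at hyz
  push Not at hyz
  obtain ⟨σ, hσ, hσy⟩ := hyz
  have hfixing : (IntermediateField.adjoin Φ {z}).fixingSubgroup = ⊤ := by
    rw [eq_top_iff, ← (h.orderOf_eq_and_zpowers_eq_top hy hσy).2]
    exact Subgroup.zpowers_le.mpr hσ
  rw [← IntermediateField.adjoin_simple_eq_bot_iff,
    ← IsGalois.fixedField_fixingSubgroup (IntermediateField.adjoin Φ {z}), hfixing]
  exact IsGalois.fixedField_top

theorem exists_orderOf_eq_and_zpowers_eq_top (h : IsKummerLike E q e a u)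
    (ha : V (algebraMap Φ E a) ≤ 1) (hu : 1 < V (algebraMap Φ E u))
    (hpow : ∀ f : Φ, V (algebraMap Φ E f) ^ q ≠ V (algebraMap Φ E u)) :
    ∃ σ : Gal(E/Φ), orderOf σ = q ^ (e + 1) ∧ Subgroup.zpowers σ = ⊤ := by
  have := h.finiteDimensional
  have := h.isGalois
  obtain ⟨y, hroot, hy⟩ := h.exists_root
  suffices ∃ σ : Gal(E/Φ), σ y ≠ y from
    this.imp fun σ hσ ↦ h.orderOf_eq_and_zpowers_eq_top hy hσ
  by_contra! hfix
  obtain ⟨f, rfl⟩ := (IsGalois.mem_range_algebraMap_iff_fixed y).mpr hfix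
  exact hpow f (valuation_pow_eq_of_pow_sub_mul_eq V (Fact.out : q.Prime).one_lt ha hu hroot)

theorem mem_bot_of_isAlgebraic [Algebra k Φ] [Algebra k E] [IsScalarTower k Φ E]
    (h : IsKummerLike E q e a u) (hk : ∀ c, V (algebraMap k E c) ≤ 1)
    (ha : V (algebraMap Φ E a) ≤ 1) (hu : 1 < V (algebraMap Φ E u))
    (hpow : ∀ f : Φ, V (algebraMap Φ E f) ^ q ≠ V (algebraMap Φ E u)) {z : E}
    (hz : IsAlgebraic k z) : z ∈ (⊥ : IntermediateField Φ E) := by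
  have := h.finiteDimensional
  have := h.isGalois
  obtain ⟨y, hroot, hy⟩ := h.exists_root
  refine h.mem_bot_of_notMem_adjoin_simple hy fun hyz ↦ ?_
  obtain ⟨f, hf⟩ := exists_valuation_pow_eq_of_mem_adjoin_isAlgebraic V hk
    (Fact.out : q.Prime).one_lt ha hu hroot hz hyz
  exact hpow f hf

end IsKummerLike

section Kummer

variable {Φ E : Type*} [Field Φ] [Field E] [Algebra Φ E]

theorem pow_apply_eq_of_apply_eq_mul {σ : Gal(E/Φ)} {w : Φ} {y : E}
    (h : σ y = algebraMap Φ E w * y) (m : ℕ) : (σ ^ m) y = algebraMap Φ E (w ^ m) * y := by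
  induction m with
  | zero => simp
  | succ m ih => rw [pow_succ, AlgEquiv.mul_apply, h, map_mul, AlgEquiv.commutes, ih, pow_succ,
      map_mul, ← mul_assoc, mul_comm (algebraMap Φ E w)]

theorem isSplittingField_X_pow_sub_C_of_adjoin_eq_top {n : ℕ} [NeZero n] {ζ : Φ}
    (hζ : IsPrimitiveRoot ζ n) {u : Φ} {y : E} (hy : y ^ n = algebraMap Φ E u)
    (hgen : Algebra.adjoin Φ {y} = ⊤) : IsSplittingField Φ E (X ^ n - C u) where
  splits' := by
    rw [Polynomial.map_sub, Polynomial.map_pow, map_C, map_X]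
    exact X_pow_sub_C_splits_of_isPrimitiveRoot
      (hζ.map_of_injective (algebraMap Φ E).injective) hy
  adjoin_rootSet' := by
    rw [eq_top_iff, ← hgen]
    refine Algebra.adjoin_mono (Set.singleton_subset_iff.mpr ?_)
    rw [mem_rootSet_of_ne (X_pow_sub_C_ne_zero (NeZero.pos n) u)]
    simp [hy]

theorem isKummerLike_of_pow_eq {q e : ℕ} [Fact q.Prime] {ζ : Φ}
    (hζ : IsPrimitiveRoot ζ (q ^ (e + 1))) {u : Φ} (hu : u ≠ 0) {y : E}
    (hy : y ^ q ^ (e + 1) = algebraMap Φ E u) (hgen : Algebra.adjoin Φ {y} = ⊤) :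
    IsKummerLike E q e 0 u := by
  have := isSplittingField_X_pow_sub_C_of_adjoin_eq_top hζ hy hgen
  have hfin := IsSplittingField.finiteDimensional E (X ^ q ^ (e + 1) - C u)
  have hn := hζ.neZero'
  have hy0 : y ≠ 0 := by
    rintro rfl
    exact hu ((map_eq_zero _).mp (hy.symm.trans (zero_pow (NeZero.ne _))))
  have hmul (σ : Gal(E/Φ)) : ∃ w : Φ, σ y = algebraMap Φ E w * y ∧ w ^ q ^ (e + 1) = 1 := by
    obtain ⟨i, -, hi⟩ := (hζ.map_of_injective (algebraMap Φ E).injective).eq_pow_of_pow_eq_one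
      (ξ := σ y / y)
      (by rw [div_pow, ← map_pow, hy, σ.commutes, div_self (hy ▸ pow_ne_zero _ hy0)])
    refine ⟨ζ ^ i, by rw [map_pow, hi, div_mul_cancel₀ _ hy0], ?_⟩
    rw [← pow_mul, mul_comm, pow_mul, hζ.pow_eq_one, one_pow]
  have hle : Module.finrank Φ E ≤ q ^ (e + 1) := by
    have hmonic : (X ^ q ^ (e + 1) - C u).Monic := monic_X_pow_sub_C u (NeZero.ne _)
    rw [← (Field.primitive_element_iff_minpoly_natDegree_eq Φ y).mp
      (IntermediateField.adjoin_eq_top_of_algebra Φ {y} hgen),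
      ← natDegree_X_pow_sub_C (n := q ^ (e + 1)) (r := u)]
    exact natDegree_le_of_dvd (minpoly.dvd Φ y (by simp [hy])) hmonic.ne_zero
  refine ⟨hfin, IsGalois.of_separable_splitting_field (separable_X_pow_sub_C u hn.out hu), hle,
    fun σ ↦ ?_, y ^ q ^ e, ?_, fun σ hσ ↦ ?_⟩
  · obtain ⟨w, hw, hw1⟩ := hmul σ
    refine AlgEquiv.coe_toAlgHom_injective (AlgHom.ext_of_adjoin_eq_top hgen ?_)
    rintro _ rfl
    simp [pow_apply_eq_of_apply_eq_mul hw, hw1]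
  · rw [← pow_mul, ← pow_succ, hy, map_zero, zero_mul, sub_zero]
  · obtain ⟨w, hw, -⟩ := hmul σ
    have hw' : w ^ q ^ e = 1 := by
      refine (algebraMap Φ E).injective (mul_right_cancel₀ hy0 ?_)
      rw [← pow_apply_eq_of_apply_eq_mul hw, hσ, map_one, one_mul, AlgEquiv.one_apply]
    rw [map_pow, hw, mul_pow, ← map_pow, hw', map_one, one_mul]

end Kummer

section ArtinSchreierWitt

open WittVector

variable {p : ℕ} [Fact p.Prime]

theorem truncate_eq_truncate_iff {R : Type*} [CommRing R] {n : ℕ} {x y : WittVector p R} :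
    truncate n x = truncate n y ↔ ∀ i < n, x.coeff i = y.coeff i := by
  refine ⟨fun h i hi ↦ ?_, fun h ↦ TruncatedWittVector.ext fun i ↦ ?_⟩
  · rw [← coeff_truncate x ⟨i, hi⟩, h, coeff_truncate]
  · rw [coeff_truncate, coeff_truncate, h i i.2]

theorem truncate_map_eq_truncate_map {R S : Type*} [CommRing R] [CommRing S] (f : R →+* S)
    {n : ℕ} {x y : WittVector p R} (h : truncate n x = truncate n y) :
    truncate n (WittVector.map f x) = truncate n (WittVector.map f y) := by
  rw [truncate_eq_truncate_iff] at h ⊢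
  exact fun i hi ↦ by rw [map_coeff, map_coeff, h i hi]

theorem map_frobenius_charP {R S : Type*} [CommRing R] [CommRing S] [CharP R p] [CharP S p]
    (f : R →+* S) (x : WittVector p R) :
    WittVector.map f (frobenius x) = frobenius (WittVector.map f x) := by
  ext n
  rw [map_coeff, coeff_frobenius_charP, coeff_frobenius_charP, map_coeff, map_pow]

theorem truncate_natCast_pow_eq_zero {R : Type*} [CommRing R] [CharP R p] (n : ℕ) :
    truncate n ((p ^ n : ℕ) : WittVector p R) = 0 := by
  rw [← map_zero (truncate n), truncate_eq_truncate_iff]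
  intro i hi
  rw [Nat.cast_pow, zero_coeff, ← one_mul ((p : WittVector p R) ^ n),
    mul_pow_charP_coeff_zero _ hi]

theorem truncate_succ_verschiebung_eq {R : Type*} [CommRing R] {n : ℕ} {x y : WittVector p R}
    (h : truncate n x = truncate n y) :
    truncate (n + 1) (verschiebung x) = truncate (n + 1) (verschiebung y) := by
  rw [truncate_eq_truncate_iff] at h ⊢
  rintro (_ | i) hi
  · rw [verschiebung_coeff_zero, verschiebung_coeff_zero]
  · rw [verschiebung_coeff_succ, verschiebung_coeff_succ, h i (Nat.lt_of_succ_lt_succ hi)]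

theorem map_quotientMk_eq_zero_iff {R : Type*} [CommRing R] {I : Ideal R} {x : WittVector p R} :
    WittVector.map (Ideal.Quotient.mk I) x = 0 ↔ ∀ i, x.coeff i ∈ I := by
  simp only [WittVector.ext_iff, map_coeff, zero_coeff, Ideal.Quotient.eq_zero_iff_mem]

theorem exists_truncate_frobenius_sub_eq {R : Type*} [CommRing R] [CharP R p] {I : Ideal R}
    (hI : ∀ a ∈ I, ∃ y ∈ I, y ^ p - y = a) (n : ℕ) {b : WittVector p R}
    (hb : ∀ i, b.coeff i ∈ I) : ∃ x : WittVector p R, (∀ i, x.coeff i ∈ I) ∧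
      truncate n (frobenius x - x) = truncate n b := by
  induction n generalizing b with
  | zero => exact ⟨0, fun i ↦ by simp, TruncatedWittVector.ext fun i ↦ i.elim0⟩
  | succ n ih =>
    obtain ⟨y, hyI, hy⟩ := hI _ (hb 0)
    set t := teichmuller p y
    have ht (i : ℕ) : t.coeff i ∈ I := by
      cases i with
      | zero => rwa [teichmuller_coeff_zero]
      | succ i => simp [t, teichmuller_coeff_pos p y _ i.succ_pos]
    have hFt (i : ℕ) : (frobenius t).coeff i ∈ I := by
      rw [coeff_frobenius_charP]
      exact I.pow_mem_of_mem (ht i) p (Fact.out : p.Prime).pos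
    set d := b - (frobenius t - t)
    have hd : ∀ i, d.coeff i ∈ I := by
      rw [← map_quotientMk_eq_zero_iff] at ht hFt hb ⊢
      rw [map_sub, map_sub, ht, hFt, hb, sub_zero, sub_zero]
    have hd0 : ∀ i < 1, d.coeff i = 0 := by
      rintro i hi
      obtain rfl := Nat.lt_one_iff.mp hi
      rw [← WittVector.constantCoeff_apply, map_sub, map_sub]
      simp [WittVector.constantCoeff_apply, coeff_frobenius_charP, t, teichmuller_coeff_zero, hy]
    have hshift : verschiebung (d.shift 1) = d := (eq_iterate_verschiebung hd0).symm
    obtain ⟨x, hxI, hx⟩ := ih (b := d.shift 1) fun i ↦ by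
      rw [shift_coeff]
      exact hd _
    refine ⟨t + verschiebung x, ?_, ?_⟩
    · rw [← map_quotientMk_eq_zero_iff] at ht hxI ⊢
      rw [map_add, ht, map_verschiebung, hxI, map_zero, add_zero]
    · have hV : frobenius (t + verschiebung x) - (t + verschiebung x) =
          frobenius t - t + verschiebung (frobenius x - x) := by
        rw [map_add, map_sub, verschiebung_frobenius_comm x]
        abel
      rw [hV, map_add, truncate_succ_verschiebung_eq hx, hshift, ← map_add, add_sub_cancel]

-- The coefficients lie in the prime field, and the truncated Witt vectors of the prime field are
-- `ZMod (p ^ n)`.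
theorem exists_natCast_eq_truncate_of_frobenius_eq {N : Type*} [Field N] [CharP N p] {n : ℕ}
    {w : WittVector p N} (hw : truncate n (frobenius w) = truncate n w) :
    ∃ m < p ^ n, truncate n w = truncate n (m : WittVector p N) := by
  have hcoeff (i : ℕ) (hi : i < n) : ∃ c : ZMod p, ZMod.castHom dvd_rfl N c = w.coeff i := by
    have hpow := truncate_eq_truncate_iff.mp hw i hi
    rwa [coeff_frobenius_charP, ← Subfield.mem_bot_iff_pow_eq_self,
      ← ZMod.fieldRange_castHom_eq_bot p] at hpow
  choose! c hc using hcoeff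
  set z := (TruncatedWittVector.zmodEquivTrunc p n).symm (truncate n (WittVector.mk p c)) with hz
  refine ⟨z.val, z.val_lt, ?_⟩
  have htrunc : truncate n (WittVector.mk p c) =
      truncate n (z.val : WittVector p (ZMod p)) := by
    rw [map_natCast, ← map_natCast (TruncatedWittVector.zmodEquivTrunc p n),
      ZMod.natCast_zmod_val, hz, RingEquiv.apply_symm_apply]
  rw [← map_natCast (WittVector.map (ZMod.castHom dvd_rfl N)),
    ← truncate_map_eq_truncate_map _ htrunc, truncate_eq_truncate_iff]
  exact fun i hi ↦ by rw [map_coeff, coeff_mk, hc i hi]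

variable {Φ E : Type*} [Field Φ] [Field E] [Algebra Φ E] {n : ℕ} {b : WittVector p Φ}
  {x : WittVector p E}

theorem normal_of_forall_apply_mem_fieldRange {N : Type*} [Field N] [Algebra Φ N] [Normal Φ N]
    {s : Set E} (hgen : IntermediateField.adjoin Φ s = ⊤) (ι : E →ₐ[Φ] N)
    (h : ∀ σ : E →ₐ[Φ] N, ∀ y ∈ s, σ y ∈ ι.fieldRange) : Normal Φ E := by
  have hnormal : Normal Φ ι.fieldRange := by
    rw [IntermediateField.normal_iff_forall_fieldRange_le]
    intro σ
    have hle : (σ.comp (ι.equivFieldRange : E →ₐ[Φ] ι.fieldRange)).fieldRange ≤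
        ι.fieldRange := by
      rw [AlgHom.fieldRange_eq_map, ← hgen, IntermediateField.adjoin_map,
        IntermediateField.adjoin_le_iff]
      rintro _ ⟨y, hy, rfl⟩
      exact h _ y hy
    rintro _ ⟨z, rfl⟩
    obtain ⟨w, rfl⟩ := ι.equivFieldRange.surjective z
    exact hle ⟨w, rfl⟩
  exact Normal.of_algEquiv ι.equivFieldRange.symm

theorem map_algEquiv_one : WittVector.map ((1 : Gal(E/Φ)) : E →+* E) x = x := by
  ext i
  simp [map_coeff]

theorem truncate_map_pow_eq_add (σ : Gal(E/Φ)) {m : ℕ}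
    (hm : truncate n (WittVector.map (σ : E →+* E) x) = truncate n (x + (m : WittVector p E)))
    (j : ℕ) : truncate n (WittVector.map ((σ ^ j : Gal(E/Φ)) : E →+* E) x) =
      truncate n (x + ((m * j : ℕ) : WittVector p E)) := by
  induction j with
  | zero =>
    rw [pow_zero, map_algEquiv_one, mul_zero, Nat.cast_zero, add_zero]
  | succ j ih =>
    have hcomp : WittVector.map ((σ ^ (j + 1) : Gal(E/Φ)) : E →+* E) x =
        WittVector.map (σ : E →+* E) (WittVector.map ((σ ^ j : Gal(E/Φ)) : E →+* E) x) := by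
      ext i
      simp [map_coeff, pow_succ']
    rw [hcomp, truncate_map_eq_truncate_map _ ih, map_add, map_natCast, map_add, hm, ← map_add]
    push_cast
    ring_nf

theorem algEquiv_eq_of_truncate_map_eq
    (hgen : Algebra.adjoin Φ (x.coeff '' Set.Iio n) = ⊤) {σ τ : Gal(E/Φ)}
    (h : truncate n (WittVector.map (σ : E →+* E) x) =
      truncate n (WittVector.map (τ : E →+* E) x)) : σ = τ := by
  refine AlgEquiv.coe_toAlgHom_injective (AlgHom.ext_of_adjoin_eq_top hgen ?_)
  rintro _ ⟨i, hi, rfl⟩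
  have hi' := truncate_eq_truncate_iff.mp h i hi
  rwa [map_coeff, map_coeff] at hi'

variable [CharP E p]

theorem exists_truncate_map_eq_add_natCast {N : Type*} [Field N] [Algebra Φ N] [CharP N p]
    (hx : truncate n (frobenius x - x) = truncate n (WittVector.map (algebraMap Φ E) b))
    (σ τ : E →ₐ[Φ] N) : ∃ m < p ^ n, truncate n (WittVector.map (σ : E →+* N) x) =
      truncate n (WittVector.map (τ : E →+* N) x + (m : WittVector p N)) := by
  have hmap (σ : E →ₐ[Φ] N) : truncate n (frobenius (WittVector.map (σ : E →+* N) x)) =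
      truncate n (WittVector.map (σ : E →+* N) x) +
        truncate n (WittVector.map (algebraMap Φ N) b) := by
    have hcomp : WittVector.map (σ : E →+* N) (WittVector.map (algebraMap Φ E) b) =
        WittVector.map (algebraMap Φ N) b := by
      ext i
      simp only [map_coeff, RingHom.coe_coe, AlgHom.commutes]
    rw [← map_frobenius_charP, ← sub_eq_iff_eq_add', ← map_sub, ← map_sub,
      truncate_map_eq_truncate_map _ hx, hcomp]
  obtain ⟨m, hmlt, hm⟩ := exists_natCast_eq_truncate_of_frobenius_eq (n := n)
    (w := WittVector.map (σ : E →+* N) x - WittVector.map (τ : E →+* N) x) (by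
      rw [map_sub, map_sub, map_sub, hmap, hmap, add_sub_add_right_eq_sub])
  exact ⟨m, hmlt, by rw [map_add, ← hm, ← map_add, add_sub_cancel]⟩

theorem exists_forall_truncate_map_pow_eq_add
    (hx : truncate n (frobenius x - x) = truncate n (WittVector.map (algebraMap Φ E) b))
    (σ : Gal(E/Φ)) : ∃ m < p ^ n, ∀ j : ℕ,
      truncate n (WittVector.map ((σ ^ j : Gal(E/Φ)) : E →+* E) x) =
        truncate n (x + ((m * j : ℕ) : WittVector p E)) := by
  obtain ⟨m, hmlt, hm⟩ :=
    exists_truncate_map_eq_add_natCast hx (σ : E →ₐ[Φ] E) (AlgHom.id Φ E)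
  have hid : WittVector.map (AlgHom.id Φ E : E →+* E) x = x := by
    ext i
    simp only [map_coeff, RingHom.coe_coe, AlgHom.id_apply]
  rw [hid] at hm
  exact ⟨m, hmlt, truncate_map_pow_eq_add σ hm⟩

theorem finrank_le_of_truncate_frobenius_sub_eq [FiniteDimensional Φ E] [IsGalois Φ E]
    (hx : truncate n (frobenius x - x) = truncate n (WittVector.map (algebraMap Φ E) b))
    (hgen : Algebra.adjoin Φ (x.coeff '' Set.Iio n) = ⊤) : Module.finrank Φ E ≤ p ^ n := by
  choose m hmlt hm using exists_forall_truncate_map_pow_eq_add hx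
  rw [← IsGalois.card_aut_eq_finrank, ← Nat.card_fin (p ^ n)]
  refine Nat.card_le_card_of_injective (fun σ ↦ (⟨m σ, hmlt σ⟩ : Fin (p ^ n))) fun σ τ hστ ↦ ?_
  have heq : m σ = m τ := Fin.mk.inj hστ
  have hσ := hm σ 1
  rw [heq, ← hm τ 1, pow_one, pow_one] at hσ
  exact algEquiv_eq_of_truncate_map_eq hgen hσ

theorem isGalois_of_truncate_frobenius_sub_eq
    (hx : truncate n (frobenius x - x) = truncate n (WittVector.map (algebraMap Φ E) b))
    (hgen : IntermediateField.adjoin Φ (x.coeff '' Set.Iio n) = ⊤)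
    (hsep : ∀ i, IsSeparable Φ (x.coeff i)) : IsGalois Φ E := by
  have hseparable : Algebra.IsSeparable Φ E := by
    rw [← AlgEquiv.Algebra.isSeparable_iff IntermediateField.topEquiv, ← hgen,
      IntermediateField.isSeparable_adjoin_iff_isSeparable]
    rintro _ ⟨i, -, rfl⟩
    exact hsep i
  have hchar : CharP (AlgebraicClosure E) p := charP_of_injective_algebraMap
    (algebraMap E (AlgebraicClosure E)).injective p
  have hclosure : IsAlgClosure Φ (AlgebraicClosure E) := inferInstance
  have hnormal : Normal Φ E := by
    refine normal_of_forall_apply_mem_fieldRange hgen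
      (IsScalarTower.toAlgHom Φ E (AlgebraicClosure E)) ?_
    rintro σ _ ⟨i, hi, rfl⟩
    obtain ⟨m, -, hm⟩ := exists_truncate_map_eq_add_natCast hx σ
      (IsScalarTower.toAlgHom Φ E (AlgebraicClosure E))
    have hi' := truncate_eq_truncate_iff.mp hm i hi
    rw [← map_natCast (WittVector.map (IsScalarTower.toAlgHom Φ E (AlgebraicClosure E) :
      E →+* AlgebraicClosure E)), ← map_add, map_coeff, map_coeff] at hi'
    exact ⟨_, hi'.symm⟩
  exact ⟨⟩

theorem isKummerLike_of_truncate_frobenius_sub_eq {e : ℕ}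
    (hx : truncate (e + 1) (frobenius x - x) =
      truncate (e + 1) (WittVector.map (algebraMap Φ E) b))
    (hgen : Algebra.adjoin Φ (x.coeff '' Set.Iio (e + 1)) = ⊤)
    (hsep : ∀ i, IsSeparable Φ (x.coeff i)) : IsKummerLike E p e 1 (b.coeff 0) := by
  have hgen' := IntermediateField.adjoin_eq_top_of_algebra Φ _ hgen
  have hfin : FiniteDimensional Φ E := by
    have hadj : FiniteDimensional Φ
        (IntermediateField.adjoin Φ (x.coeff '' Set.Iio (e + 1))) := by
      refine IntermediateField.finiteDimensional_adjoin ?_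
      rintro _ ⟨i, -, rfl⟩
      exact (hsep i).isIntegral
    rw [hgen'] at hadj
    exact IntermediateField.topEquiv.toLinearEquiv.finiteDimensional
  have hgal := isGalois_of_truncate_frobenius_sub_eq hx hgen' hsep
  refine ⟨hfin, hgal, finrank_le_of_truncate_frobenius_sub_eq hx hgen, fun σ ↦ ?_, x.coeff 0, ?_,
    fun σ hσ ↦ ?_⟩
  · obtain ⟨m, -, hm⟩ := exists_forall_truncate_map_pow_eq_add hx σ
    refine algEquiv_eq_of_truncate_map_eq hgen ?_
    rw [map_algEquiv_one, hm, Nat.cast_mul, map_add, map_mul, truncate_natCast_pow_eq_zero,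
      mul_zero, add_zero]
  · have h0 := truncate_eq_truncate_iff.mp hx 0 e.succ_pos
    rw [← WittVector.constantCoeff_apply, map_sub, WittVector.constantCoeff_apply,
      WittVector.constantCoeff_apply, coeff_frobenius_charP, map_coeff] at h0
    rw [map_one, one_mul, h0]
  · obtain ⟨m, -, hm⟩ := exists_forall_truncate_map_pow_eq_add hx σ
    have hpow := hm (p ^ e)
    rw [hσ, map_algEquiv_one, map_add, left_eq_add, Nat.cast_mul, Nat.cast_pow,
      ← map_zero (truncate (e + 1)), truncate_eq_truncate_iff] at hpow
    have hm0 : (m : WittVector p E).coeff 0 ^ p ^ e = 0 := by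
      rw [← mul_pow_charP_coeff_succ, zero_add, hpow e e.lt_succ_self, zero_coeff]
    have h1 := truncate_eq_truncate_iff.mp (hm 1) 0 e.succ_pos
    rw [pow_one, mul_one, map_coeff, add_coeff_zero, eq_zero_of_pow_eq_zero hm0, add_zero] at h1
    exact h1

end ArtinSchreierWitt

section GaussValuation

theorem powerSeriesC_dvd_iff {R : Type*} [CommRing R] {a : R} {x : R⟦X⟧} :
    PowerSeries.C a ∣ x ↔ ∀ n, a ∣ PowerSeries.coeff n x := by
  refine ⟨?_, fun h ↦ ?_⟩
  · rintro ⟨y, rfl⟩ n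
    exact ⟨_, PowerSeries.coeff_C_mul n y a⟩
  · choose y hy using h
    exact ⟨PowerSeries.mk y, by ext n; rw [PowerSeries.coeff_C_mul, PowerSeries.coeff_mk, hy]⟩

theorem prime_powerSeriesC {R : Type*} [CommRing R] {a : R} (ha : Prime a) :
    Prime (PowerSeries.C a : R⟦X⟧) := by
  have hprime := (Ideal.span_singleton_prime ha.ne_zero).mpr ha
  have hker : RingHom.ker (PowerSeries.map (Ideal.Quotient.mk (Ideal.span {a}))) =
      Ideal.span {PowerSeries.C a} := by
    ext x
    simp only [RingHom.mem_ker, PowerSeries.ext_iff, PowerSeries.coeff_map, map_zero,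
      Ideal.Quotient.eq_zero_iff_mem, Ideal.mem_span_singleton, powerSeriesC_dvd_iff]
  have hne : (PowerSeries.C a : R⟦X⟧) ≠ 0 := fun h ↦
    ha.ne_zero (PowerSeries.C_injective (h.trans (map_zero _).symm))
  rw [← Ideal.span_singleton_prime hne, ← hker]
  exact RingHom.ker_isPrime _

theorem finiteMultiplicity_powerSeriesC {R : Type*} [CommRing R] [IsDomain R] [WfDvdMonoid R]
    {a : R} (ha : ¬IsUnit a) {x : R⟦X⟧} (hx : x ≠ 0) :
    FiniteMultiplicity (PowerSeries.C a) x := by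
  obtain ⟨i, hi⟩ := PowerSeries.exists_coeff_ne_zero_iff_ne_zero.mpr hx
  obtain ⟨n, hn⟩ := FiniteMultiplicity.of_not_isUnit ha hi
  exact ⟨n, fun h ↦ hn (powerSeriesC_dvd_iff.mp (by rwa [map_pow]) i)⟩

theorem exists_valuationSubring_lt_one_iff_mem {R K : Type*} [CommRing R] [Field K] {f : R →+* K}
    (hf : Function.Injective f) (P : Ideal R) [P.IsPrime] : ∃ V : ValuationSubring K,
      ∀ r, V.valuation (f r) ≤ 1 ∧ (V.valuation (f r) < 1 ↔ r ∈ P) := by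
  have hunit (r : P.primeCompl) : IsUnit (f r) :=
    ((map_ne_zero_iff f hf).mpr fun h ↦ r.2 (by rw [h]; exact P.zero_mem)).isUnit
  let g : Localization.AtPrime P →+* K := IsLocalization.lift hunit
  have hg (r : R) : g (algebraMap _ _ r) = f r := IsLocalization.lift_eq hunit r
  obtain ⟨V, hV, hlocal⟩ := IsLocalRing.exists_factor_valuationRing g
  refine ⟨V, fun r ↦ ⟨(V.valuation_le_one_iff _).mpr (hg r ▸ hV _), ?_⟩⟩
  rw [← not_iff_not, ← Ideal.mem_primeCompl_iff,
    ← IsLocalization.AtPrime.isUnit_to_map_iff (Localization.AtPrime P) P,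
    ← isUnit_map_iff (g.codRestrict V.toSubring hV), ← hg]
  exact not_iff_comm.mp (V.valuation_lt_one_iff _)

variable {O D : Type*} [CommRing O] [IsDomain O] [WfDvdMonoid O] [Field D] [Algebra O D]
  [FaithfulSMul O D] {ϖ : O}

theorem exists_valuationSubring_seriesFractions (hϖ : Prime ϖ) : ∃ V : ValuationSubring D⸨X⸩,
    (∀ x : O⸨X⸩, V.valuation (mapLaurent (algebraMap O D) x) ≤ 1) ∧
    V.valuation (HahnSeries.C (algebraMap O D ϖ)) < 1 ∧
    ∀ z ∈ seriesFractions O D, z ≠ 0 →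
      ∃ m : ℤ, V.valuation z = V.valuation (HahnSeries.C (algebraMap O D ϖ)) ^ m := by
  have hP := (Ideal.span_singleton_prime (prime_powerSeriesC hϖ).ne_zero).mpr
    (prime_powerSeriesC hϖ)
  let f : O⟦X⟧ →+* D⸨X⸩ :=
    (HahnSeries.ofPowerSeries ℤ D).comp (PowerSeries.map (algebraMap O D))
  have hf : Function.Injective f := by
    rw [RingHom.coe_comp]
    exact HahnSeries.ofPowerSeries_injective.comp
      (PowerSeries.map_injective _ (FaithfulSMul.algebraMap_injective O D))
  obtain ⟨V, hV⟩ := exists_valuationSubring_lt_one_iff_mem hf (Ideal.span {PowerSeries.C ϖ})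
  have hone {y : O⟦X⟧} (hy : ¬PowerSeries.C ϖ ∣ y) : V.valuation (f y) = 1 :=
    (hV y).1.antisymm (not_lt.mp fun h ↦ hy (Ideal.mem_span_singleton.mp ((hV y).2.mp h)))
  have hC : f (PowerSeries.C ϖ) = HahnSeries.C (algebraMap O D ϖ) := by
    simp [f, HahnSeries.ofPowerSeries_C]
  have hC0 : V.valuation (HahnSeries.C (algebraMap O D ϖ)) ≠ 0 := by
    rw [← hC, V.valuation.ne_zero_iff, map_ne_zero_iff f hf]
    exact (prime_powerSeriesC hϖ).ne_zero
  have hpow {y : O⟦X⟧} (hy : y ≠ 0) :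
      ∃ n : ℕ, V.valuation (f y) = V.valuation (HahnSeries.C (algebraMap O D ϖ)) ^ n := by
    obtain ⟨c, hc, hndvd⟩ :=
      (finiteMultiplicity_powerSeriesC hϖ.not_isUnit hy).exists_eq_pow_mul_and_not_dvd
    exact ⟨_, by rw [hc, map_mul, map_mul, hone hndvd, mul_one, map_pow, map_pow, hC]⟩
  refine ⟨V, fun x ↦ ?_, ?_, fun z hz hz0 ↦ ?_⟩
  · have hX : V.valuation (HahnSeries.single 1 1 : D⸨X⸩) = 1 := by
      have hndvd : ¬PowerSeries.C ϖ ∣ (PowerSeries.X : O⟦X⟧) := fun h ↦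
        hϖ.not_isUnit (isUnit_of_dvd_one (PowerSeries.coeff_one_X (R := O) ▸
          powerSeriesC_dvd_iff.mp h 1))
      simpa [f] using hone hndvd
    rw [← LaurentSeries.single_order_mul_powerSeriesPart x, map_mul, map_mul, mapLaurent_single,
      map_one, mapLaurent_coe, RatFunc.single_zpow, map_zpow₀, hX, one_zpow, one_mul]
    exact (hV _).1
  · rw [← hC, (hV _).2]
    exact Ideal.mem_span_singleton_self _
  · obtain ⟨b, r, hb, hbr⟩ := exists_map_mul_eq_of_mem_seriesFractions hz
    change f b * z = f r at hbr
    have hfb : f b ≠ 0 := (map_ne_zero_iff f hf).mpr hb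
    obtain ⟨m, hm⟩ := hpow hb
    obtain ⟨n, hn⟩ := hpow (y := r) fun hr ↦ mul_ne_zero hfb hz0 (by rw [hbr, hr, map_zero])
    refine ⟨n - m, ?_⟩
    rw [eq_div_of_mul_eq hfb ((mul_comm _ _).trans hbr), map_div₀, hm, hn, zpow_sub₀ hC0,
      zpow_natCast, zpow_natCast]

theorem exists_valuationSubring_pow_ne (hϖ : Prime ϖ) : ∃ V : ValuationSubring D⸨X⸩,
    (∀ x : O⸨X⸩, V.valuation (mapLaurent (algebraMap O D) x) ≤ 1) ∧
    1 < V.valuation (HahnSeries.single (1 : ℤ) (algebraMap O D ϖ)⁻¹) ∧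
    ∀ q : ℕ, q.Prime → ∀ z ∈ seriesFractions O D,
      V.valuation z ^ q ≠ V.valuation (HahnSeries.single (1 : ℤ) (algebraMap O D ϖ)⁻¹) := by
  obtain ⟨V, hV, hlt, hpow⟩ := exists_valuationSubring_seriesFractions (D := D) hϖ
  refine ⟨V, hV, ?_⟩
  set c := V.valuation (HahnSeries.C (algebraMap O D ϖ))
  have hc : 0 < c := by
    rw [Valuation.pos_iff, _root_.map_ne_zero,
      map_ne_zero_iff _ (FaithfulSMul.algebraMap_injective O D)]
    exact hϖ.ne_zero
  have hsingle (n : ℤ) : V.valuation (HahnSeries.single n 1 : D⸨X⸩) ≤ 1 := by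
    simpa [mapLaurent_single] using hV (HahnSeries.single n 1)
  have hX : V.valuation (HahnSeries.single 1 1 : D⸨X⸩) = 1 := by
    refine (hsingle 1).antisymm ?_
    have hinv := hsingle (-1)
    rw [← inv_one (G := D), ← HahnSeries.inv_single, map_inv₀] at hinv
    exact (inv_le_one₀ ((Valuation.pos_iff _).mpr (by simp))).mp hinv
  have hτ : V.valuation (HahnSeries.single (1 : ℤ) (algebraMap O D ϖ)⁻¹) = c⁻¹ := by
    have hmul : HahnSeries.single (1 : ℤ) (algebraMap O D ϖ)⁻¹ =
        (HahnSeries.C (algebraMap O D ϖ))⁻¹ * HahnSeries.single 1 1 := by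
      rw [HahnSeries.C_apply, HahnSeries.inv_single, neg_zero, HahnSeries.single_mul_single,
        zero_add, mul_one]
    rw [hmul, map_mul, hX, mul_one, map_inv₀]
  rw [hτ]
  refine ⟨one_lt_inv_iff₀.mpr ⟨hc, hlt⟩, fun q hq z hz h ↦ ?_⟩
  obtain rfl | hz0 := eq_or_ne z 0
  · rw [map_zero, zero_pow hq.ne_zero] at h
    exact inv_ne_zero hc.ne' h.symm
  · obtain ⟨m, hm⟩ := hpow z hz hz0
    rw [hm, ← zpow_natCast, ← zpow_mul, ← zpow_neg_one] at h
    have hmq : m * q = -1 := zpow_right_injective₀ hc hlt.ne h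
    have hdvd : (q : ℤ) ∣ (1 : ℕ) := ⟨-m, by push_cast; linear_combination hmq⟩
    exact hq.one_lt.ne' (Nat.dvd_one.mp (Int.natCast_dvd_natCast.mp hdvd))

variable {F : Type*} [Field F] [Algebra F O] [Algebra F D] [IsScalarTower F O D] {q e : ℕ}
  [Fact q.Prime] {E : IntermediateField (seriesFractions O D) D⸨X⸩} {a u : seriesFractions O D}

theorem IsKummerLike.exists_generator_and_mem_of_isAlgebraic (hϖ : Prime ϖ)
    (h : IsKummerLike E q e a u) {a' u' : O⸨X⸩} (ha : mapLaurent (algebraMap O D) a' = a)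
    (hu : HahnSeries.single 1 (algebraMap O D ϖ)⁻¹ + mapLaurent (algebraMap O D) u' =
      (u : D⸨X⸩)) :
    (∃ σ : Gal(E/seriesFractions O D), orderOf σ = q ^ (e + 1) ∧ Subgroup.zpowers σ = ⊤) ∧
      ∀ x ∈ E, IsAlgebraic F⸨X⸩ x → x ∈ seriesFractions O D := by
  obtain ⟨V, hV, hlt, hpow⟩ := exists_valuationSubring_pow_ne (D := D) hϖ
  let VE : Valuation E V.ValueGroup := V.valuation.comap (algebraMap E D⸨X⸩)
  have hVE (f : seriesFractions O D) : VE (algebraMap _ E f) = V.valuation f := rfl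
  have huV : V.valuation u = V.valuation (HahnSeries.single (1 : ℤ) (algebraMap O D ϖ)⁻¹) := by
    rw [← hu]
    exact V.valuation.map_add_eq_of_lt_left ((hV u').trans_lt hlt)
  have haE : VE (algebraMap _ E a) ≤ 1 := by rw [hVE, ← ha]; exact hV a'
  have huE : 1 < VE (algebraMap _ E u) := by rwa [hVE, huV]
  have hpowE (f : seriesFractions O D) : VE (algebraMap _ E f) ^ q ≠ VE (algebraMap _ E u) := by
    rw [hVE, hVE, huV]
    exact hpow q Fact.out f f.2
  refine ⟨h.exists_orderOf_eq_and_zpowers_eq_top VE haE huE hpowE, fun x hxE hx ↦ ?_⟩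
  have hF (f : F⸨X⸩) : algebraMap F⸨X⸩ D⸨X⸩ f =
      mapLaurent (algebraMap O D) (mapLaurent (algebraMap F O) f) := by
    rw [mapLaurent_mapLaurent, ← IsScalarTower.algebraMap_eq, algebraMap_laurent]
  let φ : F⸨X⸩ →+* seriesFractions O D := (algebraMap F⸨X⸩ D⸨X⸩).codRestrict _ fun f ↦ by
    rw [hF]
    exact mapLaurent_mem_seriesFractions _
  let : Algebra F⸨X⸩ (seriesFractions O D) := φ.toAlgebra
  let : Algebra F⸨X⸩ E := ((algebraMap (seriesFractions O D) E).comp φ).toAlgebra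
  have : IsScalarTower F⸨X⸩ (seriesFractions O D) E := .of_algebraMap_eq fun _ ↦ rfl
  have : IsScalarTower F⸨X⸩ E D⸨X⸩ := .of_algebraMap_eq fun _ ↦ rfl
  have hxE' : IsAlgebraic F⸨X⸩ (⟨x, hxE⟩ : E) :=
    (isAlgebraic_algebraMap_iff (algebraMap E D⸨X⸩).injective).mp hx
  obtain ⟨f, hf⟩ := IntermediateField.mem_bot.mp
    (h.mem_bot_of_isAlgebraic VE (fun f ↦ (congrArg _ (hF f)).trans_le (hV _)) haE huE hpowE hxE')
  have hfx : (f : D⸨X⸩) = x := congrArg Subtype.val hf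
  exact hfx ▸ f.2

end GaussValuation

section Adjoin

variable {Φ Ω : Type*} [Field Φ] [Field Ω] [Algebra Φ Ω] {q e : ℕ} [Fact q.Prime]

theorem adjoin_eq_top_of_coe_image_eq {S : Set Ω} {T : Set (IntermediateField.adjoin Φ S)}
    (hT : (↑) '' T = S) (hS : ∀ x ∈ S, IsAlgebraic Φ x) : Algebra.adjoin Φ T = ⊤ := by
  refine Algebra.adjoin_eq_top_of_intermediateField (fun x hx ↦ ?_) ?_
  · exact (isAlgebraic_algebraMap_iff
      (algebraMap (IntermediateField.adjoin Φ S) Ω).injective).mp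
      (hS _ (hT.subset (Set.mem_image_of_mem _ hx)))
  · refine IntermediateField.map_injective (IntermediateField.adjoin Φ S).val ?_
    rw [IntermediateField.adjoin_map, ← AlgHom.fieldRange_eq_map,
      IntermediateField.fieldRange_val]
    exact congrArg _ hT

theorem isKummerLike_adjoin_of_pow_eq {ζ : Φ} (hζ : IsPrimitiveRoot ζ (q ^ (e + 1))) {u : Φ}
    (hu : u ≠ 0) {y : Ω} (hy : y ^ q ^ (e + 1) = algebraMap Φ Ω u) :
    IsKummerLike (IntermediateField.adjoin Φ {y}) q e 0 u := by
  have := hζ.neZero'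
  refine isKummerLike_of_pow_eq hζ hu (y := IntermediateField.AdjoinSimple.gen Φ y)
    ((algebraMap _ Ω).injective ?_) (adjoin_eq_top_of_coe_image_eq ?_ ?_)
  · simpa [← IsScalarTower.algebraMap_apply] using hy
  · simp
  · rintro _ rfl
    exact .of_pow (NeZero.pos (q ^ (e + 1))) (hy ▸ isAlgebraic_algebraMap u)

theorem truncate_eq_of_truncate_map_eq {R S : Type*} [CommRing R] [CommRing S] {f : R →+* S}
    (hf : Function.Injective f) {n : ℕ} {x y : WittVector q R}
    (h : WittVector.truncate n (WittVector.map f x) =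
      WittVector.truncate n (WittVector.map f y)) :
    WittVector.truncate n x = WittVector.truncate n y := by
  rw [truncate_eq_truncate_iff] at h ⊢
  exact fun i hi ↦ hf (by rw [← WittVector.map_coeff, h i hi, WittVector.map_coeff])

theorem truncate_frobenius_eq {R : Type*} [CommRing R] [CharP R q] {n : ℕ} {x y : WittVector q R}
    (h : WittVector.truncate n x = WittVector.truncate n y) :
    WittVector.truncate n (WittVector.frobenius x) =
      WittVector.truncate n (WittVector.frobenius y) := by
  rw [truncate_eq_truncate_iff] at h ⊢
  exact fun i hi ↦ by
    rw [WittVector.coeff_frobenius_charP, WittVector.coeff_frobenius_charP, h i hi]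

theorem isKummerLike_adjoin_of_truncate_frobenius_sub_eq [CharP Ω q] {b : WittVector q Φ}
    {x : WittVector q Ω} (hx : WittVector.truncate (e + 1) (WittVector.frobenius x - x) =
      WittVector.truncate (e + 1) (WittVector.map (algebraMap Φ Ω) b))
    (hsep : ∀ i, IsSeparable Φ (x.coeff i)) :
    IsKummerLike (IntermediateField.adjoin Φ (x.coeff '' Set.Iio (e + 1))) q e 1 (b.coeff 0) := by
  set S := x.coeff '' Set.Iio (e + 1)
  have hmem (i : ℕ) (hi : i < e + 1) : x.coeff i ∈ IntermediateField.adjoin Φ S :=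
    IntermediateField.subset_adjoin Φ S ⟨i, hi, rfl⟩
  let x' : WittVector q (IntermediateField.adjoin Φ S) :=
    .mk q fun i ↦ if hi : i < e + 1 then ⟨x.coeff i, hmem i hi⟩ else 0
  have hx' : WittVector.truncate (e + 1) (WittVector.map (algebraMap _ Ω) x') =
      WittVector.truncate (e + 1) x := by
    rw [truncate_eq_truncate_iff]
    intro i hi
    rw [WittVector.map_coeff, WittVector.coeff_mk, dif_pos hi]
    rfl
  have hfrob : WittVector.truncate (e + 1) (WittVector.frobenius x' - x') =
      WittVector.truncate (e + 1) (WittVector.map (algebraMap Φ _) b) := by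
    refine truncate_eq_of_truncate_map_eq
      (algebraMap (IntermediateField.adjoin Φ S) Ω).injective ?_
    rw [map_sub, map_frobenius_charP, map_sub, truncate_frobenius_eq hx', hx', ← map_sub, hx]
    rfl
  refine isKummerLike_of_truncate_frobenius_sub_eq hfrob
    (adjoin_eq_top_of_coe_image_eq ?_ ?_) fun i ↦ ?_
  · rw [Set.image_image]
    refine Set.image_congr fun i hi ↦ ?_
    rw [WittVector.coeff_mk, dif_pos (Set.mem_Iio.mp hi)]
  · rintro _ ⟨i, -, rfl⟩
    exact (hsep i).isIntegral.isAlgebraic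
  · refine (isSeparable_map_iff (IntermediateField.adjoin Φ S).val Subtype.val_injective).mp ?_
    rw [WittVector.coeff_mk]
    split_ifs with hi
    · exact hsep i
    · simpa using isSeparable_algebraMap (K := Ω) (0 : Φ)

end Adjoin

section Hensel

variable {D : Type*} [Field D]

theorem exists_isRoot_of_constantCoeff_eval_eq_zero {f : D⟦X⟧[X]} (hf : f.Monic) {a₀ : D⟦X⟧}
    (h₀ : PowerSeries.constantCoeff (f.eval a₀) = 0)
    (h₁ : PowerSeries.constantCoeff (f.derivative.eval a₀) ≠ 0) :
    ∃ a, f.IsRoot a ∧ PowerSeries.constantCoeff a = PowerSeries.constantCoeff a₀ := by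
  have hunit : IsUnit (f.derivative.eval a₀) :=
    PowerSeries.isUnit_iff_constantCoeff.mpr h₁.isUnit
  obtain ⟨a, ha, hsub⟩ := HenselianRing.is_henselian (I := Ideal.span {PowerSeries.X}) f hf a₀
    (Ideal.mem_span_singleton.mpr (PowerSeries.X_dvd_iff.mpr h₀)) (hunit.map _)
  refine ⟨a, ha, sub_eq_zero.mp ?_⟩
  rw [← map_sub, ← PowerSeries.X_dvd_iff]
  exact Ideal.mem_span_singleton.mp hsub

theorem exists_pow_eq_of_constantCoeff_eq_one {n : ℕ} (hn : (n : D) ≠ 0) {u : D⟦X⟧}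
    (hu : PowerSeries.constantCoeff u = 1) : ∃ a : D⟦X⟧, a ^ n = u := by
  have hn0 : n ≠ 0 := by rintro rfl; exact hn Nat.cast_zero
  obtain ⟨a, ha, -⟩ := exists_isRoot_of_constantCoeff_eval_eq_zero (a₀ := 1)
    (monic_X_pow_sub_C u hn0) (by simp [hu]) (by simpa [derivative_X_pow] using hn)
  exact ⟨a, by simpa [sub_eq_zero] using ha⟩

theorem exists_pow_sub_eq_of_constantCoeff_eq_zero (p : ℕ) [Fact p.Prime] [CharP D p] {u : D⟦X⟧}
    (hu : PowerSeries.constantCoeff u = 0) :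
    ∃ a : D⟦X⟧, PowerSeries.constantCoeff a = 0 ∧ a ^ p - a = u := by
  have hp := (Fact.out : p.Prime)
  have hmonic : (X ^ p - (X + C u) : D⟦X⟧[X]).Monic := by
    refine monic_X_pow_sub ?_
    rw [degree_X_add_C]
    exact_mod_cast hp.one_lt
  obtain ⟨a, ha, ha0⟩ := exists_isRoot_of_constantCoeff_eval_eq_zero (a₀ := 0) hmonic
    (by simp [hu, hp.ne_zero]) (by simp [derivative_X_pow])
  have hroot : a ^ p - (a + u) = 0 := by simpa using ha
  exact ⟨a, by simpa using ha0, by linear_combination hroot⟩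

theorem isSeparable_of_pow_sub_eq {Φ Ω : Type*} [Field Φ] [Field Ω] [Algebra Φ Ω] (p : ℕ)
    [Fact p.Prime] [CharP Φ p] {a : Φ} {y : Ω} (hy : y ^ p - y = algebraMap Φ Ω a) :
    IsSeparable Φ y := by
  have hroot : aeval y (X ^ p - X - C a) = 0 := by simp [hy]
  have hsep : (X ^ p - X - C a : Φ[X]).Separable := ⟨0, -1, by simp [derivative_X_pow]⟩
  exact hsep.of_dvd (minpoly.dvd Φ y hroot)

end Hensel

section LocalExtension

variable {D : Type*} [Field D]

/-- The subring of those power series over `D` which are separable over a subfield `Φ` of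
`D⸨X⸩`. -/
noncomputable def separablePowerSeries (Φ D : Type*) [Field Φ] [Field D] [Algebra Φ D⸨X⸩] :
    Subring D⟦X⟧ :=
  (separableClosure Φ D⸨X⸩).toSubring.comap (HahnSeries.ofPowerSeries ℤ D)

variable {Φ : Type*} [Field Φ] [Algebra Φ D⸨X⸩]

theorem mem_separablePowerSeries {a : D⟦X⟧} :
    a ∈ separablePowerSeries Φ D ↔ IsSeparable Φ (a : D⸨X⸩) := by
  rw [separablePowerSeries, Subring.mem_comap]
  exact mem_separableClosure_iff

theorem exists_mem_separablePowerSeries_pow_sub_eq (p : ℕ) [Fact p.Prime] [CharP D p] {u : D⟦X⟧}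
    (hu : u ∈ separablePowerSeries Φ D) (hu0 : PowerSeries.constantCoeff u = 0) :
    ∃ a ∈ separablePowerSeries Φ D, PowerSeries.constantCoeff a = 0 ∧ a ^ p - a = u := by
  obtain ⟨a, ha0, ha⟩ := exists_pow_sub_eq_of_constantCoeff_eq_zero p hu0
  refine ⟨a, mem_separablePowerSeries.mpr ?_, ha0, ha⟩
  have : CharP D⸨X⸩ p := charP_of_injective_ringHom HahnSeries.C_injective p
  have : CharP (separableClosure Φ D⸨X⸩) p :=
    ((algebraMap (separableClosure Φ D⸨X⸩) D⸨X⸩).charP_iff_charP p).mpr inferInstance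
  have ha' : (a : D⸨X⸩) ^ p - a = algebraMap (separableClosure Φ D⸨X⸩) D⸨X⸩ ⟨u, hu⟩ := by
    rw [← map_pow, ← map_sub, ha]
    rfl
  exact IsSeparable.of_algebra_isSeparable_of_isSeparable (E := separableClosure Φ D⸨X⸩) Φ
    (isSeparable_of_pow_sub_eq p ha')

theorem exists_isSeparable_truncate_frobenius_sub_eq (p n : ℕ) [Fact p.Prime] [CharP D p]
    {u : D⟦X⟧} (hu0 : PowerSeries.constantCoeff u = 0) {t : Φ}
    (ht : algebraMap Φ D⸨X⸩ t = (u : D⸨X⸩)) :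
    ∃ x : WittVector p D⸨X⸩, (∀ i, IsSeparable Φ (x.coeff i)) ∧
      WittVector.truncate n (WittVector.frobenius x - x) = WittVector.truncate n
        (WittVector.map (algebraMap Φ D⸨X⸩) (WittVector.teichmuller p t)) := by
  let R := separablePowerSeries Φ D
  let I : Ideal R := RingHom.ker ((PowerSeries.constantCoeff (R := D)).comp R.subtype)
  let f : R →+* D⸨X⸩ := (HahnSeries.ofPowerSeries ℤ D).comp R.subtype
  have : CharP D⸨X⸩ p := charP_of_injective_ringHom HahnSeries.C_injective p
  have : CharP D⟦X⟧ p := charP_of_injective_ringHom PowerSeries.C_injective p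
  have : CharP R p := (R.subtype.charP_iff Subtype.val_injective p).mpr inferInstance
  let b : R := ⟨u, mem_separablePowerSeries.mpr (ht ▸ isSeparable_algebraMap t)⟩
  have hI (a : R) (ha : a ∈ I) : ∃ y ∈ I, y ^ p - y = a := by
    obtain ⟨y, hy, hy0, h⟩ := exists_mem_separablePowerSeries_pow_sub_eq p a.2 ha
    exact ⟨⟨y, hy⟩, hy0, Subtype.ext h⟩
  have hb (i : ℕ) : (WittVector.teichmuller p b).coeff i ∈ I := by
    obtain _ | i := i
    · rw [WittVector.teichmuller_coeff_zero]
      exact hu0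
    · rw [WittVector.teichmuller_coeff_pos p b _ i.succ_pos]
      exact I.zero_mem
  obtain ⟨x, -, hx⟩ := exists_truncate_frobenius_sub_eq hI n hb
  refine ⟨WittVector.map f x, fun i ↦ ?_, ?_⟩
  · rw [WittVector.map_coeff]
    exact mem_separablePowerSeries.mp (x.coeff i).2
  · have hfx := truncate_map_eq_truncate_map f hx
    rwa [map_sub, map_frobenius_charP, WittVector.map_teichmuller, show f b = _ from ht.symm,
      ← WittVector.map_teichmuller] at hfx

variable {O : Type*} [CommRing O] [Algebra O D] [IsFractionRing O D]

theorem single_one_mem_seriesFractions_of_isFractionRing (d : D) :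
    HahnSeries.single (1 : ℤ) d ∈ seriesFractions O D := by
  have h := mul_mem (C_mem_seriesFractions (O := O) d) (single_one_mem_seriesFractions (O := O) 1)
  rwa [HahnSeries.C_apply, HahnSeries.single_mul_single, zero_add, mul_one] at h

theorem exists_isKummerLike_of_isPrimitiveRoot {q e : ℕ} [Fact q.Prime] {ζ : O}
    (hζ : IsPrimitiveRoot ζ (q ^ (e + 1))) (d : D) :
    ∃ (E : IntermediateField (seriesFractions O D) D⸨X⸩) (u : seriesFractions O D),
      (u : D⸨X⸩) = HahnSeries.single 1 d + 1 ∧ IsKummerLike E q e 0 u := by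
  have hζD : IsPrimitiveRoot (algebraMap O D ζ) (q ^ (e + 1)) :=
    hζ.map_of_injective (IsFractionRing.injective O D)
  obtain ⟨y, hy⟩ := exists_pow_eq_of_constantCoeff_eq_one hζD.neZero'.out
    (u := PowerSeries.C d * PowerSeries.X + 1) (by simp)
  let ζΦ : seriesFractions O D := ⟨HahnSeries.C (algebraMap O D ζ), C_mem_seriesFractions _⟩
  have hζΦ : IsPrimitiveRoot ζΦ (q ^ (e + 1)) :=
    (hζD.map_of_injective HahnSeries.C_injective).of_map_of_injective
      (f := (seriesFractions O D).subtype) Subtype.val_injective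
  let u : seriesFractions O D :=
    ⟨HahnSeries.single 1 d + 1, add_mem (single_one_mem_seriesFractions_of_isFractionRing d)
      (one_mem _)⟩
  have hyu : (y : D⸨X⸩) ^ q ^ (e + 1) = HahnSeries.single 1 d + 1 := by
    rw [← map_pow, hy]
    simp
  have hu : (u : D⸨X⸩).coeff 0 = 1 := by simp [u]
  have hu0 : u ≠ 0 := fun h ↦ by simp [h] at hu
  exact ⟨_, u, rfl, isKummerLike_adjoin_of_pow_eq hζΦ hu0 hyu⟩

theorem exists_isKummerLike_of_charP (q e : ℕ) [Fact q.Prime] [CharP D q] (d : D) :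
    ∃ (E : IntermediateField (seriesFractions O D) D⸨X⸩) (u : seriesFractions O D),
      (u : D⸨X⸩) = HahnSeries.single 1 d ∧ IsKummerLike E q e 1 u := by
  have : CharP D⸨X⸩ q := charP_of_injective_ringHom HahnSeries.C_injective q
  let u : seriesFractions O D :=
    ⟨HahnSeries.single 1 d, single_one_mem_seriesFractions_of_isFractionRing d⟩
  obtain ⟨x, hsep, hx⟩ := exists_isSeparable_truncate_frobenius_sub_eq q (e + 1)
    (u := PowerSeries.C d * PowerSeries.X) (t := u) (by simp) (by simp; rfl)
  have h := isKummerLike_adjoin_of_truncate_frobenius_sub_eq hx hsep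
  rw [WittVector.teichmuller_coeff_zero] at h
  exact ⟨_, u, rfl, h⟩

theorem exists_isGalois_orderOf_eq_pow {F : Type*} [Field F] [Algebra F O] [Algebra F D]
    [IsScalarTower F O D] [IsDomain O] [WfDvdMonoid O] {ϖ : O} (hϖ : Prime ϖ) {q e : ℕ}
    [Fact q.Prime] (hq : CharP D q ∨ ∃ ζ : O, IsPrimitiveRoot ζ (q ^ (e + 1))) :
    ∃ E : IntermediateField (seriesFractions O D) D⸨X⸩,
      FiniteDimensional (seriesFractions O D) E ∧ IsGalois (seriesFractions O D) E ∧
      (∃ σ : Gal(E/seriesFractions O D), orderOf σ = q ^ (e + 1) ∧ Subgroup.zpowers σ = ⊤) ∧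
      ∀ x ∈ E, IsAlgebraic F⸨X⸩ x → x ∈ seriesFractions O D := by
  obtain hchar | ⟨ζ, hζ⟩ := hq
  · obtain ⟨E, u, hu, hE⟩ :=
      exists_isKummerLike_of_charP (O := O) q e (algebraMap O D ϖ)⁻¹
    have h := hE.exists_generator_and_mem_of_isAlgebraic (F := F) hϖ (a' := 1) (u' := 0)
      (by simp) (by simp [hu])
    exact ⟨E, hE.finiteDimensional, hE.isGalois, h⟩
  · obtain ⟨E, u, hu, hE⟩ := exists_isKummerLike_of_isPrimitiveRoot hζ (algebraMap O D ϖ)⁻¹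
    have h := hE.exists_generator_and_mem_of_isAlgebraic (F := F) hϖ (a' := 0) (u' := 1)
      (by simp) (by simp [hu])
    exact ⟨E, hE.finiteDimensional, hE.isGalois, h⟩

end LocalExtension

end Patching

namespace Patching

open scoped LaurentSeries TensorProduct

/-! ### Regular extensions -/

section Regular

variable {k L A : Type*} [Field k] [Field L] [Algebra k L] [Field A] [Algebra k A]

theorem isDomain_tensorProduct_of_injective {K F : Type*} [CommRing K] [Algebra k K] [CommRing F]
    [Algebra k F] [IsDomain (A ⊗[k] K)] (f : F →ₐ[k] K) (hf : Function.Injective f) :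
    IsDomain (A ⊗[k] F) :=
  (Module.Flat.lTensor_preserves_injective_linearMap f.toLinearMap hf :
    Function.Injective (Algebra.TensorProduct.map (AlgHom.id k A) f)).isDomain
      (Algebra.TensorProduct.map (AlgHom.id k A) f).toRingHom

theorem isDomain_tensorProduct_of_isFractionRing {P N : Type*} [CommRing P] [Algebra k P]
    [CommRing N] [Algebra k N] [Algebra P N] [IsScalarTower k P N] [IsFractionRing P N]
    [IsDomain (A ⊗[k] P)] : IsDomain (A ⊗[k] N) := by
  let φ := Algebra.TensorProduct.map (AlgHom.id A A) (IsScalarTower.toAlgHom k P N)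
  algebraize [φ.toRingHom]
  have : IsScalarTower A (A ⊗[k] P) (A ⊗[k] N) := .of_algebraMap_eq fun a ↦ (φ.commutes a).symm
  have := IsLocalization.tensorProduct_tensorProduct_right k A (nonZeroDivisors P) N
    (RingHom.ext fun p ↦ by simp [RingHom.algebraMap_toAlgebra, φ])
  have hinj : Function.Injective (Algebra.TensorProduct.includeRight : P →ₐ[k] A ⊗[k] P) :=
    Algebra.TensorProduct.includeRight_injective (algebraMap k A).injective
  have := hinj.isDomain Algebra.TensorProduct.includeRight.toRingHom
  exact IsLocalization.isDomain_of_le_nonZeroDivisors (A ⊗[k] N)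
    (map_le_nonZeroDivisors_of_injective _ hinj le_rfl)

theorem isDomain_tensorProduct_laurentSeries {F : Type*} [Field F] [Algebra k F]
    [IsDomain (A ⊗[k] F)] : IsDomain (A ⊗[k] F⸨X⸩) := by
  let : Algebra k (A ⊗[k] F)⸨X⸩ := HahnSeries.instAlgebra
  let φ : A ⊗[k] F⸨X⸩ →ₐ[k] (A ⊗[k] F)⸨X⸩ := Algebra.TensorProduct.productMap
    { (HahnSeries.C : A ⊗[k] F →+* _).comp Algebra.TensorProduct.includeLeftRingHom with
      commutes' := fun _ ↦ rfl }
    { mapLaurent (Algebra.TensorProduct.includeRight : F →ₐ[k] A ⊗[k] F).toRingHom with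
      commutes' := fun a ↦ (mapLaurent_C _ _).trans
        (congrArg HahnSeries.C (Algebra.TensorProduct.includeRight.commutes a)) }
  have hφ (a : A) (f : F⸨X⸩) (m : ℤ) : (φ (a ⊗ₜ f)).coeff m = a ⊗ₜ f.coeff m := by
    rw [Algebra.TensorProduct.productMap_apply_tmul]
    refine (coeff_C_mul _ _ _).trans ?_
    rw [AlgHom.coe_mk]
    simp
  refine Function.Injective.isDomain φ.toRingHom ((injective_iff_map_eq_zero φ).mpr fun x hx ↦ ?_)
  obtain ⟨c, rfl⟩ := TensorProduct.eq_repr_basis_left (Module.Basis.ofVectorSpace k A) x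
  suffices c = 0 by rw [this, Finsupp.sum_zero_index]
  ext i m
  refine DFunLike.congr_fun (TensorProduct.sum_tmul_basis_left_eq_zero
    (Module.Basis.ofVectorSpace k A) (c.mapRange (HahnSeries.coeff · m) rfl) ?_) i
  rw [Finsupp.sum_mapRange_index fun i ↦ TensorProduct.tmul_zero _ _, Finsupp.sum]
  simp_rw [← hφ]
  rw [← HahnSeries.coeff_sum, ← map_sum, ← Finsupp.sum, hx, HahnSeries.coeff_zero]

end Regular

section Descent

variable {k L F N G : Type*} [Field k] [Field L] [Algebra k L] [FiniteDimensional k L]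
  [IsGalois k L] [Field F] [Algebra k F] [Field N] [Algebra k N] [Algebra L N] [Algebra F N]
  [IsScalarTower k L N] [IsScalarTower k F N] [Group G] [MulSemiringAction G N]
  [SMulCommClass G F N] {α : G →* Gal(L/k)}

theorem productLeftAlgHom_injective (hα : Function.Surjective α)
    (hsmul : ∀ g x, g • algebraMap L N x = algebraMap L N (α g x)) :
    Function.Injective (Algebra.TensorProduct.productLeftAlgHom (Algebra.ofId L N)
      (IsScalarTower.toAlgHom k F N)) := by
  classical
  rw [injective_iff_map_eq_zero]
  intro x hx
  let b := Module.finBasis k L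
  obtain ⟨c, rfl⟩ := TensorProduct.eq_repr_basis_left b x
  have hconj (σ : Gal(L/k)) :
      ∑ i ∈ c.support, algebraMap L N (σ (b i)) * algebraMap F N (c i) = 0 := by
    obtain ⟨g, rfl⟩ := hα σ
    rw [← smul_zero g, ← hx, Finsupp.sum, map_sum, Finset.smul_sum]
    refine Finset.sum_congr rfl fun i _ ↦ ?_
    rw [← hsmul, ← smul_algebraMap g (c i), ← smul_mul']
    rfl
  have htrace (y : L) : ∑ i ∈ c.support, Algebra.trace k L (y * b i) • c i = 0 := by
    apply (algebraMap F N).injective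
    calc algebraMap F N (∑ i ∈ c.support, Algebra.trace k L (y * b i) • c i)
        = ∑ i ∈ c.support, ∑ σ : Gal(L/k), algebraMap L N (σ y) *
            (algebraMap L N (σ (b i)) * algebraMap F N (c i)) := by
          simp_rw [map_sum, Algebra.smul_def, map_mul, ← IsScalarTower.algebraMap_apply k F N,
            IsScalarTower.algebraMap_apply k L N, trace_eq_sum_automorphisms, map_sum, map_mul,
            Finset.sum_mul, mul_assoc]
      _ = algebraMap F N 0 := by
          rw [Finset.sum_comm, map_zero]
          simp_rw [← Finset.mul_sum, hconj, mul_zero, Finset.sum_const_zero]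
  suffices c = 0 by rw [this, Finsupp.sum_zero_index]
  ext j
  by_contra hj
  refine hj ?_
  simpa [b.trace_traceDual_mul, hj, ite_smul] using htrace (b.traceDual j)

theorem isDomain_tensorProduct_of_isGalois {A : Type*} [Field A] [Algebra k A] [Algebra L A]
    [IsScalarTower k L A] [IsDomain (A ⊗[L] N)] (hα : Function.Surjective α)
    (hsmul : ∀ g x, g • algebraMap L N x = algebraMap L N (α g x)) : IsDomain (A ⊗[k] F) := by
  have := isDomain_tensorProduct_of_injective (A := A) _
    (productLeftAlgHom_injective (F := F) hα hsmul)
  exact (Algebra.TensorProduct.cancelBaseChange k L A A F).toMulEquiv.symm.isDomain _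

end Descent

section Base

open MvPolynomial

universe u v

variable {k : Type*} {L : Type u} {G : Type v} [Field k] [Field L] [Algebra k L] [Group G]

/-- The action of `G` on `L[X_h : h ∈ G]` that is `α` on the coefficients and left translation on
the indeterminates: the generic member of the embedding problem `α`. -/
noncomputable def regularAction (α : G →* Gal(L/k)) : G →* RingAut (MvPolynomial G L) where
  toFun g := (mapEquiv G (α g).toRingEquiv).trans (renameEquiv L (Equiv.mulLeft g)).toRingEquiv
  map_one' := RingEquiv.toRingHom_injective (ringHom_ext (fun x ↦ by simp) fun h ↦ by simp)
  map_mul' g h := RingEquiv.toRingHom_injective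
    (ringHom_ext (fun x ↦ by simp) fun i ↦ by simp [mul_assoc])

variable {α : G →* Gal(L/k)}

theorem regularAction_C (g : G) (x : L) : regularAction α g (C x) = C (α g x) := by
  simp [regularAction]

theorem regularAction_X (g h : G) : regularAction α g (X h) = X (g * h) := by
  simp [regularAction]

theorem isDomain_tensorProduct_fractionRing_mvPolynomial {σ A : Type*} [Field A] [Algebra L A] :
    IsDomain (A ⊗[L] FractionRing (MvPolynomial σ L)) :=
  have := (algebraTensorAlgEquiv (σ := σ) L A).toMulEquiv.isDomain
  isDomain_tensorProduct_of_isFractionRing (P := MvPolynomial σ L)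

theorem exists_isGaloisGroup_isDomain_tensorProduct [Finite G] [FiniteDimensional k L]
    [IsGalois k L] (hα : Function.Surjective α) :
    ∃ (N : Type (max u v)) (_ : Field N) (_ : Algebra k N) (_ : Algebra L N)
      (_ : IsScalarTower k L N) (_ : MulSemiringAction G N) (F : IntermediateField k N),
      IsGaloisGroup G F N ∧ Infinite F ∧ IsDomain (AlgebraicClosure k ⊗[k] F) ∧
      ∀ g x, g • algebraMap L N x = algebraMap L N (α g x) := by
  let N := FractionRing (MvPolynomial G L)
  let : MulSemiringAction G (MvPolynomial G L) := .compHom _ (regularAction α)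
  let : MulSemiringAction G N := IsFractionRing.mulSemiringAction G (MvPolynomial G L) N
  have hN (g : G) (p : MvPolynomial G L) :
      g • algebraMap _ N p = algebraMap _ N (regularAction α g p) :=
    IsFractionRing.ringEquivOfRingEquiv_algebraMap _ p
  have hL (g : G) (x : L) : g • algebraMap L N x = algebraMap L N (α g x) := by
    rw [IsScalarTower.algebraMap_apply L (MvPolynomial G L) N, algebraMap_eq, hN, regularAction_C,
      ← algebraMap_eq, ← IsScalarTower.algebraMap_apply]
  have : SMulCommClass G k N := ⟨fun g a x ↦ by
    rw [Algebra.smul_def, Algebra.smul_def, smul_mul', IsScalarTower.algebraMap_apply k L N, hL,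
      AlgEquiv.commutes]⟩
  have : FaithfulSMul G N := ⟨fun {g h} (hgh : ∀ x : N, g • x = h • x) ↦ by
    have := hgh (algebraMap (MvPolynomial G L) N (X 1))
    rw [hN, hN, regularAction_X, regularAction_X, mul_one, mul_one] at this
    exact X_injective (IsFractionRing.injective (MvPolynomial G L) N this)⟩
  let F : IntermediateField k N := FixedPoints.intermediateField G
  have hF : IsGaloisGroup G F N := inferInstanceAs (IsGaloisGroup G (FixedPoints.subfield G N) N)
  refine ⟨N, _, _, _, inferInstance, _, F, hF, ?_, ?_, hL⟩
  · have := IsGaloisGroup.finiteDimensional G F N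
    have : Infinite N := .of_injective _ (IsFractionRing.injective (MvPolynomial G L) N)
    by_contra hfin
    rw [not_infinite_iff_finite] at hfin
    have : Finite N := Module.finite_of_finite F
    exact not_finite N
  · let := (IsAlgClosed.lift : L →ₐ[k] AlgebraicClosure k).toRingHom.toAlgebra
    have : IsScalarTower k L (AlgebraicClosure k) := .of_algHom IsAlgClosed.lift
    have := isDomain_tensorProduct_fractionRing_mvPolynomial (L := L) (σ := G)
      (A := AlgebraicClosure k)
    exact isDomain_tensorProduct_of_isGalois hα hL

end Base

end Patching

namespace Patching

open Polynomial
open scoped LaurentSeries PowerSeries RatFunc IntermediateField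

section Group

variable {G : Type*} [Group G] [Finite G]

theorem closure_setOf_pow_prime_pow_eq_one (H : Subgroup G) :
    Subgroup.closure {g | g ∈ H ∧ ∃ q e : ℕ, q.Prime ∧ g ^ q ^ (e + 1) = 1} = H := by
  refine le_antisymm ((Subgroup.closure_le H).mpr fun g hg ↦ hg.1) ?_
  set K := Subgroup.closure {g | g ∈ H ∧ ∃ q e : ℕ, q.Prime ∧ g ^ q ^ (e + 1) = 1}
  have hKH : K ≤ H := (Subgroup.closure_le H).mpr fun g hg ↦ hg.1
  suffices Nat.card H ∣ Nat.card K from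
    (Subgroup.eq_of_le_of_card_ge hKH (Nat.le_of_dvd Nat.card_pos this)).ge
  refine (Nat.dvd_iff_prime_pow_dvd_dvd _ _).mpr fun q e hq he ↦ ?_
  have : Fact q.Prime := ⟨hq⟩
  obtain ⟨P, hP⟩ := Sylow.exists_subgroup_card_pow_prime q he
  rw [← hP, ← Subgroup.card_map_of_injective (K := P) (f := H.subtype) H.subtype_injective]
  refine Subgroup.card_dvd_of_le ?_
  rintro _ ⟨g, hg, rfl⟩
  refine Subgroup.subset_closure ⟨g.2, q, e, hq, ?_⟩
  have hg' : g ^ q ^ e = 1 :=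
    orderOf_dvd_iff_pow_eq_one.mp (hP ▸ Subgroup.orderOf_dvd_natCard P hg)
  rw [← map_pow, pow_succ, pow_mul, hg', one_pow, map_one]

end Group

section Primitive

variable {F M : Type*} [Field F] [Field M] [Algebra F M] [Infinite F]

theorem infinite_range_minpoly_add_algebraMap [Algebra.IsIntegral F M] (x : M) :
    (Set.range fun a : F ↦ minpoly F (x + algebraMap F M a)).Infinite := by
  intro hfin
  refine (Set.infinite_univ (α := F)) ?_
  rw [← Set.preimage_range fun a : F ↦ minpoly F (x + algebraMap F M a)]
  refine hfin.preimage' ?_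
  rintro _ ⟨b, rfl⟩
  refine ((((minpoly F (x + algebraMap F M b)).rootSet_finite M).preimage
    (f := fun a : F ↦ x + algebraMap F M a) ?_).subset fun a ha ↦ ?_)
  · exact fun a _ a' _ h ↦ (algebraMap F M).injective (add_left_cancel h)
  · rw [Set.mem_preimage, mem_rootSet]
    refine ⟨minpoly.ne_zero (Algebra.IsIntegral.isIntegral _), ?_⟩
    have ha : minpoly F (x + algebraMap F M a) = minpoly F (x + algebraMap F M b) := ha
    exact ha ▸ minpoly.aeval F (x + algebraMap F M a)

theorem exists_adjoin_eq_top_pairwise_isCoprime_minpoly {I : Type*} [Finite I]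
    [FiniteDimensional F M] [Algebra.IsSeparable F M] :
    ∃ θ : I → M, (∀ i, IntermediateField.adjoin F {θ i} = ⊤) ∧
      Pairwise (Function.onFun IsCoprime fun i ↦ minpoly F (θ i)) := by
  have hint (x : M) : IsIntegral F x := Algebra.IsIntegral.isIntegral x
  obtain ⟨x, hx⟩ := Field.exists_primitive_element F M
  have := (infinite_range_minpoly_add_algebraMap (F := F) x).to_subtype
  obtain ⟨e⟩ : Nonempty (I ↪ Set.range fun a : F ↦ minpoly F (x + algebraMap F M a)) :=
    ⟨(Finite.equivFin I).toEmbedding.trans (Fin.valEmbedding.trans (Infinite.natEmbedding _))⟩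
  choose a ha using fun i ↦ (e i).2
  refine ⟨fun i ↦ x + algebraMap F M (a i), fun i ↦ ?_, fun i j hij ↦ ?_⟩
  · rw [eq_top_iff, ← hx, IntermediateField.adjoin_simple_le_iff]
    have := sub_mem (IntermediateField.mem_adjoin_simple_self F (x + algebraMap F M (a i)))
      (algebraMap_mem _ (a i))
    rwa [add_sub_cancel_right] at this
  · refine (minpoly.irreducible (hint _)).coprime_iff_not_dvd.mpr fun hdvd ↦ hij ?_
    have hassoc := (minpoly.irreducible (hint _)).associated_of_dvd
      (minpoly.irreducible (hint _)) hdvd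
    have heq := eq_of_monic_of_associated (minpoly.monic (hint _)) (minpoly.monic (hint _)) hassoc
    exact e.injective (Subtype.ext ((ha i).symm.trans (heq.trans (ha j))))

end Primitive

section RootsOfUnity

universe u

theorem exists_finiteDimensional_isSeparable_isPrimitiveRoot {I : Type*} {N : Type u} [Finite I]
    [Field N] (m : I → ℕ) :
    ∃ (A : Type u) (_ : Field A) (_ : Algebra N A), FiniteDimensional N A ∧
      Algebra.IsSeparable N A ∧ ∀ i, (m i : N) ≠ 0 → ∃ ζ : A, IsPrimitiveRoot ζ (m i) := by
  classical
  cases nonempty_fintype I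
  let n := ∏ i with (m i : N) ≠ 0, m i
  have hn : (n : N) ≠ 0 := by
    simp only [n, Nat.cast_prod]
    exact Finset.prod_ne_zero_iff.mpr fun i hi ↦ (Finset.mem_filter.mp hi).2
  have : NeZero (n : N) := ⟨hn⟩
  have : NeZero n := ⟨fun h ↦ hn (by rw [h, Nat.cast_zero])⟩
  have : IsGalois N (CyclotomicField n N) := IsCyclotomicExtension.isGalois {n} N _
  refine ⟨CyclotomicField n N, inferInstance, inferInstance,
    IsCyclotomicExtension.finiteDimensional {n} N _, inferInstance, fun i hi ↦ ?_⟩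
  obtain ⟨d, hd⟩ : m i ∣ n :=
    Finset.dvd_prod_of_mem _ (Finset.mem_filter.mpr ⟨Finset.mem_univ i, hi⟩)
  exact ⟨_, (IsCyclotomicExtension.zeta_spec n N (CyclotomicField n N)).pow (NeZero.pos n)
    (hd.trans (mul_comm _ _))⟩

end RootsOfUnity

/-! ### Geometric Galois solutions -/

section GeometricSolution

theorem smulCommClass_of_smul_algebraMap {G F E : Type*} [Group G] [Field F] [Field E]
    [Algebra F E] [MulSemiringAction G E]
    (h : ∀ (g : G) (a : F), g • algebraMap F E a = algebraMap F E a) : SMulCommClass G F E :=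
  ⟨fun g a x ↦ by rw [Algebra.smul_def, Algebra.smul_def, smul_mul', h]⟩

theorem mem_range_algebraMap_of_mem_adjoin_simple {K E : Type*} [Field K] [Field E] [Algebra K E]
    {T z : E} (hT : Transcendental K T) (hz : z ∈ K⟮T⟯) (halg : IsAlgebraic K z) :
    z ∈ Set.range (algebraMap K E) := by
  obtain ⟨r, hr⟩ := (RatFunc.algEquivOfTranscendental T hT).surjective ⟨z, hz⟩
  have hr_alg : IsAlgebraic K r := by
    rw [← isAlgebraic_algHom_iff (K⟮T⟯.val.comp (RatFunc.algEquivOfTranscendental T hT).toAlgHom)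
      (RingHom.injective _)]
    simpa [hr] using halg
  obtain ⟨c, rfl⟩ : ∃ c, r = RatFunc.C c := not_not.mp fun h ↦ r.transcendental_of_ne_C h hr_alg
  refine ⟨c, ?_⟩
  have := (RatFunc.algEquivOfTranscendental T hT).commutes c
  rw [RatFunc.algebraMap_eq_C, hr] at this
  exact (congrArg Subtype.val this).symm

variable {k G L E : Type*} [Field k] [Group G] [Field L] [Algebra k L] [Field E] [Algebra k E]
  [MulSemiringAction G E]

/-- `E` is a geometric Galois solution, with group `G` and rational parameter `T` over `K`, of the
embedding problem `α : G → Gal(L/k)`: the fixed field of `G` is the rational function field `K(T)`,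
`G` acts through `α` on the copy `j L` of `L`, and the elements of `E` algebraic over `K` are fixed
by `ker α`, which by Galois theory puts them in `L K`. -/
structure IsGeomGaloisSolution (α : G →* (L ≃ₐ[k] L)) (K : Type*) [Field K] [Algebra K E]
    (j : L →ₐ[k] E) (T : E) : Prop where
  faithfulSMul : FaithfulSMul G E
  transcendental : Transcendental K T
  mem_adjoin_iff : ∀ x : E, x ∈ K⟮T⟯ ↔ ∀ g : G, g • x = x
  smul_apply : ∀ (g : G) (x : L), g • j x = j (α g x)
  smul_eq_of_isAlgebraic : ∀ z : E, IsAlgebraic K z → ∀ g ∈ α.ker, g • z = z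

namespace IsGeomGaloisSolution

variable {K : Type*} [Field K] [Algebra K E] {α : G →* (L ≃ₐ[k] L)} {j : L →ₐ[k] E} {T : E}

theorem isGaloisGroup (h : IsGeomGaloisSolution α K j T) {B : Type*} [Field B] [Algebra B E]
    (hB : ∀ x, x ∈ Set.range (algebraMap B E) ↔ x ∈ K⟮T⟯) : IsGaloisGroup G B E where
  faithful := h.faithfulSMul
  commutes := smulCommClass_of_smul_algebraMap fun g b ↦
    (h.mem_adjoin_iff _).mp ((hB _).mp ⟨b, rfl⟩) g
  isInvariant := ⟨fun x hx ↦ (hB x).mpr ((h.mem_adjoin_iff x).mpr hx)⟩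

theorem isGaloisGroup_adjoin (h : IsGeomGaloisSolution α K j T) : IsGaloisGroup G K⟮T⟯ E :=
  h.isGaloisGroup fun _ ↦ ⟨fun ⟨b, hb⟩ ↦ hb ▸ b.2, fun hx ↦ ⟨⟨_, hx⟩, rfl⟩⟩

theorem mem_adjoin_range_of_isAlgebraic [Algebra k K] [IsScalarTower k K E] [Finite G]
    [Algebra.IsAlgebraic k L] (h : IsGeomGaloisSolution α K j T) {z : E} (hz : IsAlgebraic K z) :
    z ∈ IntermediateField.adjoin K (Set.range j) := by
  have := h.isGaloisGroup_adjoin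
  have hmem : z ∈ IntermediateField.adjoin K⟮T⟯ (Set.range j) := by
    rw [← IsGaloisGroup.fixedPoints_fixingSubgroup G K⟮T⟯ E
      (IntermediateField.adjoin K⟮T⟯ (Set.range j))]
    intro g
    refine h.smul_eq_of_isAlgebraic z hz g (AlgEquiv.ext fun x ↦ j.injective ?_)
    exact (h.smul_apply g x).symm.trans
      ((mem_fixingSubgroup_iff G).mp g.2 _ (IntermediateField.subset_adjoin _ _ ⟨x, rfl⟩))
  set C := IntermediateField.adjoin K (Set.range j)
  have : Algebra.IsAlgebraic K C := IntermediateField.isAlgebraic_adjoin <| by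
    rintro _ ⟨x, rfl⟩
    have hx : IsIntegral k (j x) := (Algebra.IsIntegral.isIntegral x).map j
    exact hx.tower_top
  have hmem' : z ∈ C⟮T⟯ := by
    rw [← IntermediateField.mem_restrictScalars K, IntermediateField.adjoin_adjoin_left] at hmem ⊢
    rwa [Set.union_comm]
  obtain ⟨c, rfl⟩ := mem_range_algebraMap_of_mem_adjoin_simple
    (h.transcendental.extendScalars_of_isIntegral C) hmem' (hz.tower_top C)
  exact c.2

end IsGeomGaloisSolution

end GeometricSolution

section Embedding

theorem hasGeomGaloisSolution_of_isGaloisGroup {k G L K E : Type} [Field k] [Group G] [Finite G]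
    [Field L] [Algebra k L] {α : G →* (L ≃ₐ[k] L)} [Field K] [Algebra k K] [Field E]
    [Algebra K E] [Algebra k E] [IsScalarTower k K E] [MulSemiringAction G E]
    [Algebra (RatFunc K) E] [IsScalarTower K (RatFunc K) E] [IsGaloisGroup G (RatFunc K) E]
    (j : L →ₐ[k] E) (hsmul : ∀ (g : G) (x : L), g • j x = j (α g x))
    (halg : ∀ z : E, IsAlgebraic K z → z ∈ IntermediateField.adjoin K (Set.range j)) :
    HasGeomGaloisSolution k G L α K := by
  have : IsGalois (RatFunc K) E := IsGaloisGroup.isGalois G _ _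
  have : FiniteDimensional (RatFunc K) E := IsGaloisGroup.finiteDimensional G _ _
  let ε : E →ₐ[RatFunc K] AlgebraicClosure (RatFunc K) := IsAlgClosed.lift
  let e : E ≃ₐ[RatFunc K] ε.fieldRange := AlgEquiv.ofInjectiveField ε
  let _ : Algebra k (AlgebraicClosure (RatFunc K)) :=
    ((algebraMap (RatFunc K) (AlgebraicClosure (RatFunc K))).comp
      ((algebraMap K (RatFunc K)).comp (algebraMap k K))).toAlgebra
  let ι : L →ₐ[k] AlgebraicClosure (RatFunc K) :=
    { (ε : E →+* AlgebraicClosure (RatFunc K)).comp (j : L →+* E) with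
      commutes' := fun a ↦ by
        change ε (j (algebraMap k L a)) = _
        rw [j.commutes, IsScalarTower.algebraMap_apply k K E,
          IsScalarTower.algebraMap_apply K (RatFunc K) E, ε.commutes]
        rfl }
  refine ⟨ι, ε.fieldRange, fun x ↦ ⟨j x, rfl⟩, e.toLinearEquiv.finiteDimensional,
    IsGalois.of_algEquiv e, ?_,
    (AlgEquiv.autCongr e).symm.trans (IsGaloisGroup.mulEquivAlgEquiv G (RatFunc K) E).symm, ?_⟩
  · rintro _ ⟨z, rfl⟩ hz
    have hz' := halg z ((isAlgebraic_algHom_iff (ε.restrictScalars K) ε.injective).mp hz)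
    have := IntermediateField.adjoin_map K (Set.range j) (ε.restrictScalars K)
    rw [← Set.range_comp] at this
    exact this.le ⟨z, hz', rfl⟩
  · intro σ x
    obtain ⟨τ, rfl⟩ := (AlgEquiv.autCongr e).surjective σ
    obtain ⟨g, rfl⟩ := (IsGaloisGroup.mulEquivAlgEquiv G (RatFunc K) E).surjective τ
    rw [MulEquiv.trans_apply, MulEquiv.symm_apply_apply, MulEquiv.symm_apply_apply]
    change ε (g • e.symm (e (j x))) = ε (j (α g x))
    rw [e.symm_apply_apply, hsmul]

theorem IsGeomGaloisSolution.hasGeomGaloisSolution {k G L K E : Type} [Field k] [Group G] [Finite G]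
    [Field L] [Algebra k L] [Algebra.IsAlgebraic k L] {α : G →* (L ≃ₐ[k] L)} [Field K]
    [Algebra k K] [Field E] [Algebra K E] [Algebra k E] [IsScalarTower k K E]
    [MulSemiringAction G E] {j : L →ₐ[k] E} {T : E} (h : IsGeomGaloisSolution α K j T) :
    HasGeomGaloisSolution k G L α K := by
  let e := RatFunc.algEquivOfTranscendental T h.transcendental
  let _ : Algebra (RatFunc K) E := (K⟮T⟯.val.comp e.toAlgHom).toRingHom.toAlgebra
  have : IsScalarTower K (RatFunc K) E :=
    .of_algebraMap_eq fun a ↦ ((K⟮T⟯.val.comp e.toAlgHom).commutes a).symm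
  have : IsGaloisGroup G (RatFunc K) E := h.isGaloisGroup fun x ↦
    ⟨fun ⟨r, hr⟩ ↦ hr ▸ (e r).2,
      fun hx ↦ ⟨e.symm ⟨x, hx⟩, congrArg Subtype.val (e.apply_symm_apply ⟨x, hx⟩)⟩⟩
  exact hasGeomGaloisSolution_of_isGaloisGroup j h.smul_apply
    fun _ ↦ h.mem_adjoin_range_of_isAlgebraic

end Embedding

section InvariantSubfield

variable {G F E : Type*} [Group G] [Field F] [Field E] [Algebra F E] [MulSemiringAction G E]

/-- The restriction of an action on `E` to a stable intermediate field. It depends on the proof of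
stability and is therefore not an instance. -/
abbrev mulSemiringActionOfSMulMem (S : IntermediateField F E)
    (hS : ∀ g : G, ∀ x ∈ S, g • x ∈ S) : MulSemiringAction G S where
  smul g x := ⟨g • (x : E), hS g x x.2⟩
  one_smul x := Subtype.ext (one_smul G (x : E))
  mul_smul g h x := Subtype.ext (mul_smul g h (x : E))
  smul_zero g := Subtype.ext (smul_zero g)
  smul_add g x y := Subtype.ext (smul_add g (x : E) y)
  smul_one g := Subtype.ext (smul_one g)
  smul_mul g x y := Subtype.ext (smul_mul' g (x : E) y)

theorem smul_mem_adjoin [SMulCommClass G F E] {S : Set E} {g : G}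
    (hS : ∀ x ∈ S, g • x ∈ IntermediateField.adjoin F S) {x : E}
    (hx : x ∈ IntermediateField.adjoin F S) : g • x ∈ IntermediateField.adjoin F S := by
  have hle : IntermediateField.adjoin F S ≤
      (IntermediateField.adjoin F S).comap (MulSemiringAction.toAlgHom F E g) :=
    IntermediateField.adjoin_le_iff.mpr hS
  exact hle hx

-- An invariant polynomial expression in `θ` of degree less than `|G|` takes the same value at all
-- conjugates of `θ`, so it is constant.
theorem mem_range_algebraMap_of_mem_adjoin_simple_of_forall_smul_eq [Finite G]
    [SMulCommClass G F E] {θ : E} (hθ : Function.Injective fun g : G ↦ g • θ) {Q : F[X]}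
    (hQ : Q.Monic) (hdeg : Q.natDegree = Nat.card G) (hroot : aeval θ Q = 0) {x : E}
    (hx : x ∈ F⟮θ⟯) (hfix : ∀ g : G, g • x = x) : x ∈ Set.range (algebraMap F E) := by
  cases nonempty_fintype G
  have hint : IsIntegral F θ := ⟨Q, hQ, hroot⟩
  rw [← IntermediateField.mem_toSubalgebra,
    IntermediateField.adjoin_simple_toSubalgebra_of_isAlgebraic hint.isAlgebraic,
    Algebra.adjoin_singleton_eq_range_aeval] at hx
  obtain ⟨p, rfl⟩ := hx
  have hmod : aeval θ (p %ₘ Q) = aeval θ p := aeval_modByMonic_eq_self_of_root hroot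
  have hlt : (p %ₘ Q).natDegree < Fintype.card G := by
    rw [← Nat.card_eq_fintype_card, ← hdeg]
    refine natDegree_modByMonic_lt p hQ ?_
    rintro rfl
    exact Nat.card_pos.ne' (hdeg.symm.trans natDegree_one)
  have hconst : (p %ₘ Q).map (algebraMap F E) - C (aeval θ p) = 0 := by
    refine eq_zero_of_natDegree_lt_card_of_eval_eq_zero _ hθ (fun g ↦ ?_) ?_
    · have hg : aeval (g • θ) (p %ₘ Q) = g • aeval θ (p %ₘ Q) :=
        aeval_algHom_apply (MulSemiringAction.toAlgHom F E g) θ _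
      rw [eval_sub, eval_C, eval_map_algebraMap, hg, hmod, sub_eq_zero]
      exact hfix g
    · rwa [natDegree_sub_C, natDegree_map]
  refine ⟨(p %ₘ Q).coeff 0, ?_⟩
  simpa [sub_eq_zero] using congrArg (coeff · 0) hconst

end InvariantSubfield

section Descent

variable {k K E : Type*} [Field k] [Field K] [Algebra k K] [Field E] [Algebra K E]

theorem mem_adjoin_adjoin_of_subset {s t : Set K} (hst : s ⊆ t) {X : Set E} {x : E}
    (hx : x ∈ IntermediateField.adjoin (IntermediateField.adjoin k s) X) :
    x ∈ IntermediateField.adjoin (IntermediateField.adjoin k t) X := by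
  refine Subfield.closure_mono (Set.union_subset_union_left X ?_) hx
  rintro _ ⟨a, rfl⟩
  exact ⟨⟨a, IntermediateField.adjoin.mono k s t hst a.2⟩, rfl⟩

theorem exists_finset_mem_adjoin_adjoin {X : Set E} {x : E}
    (hx : x ∈ IntermediateField.adjoin K X) :
    ∃ s : Finset K, x ∈ IntermediateField.adjoin (IntermediateField.adjoin k (s : Set K)) X := by
  classical
  induction hx using IntermediateField.adjoin_induction with
  | mem x hx => exact ⟨∅, IntermediateField.subset_adjoin _ _ hx⟩
  | algebraMap a =>
    exact ⟨{a}, algebraMap_mem (IntermediateField.adjoin (IntermediateField.adjoin k _) X)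
      ⟨a, IntermediateField.subset_adjoin k _ (Finset.mem_coe.mpr (Finset.mem_singleton_self a))⟩⟩
  | add x y _ _ hx hy =>
    obtain ⟨⟨s, hs⟩, ⟨t, ht⟩⟩ := hx, hy
    exact ⟨s ∪ t, add_mem (mem_adjoin_adjoin_of_subset (by simp) hs)
      (mem_adjoin_adjoin_of_subset (by simp) ht)⟩
  | inv x _ hx =>
    obtain ⟨s, hs⟩ := hx
    exact ⟨s, inv_mem hs⟩
  | mul x y _ _ hx hy =>
    obtain ⟨⟨s, hs⟩, ⟨t, ht⟩⟩ := hx, hy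
    exact ⟨s ∪ t, mul_mem (mem_adjoin_adjoin_of_subset (by simp) hs)
      (mem_adjoin_adjoin_of_subset (by simp) ht)⟩

theorem exists_finset_forall_mem_adjoin_adjoin {I : Type*} [Finite I] {X : Set E} {x : I → E}
    (hx : ∀ i, x i ∈ IntermediateField.adjoin K X) :
    ∃ s : Finset K, ∀ i,
      x i ∈ IntermediateField.adjoin (IntermediateField.adjoin k (s : Set K)) X := by
  classical
  cases nonempty_fintype I
  choose s hs using fun i ↦ exists_finset_mem_adjoin_adjoin (k := k) (hx i)
  exact ⟨Finset.univ.biUnion s, fun i ↦ mem_adjoin_adjoin_of_subset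
    (Finset.coe_subset.mpr (Finset.subset_biUnion_of_mem s (Finset.mem_univ i))) (hs i)⟩

end Descent

section DescentOfSolutions

theorem mem_of_mem_adjoin_simple_of_forall_smul_eq {G F E : Type*} [Group G] [Fintype G] [Field F]
    [Field E] [Algebra F E] [MulSemiringAction G E] {B : IntermediateField F E}
    (hB : ∀ g : G, ∀ b ∈ B, g • b = b) {θ : E} (hθ : Function.Injective fun g : G ↦ g • θ)
    (hcoeff : ∀ n, (MulSemiringAction.charpoly G θ).coeff n ∈ B) {x : E}
    (hx : x ∈ B⟮θ⟯) (hfix : ∀ g : G, g • x = x) : x ∈ B := by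
  have : SMulCommClass G B E := smulCommClass_of_smul_algebraMap fun g b ↦ hB g b b.2
  obtain ⟨Q, hQ, hdeg, hmonic⟩ := lifts_and_natDegree_eq_and_monic
    ((lifts_iff_coeff_lifts _).mpr fun n ↦ ⟨⟨_, hcoeff n⟩, rfl⟩ :
      MulSemiringAction.charpoly G θ ∈ lifts (algebraMap B E))
    (MulSemiringAction.monic_charpoly G θ)
  have hcard : (MulSemiringAction.charpoly G θ).natDegree = Nat.card G := by
    rw [MulSemiringAction.charpoly_eq, natDegree_finsetProd_X_sub_C_eq_card,
      Nat.card_eq_fintype_card]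
    rfl
  have hroot : aeval θ Q = 0 := by
    rw [aeval_def, ← eval_map, hQ, MulSemiringAction.eval_charpoly]
  obtain ⟨b, rfl⟩ := mem_range_algebraMap_of_mem_adjoin_simple_of_forall_smul_eq hθ hmonic
    (hdeg.trans hcard) hroot hx hfix
  exact b.2

namespace IsGeomGaloisSolution

variable {k G L K E : Type*} [Field k] [Group G] [Field L] [Algebra k L] [Field E] [Algebra k E]
  [MulSemiringAction G E] [Field K] [Algebra K E] {α : G →* (L ≃ₐ[k] L)} {j : L →ₐ[k] E} {T : E}

theorem smulCommClass (h : IsGeomGaloisSolution α K j T) : SMulCommClass G K E :=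
  smulCommClass_of_smul_algebraMap fun g a ↦ (h.mem_adjoin_iff _).mp (algebraMap_mem K⟮T⟯ a) g

theorem smul_parameter (h : IsGeomGaloisSolution α K j T) (g : G) : g • T = T :=
  (h.mem_adjoin_iff T).mp (IntermediateField.mem_adjoin_simple_self K T) g

theorem smul_eq_of_mem_adjoin_simple (h : IsGeomGaloisSolution α K j T) {k₀ : Type*} [Field k₀]
    [Algebra k₀ K] [Algebra k₀ E] [IsScalarTower k₀ K E] {x : E} (hx : x ∈ k₀⟮T⟯) (g : G) :
    g • x = x := by
  have hle : k₀⟮T⟯ ≤ K⟮T⟯.restrictScalars k₀ :=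
    IntermediateField.adjoin_simple_le_iff.mpr (IntermediateField.mem_adjoin_simple_self K T)
  exact (h.mem_adjoin_iff x).mp (hle hx) g

theorem exists_adjoin_pair_eq_top [Finite G] (h : IsGeomGaloisSolution α K j T) :
    ∃ θ : E, IntermediateField.adjoin K {T, θ} = ⊤ ∧ Function.Injective fun g : G ↦ g • θ := by
  have := h.isGaloisGroup_adjoin
  have := IsGaloisGroup.finiteDimensional G K⟮T⟯ E
  have := IsGaloisGroup.isGalois G K⟮T⟯ E
  have := h.smulCommClass
  obtain ⟨θ, hθ⟩ := Field.exists_primitive_element K⟮T⟯ E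
  have htop : IntermediateField.adjoin K {T, θ} = ⊤ := by
    rw [← IntermediateField.adjoin_simple_adjoin_simple, hθ, IntermediateField.restrictScalars_top]
  refine ⟨θ, htop, fun g g' hgg' ↦ ?_⟩
  have hext : (MulSemiringAction.toAlgHom K E g).comp (⊤ : IntermediateField K E).val =
      (MulSemiringAction.toAlgHom K E g').comp (⊤ : IntermediateField K E).val := by
    refine IntermediateField.algHom_ext_of_eq_adjoin K htop.symm ?_
    rintro x (rfl | rfl)
    · exact (h.smul_parameter g).trans (h.smul_parameter g').symm
    · exact hgg'
  have := h.faithfulSMul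
  exact eq_of_smul_eq_smul fun x : E ↦ DFunLike.congr_fun hext ⟨x, trivial⟩

theorem restrict (h : IsGeomGaloisSolution α K j T) {k₀ : Type*} [Field k₀] [Algebra k k₀]
    [Algebra k₀ K] [Algebra k₀ E] [IsScalarTower k₀ K E] [IsScalarTower k k₀ E]
    {E₀ : IntermediateField k₀ E} (hstab : ∀ g : G, ∀ x ∈ E₀, g • x ∈ E₀)
    (hj : ∀ x, j x ∈ E₀) (hT : T ∈ E₀) (hfaithful : ∃ θ ∈ E₀, Function.Injective fun g : G ↦ g • θ)
    (hfix : ∀ x ∈ E₀, (∀ g : G, g • x = x) → x ∈ k₀⟮T⟯) :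
    letI := mulSemiringActionOfSMulMem E₀ hstab
    IsGeomGaloisSolution α k₀ (j.codRestrict (E₀.toSubalgebra.restrictScalars k) hj : L →ₐ[k] E₀)
      (⟨T, hT⟩ : E₀) :=
  letI := mulSemiringActionOfSMulMem E₀ hstab
  { faithfulSMul := ⟨fun {g g'} hgg' ↦ by
      obtain ⟨θ, hθE, hθ⟩ := hfaithful
      exact hθ (congrArg Subtype.val (hgg' ⟨θ, hθE⟩))⟩
    transcendental := fun halg ↦ h.transcendental ((halg.algHom E₀.val).tower_top K)
    mem_adjoin_iff := fun x ↦ by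
      rw [← IntermediateField.mem_lift, IntermediateField.lift_adjoin_simple]
      exact ⟨fun hx g ↦ Subtype.ext (h.smul_eq_of_mem_adjoin_simple hx g),
        fun hx ↦ hfix x x.2 fun g ↦ congrArg Subtype.val (hx g)⟩
    smul_apply := fun g x ↦ Subtype.ext (h.smul_apply g x)
    smul_eq_of_isAlgebraic := fun z hz g hg ↦
      Subtype.ext (h.smul_eq_of_isAlgebraic z ((hz.algHom E₀.val).tower_top K) g hg) }

theorem exists_finset_forall_mem_adjoin [Finite G] [FiniteDimensional k L] [Algebra k K]
    [IsScalarTower k K E] (h : IsGeomGaloisSolution α K j T) {θ : E}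
    (hθ : IntermediateField.adjoin K {T, θ} = ⊤) {p : E[X]}
    (hp : ∀ (n : ℕ) (g : G), g • p.coeff n = p.coeff n) :
    ∃ s : Finset K, (∀ n, p.coeff n ∈ (IntermediateField.adjoin k (s : Set K))⟮T⟯) ∧
      ∀ x, (x ∈ MulAction.orbit G θ ∨ x ∈ Set.range j) →
        x ∈ IntermediateField.adjoin (IntermediateField.adjoin k (s : Set K)) {T, θ} := by
  classical
  obtain ⟨s₁, hs₁⟩ := exists_finset_forall_mem_adjoin_adjoin (k := k)
    (x := fun n : p.support ↦ p.coeff n) fun n ↦ (h.mem_adjoin_iff _).mpr (hp n)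
  obtain ⟨s₂, hs₂⟩ := exists_finset_forall_mem_adjoin_adjoin (k := k) (x := fun g : G ↦ g • θ)
    fun g ↦ hθ.ge trivial
  obtain ⟨s₃, hs₃⟩ := exists_finset_forall_mem_adjoin_adjoin (k := k)
    (x := fun i ↦ j (Module.finBasis k L i)) fun i ↦ hθ.ge trivial
  have h₁ : (s₁ : Set K) ⊆ (s₁ ∪ s₂ ∪ s₃ : Finset K) := by grind
  have h₂ : (s₂ : Set K) ⊆ (s₁ ∪ s₂ ∪ s₃ : Finset K) := by grind
  have h₃ : (s₃ : Set K) ⊆ (s₁ ∪ s₂ ∪ s₃ : Finset K) := by grind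
  refine ⟨s₁ ∪ s₂ ∪ s₃, fun n ↦ ?_, ?_⟩
  · by_cases hn : n ∈ p.support
    · exact mem_adjoin_adjoin_of_subset h₁ (hs₁ ⟨n, hn⟩)
    · rw [notMem_support_iff.mp hn]
      exact zero_mem _
  · rintro _ (⟨g, rfl⟩ | ⟨y, rfl⟩)
    · exact mem_adjoin_adjoin_of_subset h₂ (hs₂ g)
    · rw [← (Module.finBasis k L).sum_repr y, map_sum]
      refine sum_mem fun i _ ↦ ?_
      rw [map_smul, ← IntermediateField.mem_restrictScalars k]
      exact IntermediateField.smul_mem (.restrictScalars k _)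
        (mem_adjoin_adjoin_of_subset h₃ (hs₃ i))

-- The fixed field, the action and the embedding of `L` are all determined by finitely many
-- elements of `K`.
theorem exists_finset [Finite G] [FiniteDimensional k L] [Algebra k K] [IsScalarTower k K E]
    (h : IsGeomGaloisSolution α K j T) :
    ∃ (s : Finset K) (E₀ : IntermediateField (IntermediateField.adjoin k (s : Set K)) E)
      (_ : MulSemiringAction G E₀) (j₀ : L →ₐ[k] E₀) (T₀ : E₀),
      IsGeomGaloisSolution α (IntermediateField.adjoin k (s : Set K)) j₀ T₀ := by
  cases nonempty_fintype G
  obtain ⟨θ, htop, hθ⟩ := h.exists_adjoin_pair_eq_top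
  obtain ⟨s, hcoeff, hmem⟩ := h.exists_finset_forall_mem_adjoin htop
    (MulSemiringAction.smul_coeff_charpoly θ)
  set k₀ := IntermediateField.adjoin k (s : Set K)
  have : SMulCommClass G k₀ E := smulCommClass_of_smul_algebraMap fun g a ↦
    (h.mem_adjoin_iff _).mp (algebraMap_mem K⟮T⟯ (a : K)) g
  have hT : T ∈ IntermediateField.adjoin k₀ {T, θ} := IntermediateField.subset_adjoin _ _ (by simp)
  have hstab (g : G) : ∀ x ∈ IntermediateField.adjoin k₀ {T, θ},
      g • x ∈ IntermediateField.adjoin k₀ {T, θ} := by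
    refine fun x ↦ smul_mem_adjoin ?_
    rintro y (rfl | rfl)
    · rwa [h.smul_parameter]
    · exact hmem _ (.inl ⟨g, rfl⟩)
  refine ⟨s, _, mulSemiringActionOfSMulMem _ hstab, _, _,
    h.restrict hstab (fun x ↦ hmem _ (.inr ⟨x, rfl⟩)) hT
      ⟨θ, IntermediateField.subset_adjoin _ _ (by simp), hθ⟩ fun x hx hfix ↦ ?_⟩
  rw [← IntermediateField.adjoin_simple_adjoin_simple] at hx
  exact mem_of_mem_adjoin_simple_of_forall_smul_eq
    (fun g b hb ↦ h.smul_eq_of_mem_adjoin_simple hb g) hθ hcoeff hx hfix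

end IsGeomGaloisSolution

end DescentOfSolutions

/-! ### Solution over Laurent series -/

section PatchedSolution

scoped instance {k F M : Type*} [Field k] [Field F] [Field M] [Algebra k F] [Algebra F M]
    [Algebra k M] [IsScalarTower k F M] : IsScalarTower k F⸨X⸩ M⸨X⸩ :=
  .of_algebraMap_eq fun x ↦ by
    change HahnSeries.C (algebraMap k M x) = mapLaurent _ (HahnSeries.C (algebraMap k F x))
    rw [mapLaurent_C, ← IsScalarTower.algebraMap_apply]

theorem transcendental_C {F M : Type*} [Field F] [Field M] [Algebra F M] {T : M}
    (hT : Transcendental F T) : Transcendental F⸨X⸩ (HahnSeries.C T : M⸨X⸩) := by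
  rw [transcendental_iff] at hT ⊢
  intro p hp
  have hcoeff (m : ℤ) : ∑ n ∈ p.support, monomial n ((p.coeff n).coeff m) = 0 := by
    refine hT _ ?_
    rw [aeval_def, eval₂_eq_sum, Polynomial.sum] at hp
    rw [map_sum, ← HahnSeries.coeff_zero (a := m), ← hp, HahnSeries.coeff_sum]
    refine Finset.sum_congr rfl fun n _ ↦ ?_
    rw [aeval_monomial, algebraMap_laurent, ← map_pow, mul_comm, mul_comm _ (HahnSeries.C _),
      coeff_C_mul, coeff_mapLaurent]
  ext n m
  have h := congrArg (coeff · n) (hcoeff m)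
  simp only [finsetSum_coeff, coeff_monomial, Finset.sum_ite_eq', coeff_zero] at h
  by_cases hn : n ∈ p.support
  · simpa [hn] using h
  · simp [notMem_support_iff.mp hn]

namespace PatchingDatum

variable {k L G F M O D I : Type*} [Field k] [Field L] [Algebra k L] [Group G] [Finite G]
  [Field F] [Algebra k F] [Field M] [Algebra F M] [Algebra k M] [IsScalarTower k F M]
  [MulSemiringAction G M] [SMulCommClass G F M]
  [CommRing O] [Field D] [Algebra O D] [IsFractionRing O D] [Algebra F D] [Algebra F O]
  [IsScalarTower F O D]
  (S : PatchingDatum G F M O D I) {E : I → IntermediateField (seriesFractions O D) D⸨X⸩}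
  {γ : (i : I) → Gal(E i/seriesFractions O D) →* G}
  [∀ i, FiniteDimensional (seriesFractions O D) (E i)]
  [∀ i, IsGalois (seriesFractions O D) (E i)]

theorem exists_isGeomGaloisSolution {α : G →* (L ≃ₐ[k] L)}
    (hE : ∀ i, ∀ x ∈ E i, IsAlgebraic F⸨X⸩ x → x ∈ seriesFractions O D)
    (hγ : ⨆ i, (γ i).range = α.ker) {j : L →ₐ[k] M} (hjW : ∀ x, j x ∈ S.W)
    (hj : ∀ (g : G) x, g • j x = j (α g x)) {T : M} (hT : Transcendental F T)
    (hbase : S.baseField = F⸨X⸩⟮(HahnSeries.C T : M⸨X⸩)⟯) :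
    ∃ (_ : MulSemiringAction G (S.patchedField E γ)) (j' : L →ₐ[k] S.patchedField E γ)
      (T' : S.patchedField E γ), IsGeomGaloisSolution α F⸨X⸩ j' T' := by
  let _ := mulSemiringActionOfSMulMem (S.patchedField E γ)
    fun g x hx ↦ S.smul_mem_patchedField hx g
  have hγα (i : I) (τ) : α (γ i τ) = 1 :=
    MonoidHom.mem_ker.mp (hγ.le (Subgroup.mem_iSup_of_mem i ⟨τ, rfl⟩))
  have hjmem (x : L) : HahnSeries.C (j x) ∈ S.patchedField E γ :=
    S.C_mem_patchedField (hjW x) fun i τ g ↦ by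
      rw [hj, hj, map_mul, hγα, one_mul]
  have hTmem : HahnSeries.C T ∈ S.patchedField E γ :=
    S.baseField_le_patchedField (hbase ▸ IntermediateField.mem_adjoin_simple_self _ _)
  let j' : L →ₐ[k] S.patchedField E γ :=
    (((Algebra.ofId M M⸨X⸩).restrictScalars k).comp j).codRestrict
      ((S.patchedField E γ).toSubalgebra.restrictScalars k) hjmem
  refine ⟨_, j', ⟨_, hTmem⟩, ?_, ?_, fun x ↦ ?_, fun g x ↦ ?_, fun z hz g hg ↦ ?_⟩
  · refine ⟨fun {g g'} h ↦ not_not.mp fun hne ↦ ?_⟩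
    obtain ⟨a, ha, hga⟩ := S.exists_mem_patchedField_smul_ne (E := E) (γ := γ)
      (h := g⁻¹ * g') fun h ↦ hne (inv_mul_eq_one.mp h)
    refine hga ?_
    rw [mul_smul, inv_smul_eq_iff]
    exact (congrArg Subtype.val (h ⟨a, ha⟩)).symm
  · exact fun halg ↦ transcendental_C hT (halg.algHom (S.patchedField E γ).val)
  · rw [← IntermediateField.mem_lift, IntermediateField.lift_adjoin_simple, ← hbase]
    exact ⟨fun hx g ↦ Subtype.ext (S.smul_eq_of_mem_baseField hx g), fun hx ↦
      S.mem_baseField_of_forall_smul_eq x.2 fun g ↦ congrArg Subtype.val (hx g)⟩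
  · refine Subtype.ext ?_
    change g • (HahnSeries.C (j x) : M⸨X⸩) = HahnSeries.C (j (α g x))
    rw [smul_C, hj]
  · have hker : α.ker ≤ MulAction.stabilizer G (z : M⸨X⸩) := by
      rw [← hγ, iSup_le_iff]
      rintro i _ ⟨τ, rfl⟩
      exact S.smul_eq_of_isAlgebraic hE z.2.1 (hz.algHom (S.patchedField E γ).val) i τ
    exact Subtype.ext (hker hg)

end PatchingDatum

end PatchedSolution

section LocalSolution

theorem iSup_zpowers_coe {G : Type*} [Group G] (s : Set G) :
    ⨆ g : s, Subgroup.zpowers (g : G) = Subgroup.closure s := by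
  simp_rw [Subgroup.zpowers_eq_closure, ← Subgroup.closure_iUnion, Set.iUnion_singleton_eq_range,
    Subtype.range_coe]

theorem exists_monoidHom_range_eq_zpowers {H G : Type*} [Group H] [Group G] {σ : H}
    (hσ : Subgroup.zpowers σ = ⊤) {c : G} (hc : c ^ orderOf σ = 1) :
    ∃ γ : H →* G, γ.range = Subgroup.zpowers c := by
  have hmem (τ : H) : τ ∈ Subgroup.zpowers σ := hσ.ge trivial
  refine ⟨monoidHomOfForallMemZpowers hmem (orderOf_dvd_of_pow_eq_one hc), ?_⟩
  rw [MonoidHom.range_eq_map, ← hσ, MonoidHom.map_zpowers, monoidHomOfForallMemZpowers_apply_gen]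

theorem exists_isGalois_laurentSeries_range_eq_zpowers {G F A : Type*} [Group G] [Field F]
    [Field A] [Algebra F A] {q e : ℕ} (hq : q.Prime)
    (hζ : ((q ^ (e + 1) : ℕ) : A) ≠ 0 → ∃ ζ : A, IsPrimitiveRoot ζ (q ^ (e + 1)))
    {c : G} (hc : c ^ q ^ (e + 1) = 1) :
    ∃ E : IntermediateField (seriesFractions A⟦X⟧ A⸨X⸩) A⸨X⸩⸨X⸩,
      FiniteDimensional (seriesFractions A⟦X⟧ A⸨X⸩) E ∧
      IsGalois (seriesFractions A⟦X⟧ A⸨X⸩) E ∧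
      (∃ γ : Gal(E/seriesFractions A⟦X⟧ A⸨X⸩) →* G, γ.range = Subgroup.zpowers c) ∧
      ∀ x ∈ E, IsAlgebraic F⸨X⸩ x → x ∈ seriesFractions A⟦X⟧ A⸨X⸩ := by
  have : Fact q.Prime := ⟨hq⟩
  have hlocal : CharP A⸨X⸩ q ∨ ∃ ζ : A⟦X⟧, IsPrimitiveRoot ζ (q ^ (e + 1)) := by
    by_cases hqA : ((q ^ (e + 1) : ℕ) : A) = 0
    · have : CharP A q := (CharP.charP_iff_prime_eq_zero hq).mpr
        (eq_zero_of_pow_eq_zero (n := e + 1) (by simpa using hqA))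
      exact .inl (charP_of_injective_algebraMap (algebraMap A A⸨X⸩).injective q)
    · obtain ⟨ζ, hζ⟩ := hζ hqA
      exact .inr ⟨_, hζ.map_of_injective (f := PowerSeries.C) PowerSeries.C_injective⟩
  obtain ⟨E, hfin, hgal, ⟨σ, hσ, hσtop⟩, halg⟩ :=
    exists_isGalois_orderOf_eq_pow (F := F) (D := A⸨X⸩) PowerSeries.X_prime hlocal
  exact ⟨E, hfin, hgal, exists_monoidHom_range_eq_zpowers hσtop (hσ ▸ hc), halg⟩

end LocalSolution

section GlobalSolution

universe u

variable {k G L F : Type*} {N : Type u} [Field k] [Group G] [Finite G] [Field L] [Algebra k L]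
  [Field F] [Field N] [Algebra k F] [Algebra k N] [Algebra F N] [IsScalarTower k F N]
  [MulSemiringAction G N] [IsGaloisGroup G F N] {α : G →* (L ≃ₐ[k] L)} {j : L →ₐ[k] N}
  (hj : ∀ (g : G) x, g • j x = j (α g x))
include hj

theorem exists_isGeomGaloisSolution_of_ratFunc {A I : Type*} [Field A] [Algebra F A] [Algebra N A]
    [IsScalarTower F N A] [Algebra.IsSeparable F A] [Finite I] [Nonempty I] {θ : I → A}
    (hθ : Pairwise (Function.onFun IsCoprime fun i ↦ minpoly F (θ i)))
    (hgen : ∀ i, IntermediateField.adjoin F {θ i} = ⊤)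
    {E : I → IntermediateField (seriesFractions A⟦X⟧ A⸨X⸩) A⸨X⸩⸨X⸩}
    {γ : (i : I) → Gal(E i/seriesFractions A⟦X⟧ A⸨X⸩) →* G}
    [∀ i, FiniteDimensional (seriesFractions A⟦X⟧ A⸨X⸩) (E i)]
    [∀ i, IsGalois (seriesFractions A⟦X⟧ A⸨X⸩) (E i)]
    (hE : ∀ i, ∀ x ∈ E i, IsAlgebraic F⸨X⸩ x → x ∈ seriesFractions A⟦X⟧ A⸨X⸩)
    (hγ : ⨆ i, (γ i).range = α.ker) :
    ∃ (E' : IntermediateField F⸨X⸩ N⟮X⟯⸨X⸩) (_ : MulSemiringAction G E') (j' : L →ₐ[k] E')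
      (T : E'), IsGeomGaloisSolution α F⸨X⸩ j' T := by
  have : Fintype I := .ofFinite I
  have : FaithfulSMul G N := IsGaloisGroup.faithful F
  have : IsScalarTower k F N⟮X⟯ := .of_algebraMap_eq fun x ↦ by
    rw [IsScalarTower.algebraMap_apply k N, IsScalarTower.algebraMap_apply F N,
      ← IsScalarTower.algebraMap_apply k F N]
  refine ⟨_, (ratFuncPatchingDatum G N hθ hgen).exists_isGeomGaloisSolution hE hγ
    (j := ((Algebra.ofId N N⟮X⟯).restrictScalars k).comp j)
    (fun x ↦ algebraMap_C_mem_poleSubalgebra (j x)) (fun g x ↦ ?_)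
    (RatFunc.transcendental_X.restrictScalars (algebraMap F N).injective)
    (baseField_ratFuncPatchingDatum hθ)⟩
  change g • algebraMap N[X] N⟮X⟯ (C (j x)) = algebraMap N[X] N⟮X⟯ (C (j (α g x)))
  rw [smul_algebraMap_ratFunc, Polynomial.smul_C, hj]

theorem exists_isGeomGaloisSolution_of_isGaloisGroup [Infinite F] :
    ∃ (E : IntermediateField F⸨X⸩ N⟮X⟯⸨X⸩) (_ : MulSemiringAction G E) (j' : L →ₐ[k] E) (T : E),
      IsGeomGaloisSolution α F⸨X⸩ j' T := by
  let I := {g : G | g ∈ α.ker ∧ ∃ q e : ℕ, q.Prime ∧ g ^ q ^ (e + 1) = 1}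
  choose q e hq hpow using fun i : I ↦ i.2.2
  have : Nonempty I := ⟨1, one_mem _, 2, 0, Nat.prime_two, one_pow _⟩
  obtain ⟨A, _, _, _, _, hζ⟩ := exists_finiteDimensional_isSeparable_isPrimitiveRoot (N := N)
    fun i : I ↦ q i ^ (e i + 1)
  let _ : Algebra F A := ((algebraMap N A).comp (algebraMap F N)).toAlgebra
  have : IsScalarTower F N A := .of_algebraMap_eq fun _ ↦ rfl
  have : FiniteDimensional F N := IsGaloisGroup.finiteDimensional G F N
  have : IsGalois F N := IsGaloisGroup.isGalois G F N
  have : FiniteDimensional F A := .trans F N A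
  have : Algebra.IsSeparable F A := .trans F N A
  obtain ⟨θ, hgen, hθ⟩ := exists_adjoin_eq_top_pairwise_isCoprime_minpoly (F := F) (M := A) (I := I)
  choose E hfin hgal hγ hE using fun i : I ↦
    exists_isGalois_laurentSeries_range_eq_zpowers (F := F) (A := A) (hq i) (fun h ↦ hζ i fun h' ↦
      h (by rw [← map_natCast (algebraMap N A), h', map_zero])) (hpow i)
  choose γ hγ using hγ
  refine exists_isGeomGaloisSolution_of_ratFunc hj hθ hgen hE (γ := γ) ?_
  simp_rw [hγ, iSup_zpowers_coe]
  exact closure_setOf_pow_prime_pow_eq_one α.ker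

end GlobalSolution

end Patching

open Patching
open scoped LaurentSeries

/-- **Geometric Galois solutions exist after a regular finitely generated base change.**
Let `k` be a field and `α : G → Gal(L/k)` a finite Galois embedding problem over `k`.
Then there is an extension `k₀/k` which is finitely generated (as a field extension) and
regular over `k` — i.e. `k₀` is linearly disjoint from an algebraic closure of `k` over
`k`, encoded by `k̄ ⊗_k k₀` being an integral domain — such that the induced embedding
problem `α_{k₀}` has a geometric Galois solution. -/
theorem statement_6 (k : Type) [Field k] (G : Type) [Group G] [Finite G]
    (L : Type) [Field L] [Algebra k L] [FiniteDimensional k L] [IsGalois k L]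
    (α : G →* (L ≃ₐ[k] L)) (hα : Function.Surjective α) :
    ∃ (k₀ : Type) (_ : Field k₀) (_ : Algebra k k₀),
      (∃ s : Finset k₀, IntermediateField.adjoin k (s : Set k₀) = ⊤) ∧
      IsDomain (TensorProduct k (AlgebraicClosure k) k₀) ∧
      HasGeomGaloisSolution k G L α k₀ := by
  obtain ⟨N, _, _, _, _, _, F, hGal, hinf, hdom, hact⟩ :=
    exists_isGaloisGroup_isDomain_tensorProduct hα
  obtain ⟨E, _, j, T, hsol⟩ := exists_isGeomGaloisSolution_of_isGaloisGroup (F := F)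
    (j := IsScalarTower.toAlgHom k L N) hact
  obtain ⟨s, E₀, _, j₀, T₀, hsol₀⟩ := hsol.exists_finset
  refine ⟨IntermediateField.adjoin k (s : Set F⸨X⸩), inferInstance, inferInstance, ?_, ?_,
    hsol₀.hasGeomGaloisSolution⟩
  · have : Algebra.EssFiniteType k (IntermediateField.adjoin k (s : Set F⸨X⸩)) :=
      IntermediateField.essFiniteType_iff.mpr (IntermediateField.fg_adjoin_finset s)
    exact IntermediateField.fg_top k _
  · have : IsDomain (TensorProduct k (AlgebraicClosure k) F⸨X⸩) :=
      isDomain_tensorProduct_laurentSeries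
    exact isDomain_tensorProduct_of_injective (IntermediateField.val _)
      Subtype.val_injective
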